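/- Fix integers m ≥ 1, d ≥ 2, a matrix S as below, and a real ε > 0. There exist γ > 0 and a constant c > 0, depending only on d, m and ε, such that the following holds. Let p be a prime, 𝓕 ∈ 𝔉(S,m) over F_p a system of total degree d with s_{0,1}·s_{1,2}⋯s_{m−1,m} ≠ 0, and let {w_n} = {(u_{n,0},…,u_{n,m})} be the sequence generated by iterating 𝓕 from some initial vector, assumed purely periodic with period τ. Then for every positive integer N with τ ≥ N ≥ p^{m+ε}, the discrepancy Δ of the N points (u_{n,0}/p, …, u_{n,m}/p) ∈ [0,1)^{m+1}, n = 0,…,N−1, satisfies Δ ≤ c·p^{−γ}. -/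

import Mathlib

open MvPolynomial

/-- Membership of a polynomial system `F = (F_0, …, F_m)` over `R` in the class `𝔉(S,m)`,
where `s i j` records the entries of the upper triangular matrix `S` (for `i < j`). -/
def IsFSystem {R : Type*} [CommRing R] (m : ℕ) (s : ℕ → ℕ → ℕ)
    (F : Fin (m + 1) → MvPolynomial (Fin (m + 1)) R) : Prop :=
  (∃ g h : R, g ≠ 0 ∧
      F (Fin.last m) = MvPolynomial.C g * MvPolynomial.X (Fin.last m) + MvPolynomial.C h) ∧
  ∀ i : Fin (m + 1), (i : ℕ) < m →
    ∃ (G H Gt : MvPolynomial (Fin (m + 1)) R) (g : R),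
      g ≠ 0 ∧
      F i = MvPolynomial.X i * G + H ∧
      (∀ d ∈ G.support, ∀ j : Fin (m + 1), j ≤ i → d j = 0) ∧
      (∀ d ∈ H.support, ∀ j : Fin (m + 1), j ≤ i → d j = 0) ∧
      G = MvPolynomial.C g *
          (∏ j ∈ Finset.univ.filter (fun j : Fin (m + 1) => i < j),
            MvPolynomial.X j ^ s i.val j.val) + Gt ∧
      (∀ d ∈ Gt.support, ∀ j : Fin (m + 1), i < j → d j < s i.val j.val) ∧
      (∀ d ∈ H.support, ∀ j : Fin (m + 1), i < j → d j ≤ s i.val j.val)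

/-- The iterated polynomials `F_i^{(k)}` of a sequence of polynomial systems:
`F_i^{(0)} = X_i` and `F_i^{(k)} = F_{k,i}(F_0^{(k-1)}, …, F_m^{(k-1)})`. -/
noncomputable def iterSys {R : Type*} [CommRing R] (m : ℕ)
    (Fs : ℕ → Fin (m + 1) → MvPolynomial (Fin (m + 1)) R) :
    ℕ → Fin (m + 1) → MvPolynomial (Fin (m + 1)) R
  | 0 => fun i => MvPolynomial.X i
  | k + 1 => fun i => MvPolynomial.bind₁ (iterSys m Fs k) (Fs (k + 1) i)

/-- The additive character `e_p(z) = exp(2πiz/p)` evaluated at an element of `F_p`. -/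
noncomputable def eP (p : ℕ) (x : ZMod p) : ℂ :=
  Complex.exp (2 * Real.pi * Complex.I * (x.val : ℂ) / (p : ℂ))

/-- `e_M(z) = exp(2πiz/M)` for a natural number `z`. -/
noncomputable def eM (M z : ℕ) : ℂ :=
  Complex.exp (2 * Real.pi * Complex.I * (z : ℂ) / (M : ℂ))

/-- The discrepancy of the first `N` points of a sequence in `[0,1)^s`: the supremum over
boxes `B = [a_1,b_1) × ⋯ × [a_s,b_s) ⊆ [0,1)^s` of `|T(B)/N - vol B|`. -/
noncomputable def discrepancy (s N : ℕ) (P : ℕ → Fin s → ℝ) : ℝ :=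
  sSup {D : ℝ | ∃ a b : Fin s → ℝ,
    (∀ j, 0 ≤ a j ∧ a j ≤ b j ∧ b j ≤ 1) ∧
    D = |(((Finset.range N).filter fun n => ∀ j, a j ≤ P n j ∧ P n j < b j).card : ℝ) / N -
        ∏ j, (b j - a j)|}

/-!
Finite Fourier analysis on `ZMod p` bounds the discrepancy by the largest of the exponential sums
`∑ n < N, ψ (∑ j, a j * u n j)` with `a ≠ 0`. Let `i` be the first index with `a i ≠ 0`.

If `i < m`, average over the shifts `n + k` with `k < K`, where `K` is a small power of `p`, and
take a high moment of the inner sum over `k`. The vectors `u n` are distinct, so the moment is at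
most its complete analogue over all starting vectors `w`, which expands into sums of
`ψ (∑ k, c k * ∑ j, a j * F_j^{(k)}(w))`. As `F_i^{(k+1)} = F_i^{(k)} G_i(F^{(k)}) + H_i(F^{(k)})`,
replacing `w i` by `w i + t` changes the phase by `t * a i * Q(w)`, where `Q` is a linear
combination with coefficients `c k` of the products `∏ r < k, G_i(F^{(r)})`. As `s_{i,i+1} ≠ 0`,
these products have strictly increasing degree in `X_{i+1}`, so `Q ≠ 0` unless `c = 0`; averaging
over `t` leaves only the zeros of `Q`, which are few by the Schwartz–Zippel lemma.

If `i = m`, the sum runs along an orbit of `x ↦ g x + h`, which has at least `N / p ^ m ≥ p ^ ε`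
points. If `g = 1` it is a progression; otherwise it is a coset of the subgroup generated by `g`,
up to translation, and the Bourgain–Glibichuk–Konyagin bound for the subgroup `H` applies.
A large sum over `H` yields, by pigeonholing over its large spectra, an `H`-invariant set of
frequencies a positive proportion of whose differences fall in a set of comparable size. The
Balog–Szemerédi–Gowers theorem extracts from it an approximate additive subgroup `V` almost
invariant under many elements of `H`, hence under the sums and products of few of them. By a pivot
argument the ratios of such sums and products exhaust `ZMod p`, so every dilate of `V` has many
coincidences with `V`; averaged over all dilates, there are too few of them.
-/

section CoveringByTranslates

open scoped Pointwise Finset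

lemma covByVAdd_add {G : Type*} [AddCommGroup G] {K L : ℝ} {A₁ A₂ B₁ B₂ : Set G}
    (h₁ : CovByVAdd G K A₁ B₁) (h₂ : CovByVAdd G L A₂ B₂) :
    CovByVAdd G (K * L) (A₁ + A₂) (B₁ + B₂) := by
  classical
  have hK := h₁.nonneg
  obtain ⟨T₁, hT₁, hA₁⟩ := h₁
  obtain ⟨T₂, hT₂, hA₂⟩ := h₂
  refine ⟨T₁ + T₂, ?_, ?_⟩
  · calc (#(T₁ + T₂) : ℝ) ≤ #T₁ * #T₂ := mod_cast Finset.card_add_le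
      _ ≤ K * L := by gcongr
  · calc A₁ + A₂ ⊆ (T₁ + B₁) + (T₂ + B₂) := Set.add_subset_add hA₁ hA₂
      _ = ((T₁ + T₂ : Finset G) : Set G) + (B₁ + B₂) := by
        rw [Finset.coe_add, add_add_add_comm]

lemma covByVAdd_neg {G : Type*} [AddCommGroup G] {K : ℝ} {A B : Set G}
    (h : CovByVAdd G K A B) : CovByVAdd G K (-A) (-B) := by
  classical
  obtain ⟨T, hT, hA⟩ := h
  refine ⟨-T, by rwa [Finset.card_neg], ?_⟩
  calc -A ⊆ -((T : Set G) + B) := Set.neg_subset_neg.2 hA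
    _ = ((-T : Finset G) : Set G) + -B := by rw [neg_add, Finset.coe_neg]

lemma covByVAdd_smul_set {R : Type*} [Ring R] {K : ℝ} {A B : Set R} (x : R)
    (h : CovByVAdd R K A B) : CovByVAdd R K (x • A) (x • B) := by
  classical
  obtain ⟨T, hT, hA⟩ := h
  refine ⟨x • T, le_trans (mod_cast Finset.card_image_le) hT, ?_⟩
  calc x • A ⊆ x • ((T : Set R) + B) := Set.smul_set_mono hA
    _ = ((x • T : Finset R) : Set R) + x • B := by rw [smul_add, Finset.coe_smul_finset]

lemma card_le_of_covByVAdd {G : Type*} [AddGroup G] {K : ℝ} {A B : Finset G}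
    (h : CovByVAdd G K (A : Set G) B) : (#A : ℝ) ≤ K * #B := by
  classical
  obtain ⟨T, hT, hA⟩ := h
  have hAT : #A ≤ #T * #B := (Finset.card_le_card (mod_cast hA)).trans Finset.card_add_le
  calc (#A : ℝ) ≤ #T * #B := mod_cast hAT
    _ ≤ K * #B := by gcongr

/-- The elements `x` of a ring for which the dilate `x • V` is covered by at most `L` translates
of `V`; for an approximate additive subgroup `V`, a sum or product of two of them is one again, for
a larger `L`. -/
def coveredDilates {R : Type*} [Ring R] (L : ℝ) (V : Set R) : Set R :=
  {x | CovByVAdd R L (x • V) V}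

section Ring

variable {R : Type*} [Ring R] {K L L' : ℝ} {V : Set R} {x y : R}

lemma coveredDilates_mono (h : L ≤ L') : coveredDilates L V ⊆ coveredDilates L' V :=
  fun _ hx ↦ CovByVAdd.mono h hx

lemma mul_mem_coveredDilates (hx : x ∈ coveredDilates L V) (hy : y ∈ coveredDilates L' V) :
    x * y ∈ coveredDilates (L' * L) V := by
  have := covByVAdd_smul_set x hy
  rw [smul_smul] at this
  exact this.trans hx

lemma add_mem_coveredDilates (hV : IsApproximateAddSubgroup K V) (hx : x ∈ coveredDilates L V)
    (hy : y ∈ coveredDilates L' V) : x + y ∈ coveredDilates (L * L' * K) V := by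
  have hVV : CovByVAdd R K (V + V) V := two_nsmul V ▸ hV.two_nsmul_covByVAdd
  exact ((covByVAdd_add hx hy).trans hVV).subset_left (Set.add_smul_subset x y V)

lemma neg_mem_coveredDilates (hV : -V = V) (hx : x ∈ coveredDilates L V) :
    -x ∈ coveredDilates L V := by
  have := covByVAdd_neg hx
  rwa [hV, ← Set.neg_smul_set] at this

lemma sub_mem_coveredDilates (hV : IsApproximateAddSubgroup K V) (hx : x ∈ coveredDilates L V)
    (hy : y ∈ coveredDilates L' V) : x - y ∈ coveredDilates (L * L' * K) V := by
  rw [sub_eq_add_neg]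
  exact add_mem_coveredDilates hV hx (neg_mem_coveredDilates hV.neg_eq_self hy)

end Ring

end CoveringByTranslates

section SumDilates

open scoped Pointwise Finset Combinatorics.Additive

variable {F : Type*} [Field F] [DecidableEq F]

lemma addEnergy_units_smul (V : Finset F) (ξ : Fˣ) :
    E[V, ξ • V] =
      #{q ∈ (V ×ˢ V) ×ˢ V ×ˢ V | q.1.1 + (ξ : F) * q.2.1 = q.1.2 + (ξ : F) * q.2.2} := by
  symm
  refine Finset.card_nbij (fun q ↦ (q.1, ξ • q.2)) ?_ ?_ ?_
  · rintro ⟨⟨a, b⟩, c, d⟩ hq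
    simp only [Finset.coe_filter, Finset.mem_product, Set.mem_ofPred_eq] at hq ⊢
    obtain ⟨⟨⟨ha, hb⟩, hc, hd⟩, h⟩ := hq
    exact ⟨⟨⟨ha, hb⟩, Finset.smul_mem_smul_finset hc, Finset.smul_mem_smul_finset hd⟩, h⟩
  · rintro q - q' - h
    simpa only [Prod.mk.injEq, smul_right_inj, Prod.ext_iff, smul_left_cancel_iff] using h
  · rintro ⟨⟨a, b⟩, c, d⟩ h
    simp only [Finset.coe_filter, Finset.mem_product, Finset.mem_smul_finset,
      Set.mem_ofPred_eq] at h
    obtain ⟨⟨⟨ha, hb⟩, ⟨c, hc, rfl⟩, d, hd, rfl⟩, h⟩ := h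
    exact ⟨((a, b), c, d), by simpa [ha, hb, hc, hd, Units.smul_def] using h, rfl⟩

variable [Fintype F]

lemma card_units_solutions_le (a b c d : F) :
    #{ξ : Fˣ | a + ξ * c = b + ξ * d} ≤
      (if a = b ∧ c = d then Fintype.card Fˣ else 0) + 1 := by
  split_ifs with h
  · exact (Finset.card_le_univ _).trans (Nat.le_succ _)
  · rw [zero_add, Finset.card_le_one]
    intro ξ hξ η hη
    simp only [Finset.mem_filter, Finset.mem_univ, true_and] at hξ hη
    have hcd : c - d ≠ 0 := by
      intro hcd
      obtain rfl := sub_eq_zero.1 hcd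
      exact h ⟨add_right_cancel hξ, rfl⟩
    have : ((ξ : F) - η) * (c - d) = 0 := by linear_combination hξ - hη
    exact Units.ext (sub_eq_zero.1 ((mul_eq_zero.1 this).resolve_right hcd))

lemma sum_addEnergy_units_smul_le (V : Finset F) :
    ∑ ξ : Fˣ, E[V, ξ • V] ≤ Fintype.card Fˣ * #V ^ 2 + #V ^ 4 := by
  calc ∑ ξ : Fˣ, E[V, ξ • V]
      = ∑ q ∈ (V ×ˢ V) ×ˢ V ×ˢ V,
          #{ξ : Fˣ | q.1.1 + (ξ : F) * q.2.1 = q.1.2 + (ξ : F) * q.2.2} := by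
        simp only [addEnergy_units_smul, Finset.card_filter]
        exact Finset.sum_comm
    _ ≤ ∑ q ∈ (V ×ˢ V) ×ˢ V ×ˢ V,
          ((if q.1.1 = q.1.2 ∧ q.2.1 = q.2.2 then Fintype.card Fˣ else 0) + 1) :=
        Finset.sum_le_sum fun _ _ ↦ card_units_solutions_le _ _ _ _
    _ = Fintype.card Fˣ * #V ^ 2 + #V ^ 4 := by
        have hdiag : ({q ∈ (V ×ˢ V) ×ˢ V ×ˢ V | q.1.1 = q.1.2 ∧ q.2.1 = q.2.2} : Finset _) =
            V.diag ×ˢ V.diag := by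
          ext ⟨⟨a, b⟩, c, d⟩
          simp only [Finset.mem_filter, Finset.mem_product, Finset.mem_diag]
          grind
        rw [Finset.sum_add_distrib, ← Finset.sum_filter, hdiag]
        simp only [Finset.sum_const, Finset.card_product, Finset.diag_card, smul_eq_mul, mul_one]
        ring

lemma exists_card_add_units_smul_ge (V : Finset F) :
    ∃ ξ : Fˣ, Fintype.card Fˣ * #V ^ 2 ≤ #(V + ξ • V) * (Fintype.card Fˣ + #V ^ 2) := by
  obtain rfl | hV := V.eq_empty_or_nonempty
  · exact ⟨1, by simp⟩
  have hsum : ∑ ξ : Fˣ, Fintype.card Fˣ * E[V, ξ • V] ≤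
      ∑ _ξ : Fˣ, (Fintype.card Fˣ * #V ^ 2 + #V ^ 4) := by
    rw [← Finset.mul_sum, Finset.sum_const, Finset.card_univ, smul_eq_mul]
    exact Nat.mul_le_mul_left _ (sum_addEnergy_units_smul_le V)
  obtain ⟨ξ, -, hξ⟩ := Finset.exists_le_of_sum_le Finset.univ_nonempty hsum
  refine ⟨ξ, Nat.le_of_mul_le_mul_left (c := #V ^ 2) ?_ (pow_pos hV.card_pos 2)⟩
  calc #V ^ 2 * (Fintype.card Fˣ * #V ^ 2)
      = Fintype.card Fˣ * (#V ^ 2 * #(ξ • V) ^ 2) := by rw [Finset.card_smul_finset]; ring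
    _ ≤ Fintype.card Fˣ * (#(V + ξ • V) * E[V, ξ • V]) := by
        exact Nat.mul_le_mul_left _ (Finset.le_card_add_mul_addEnergy V (ξ • V))
    _ = #(V + ξ • V) * (Fintype.card Fˣ * E[V, ξ • V]) := by ring
    _ ≤ #(V + ξ • V) * (Fintype.card Fˣ * #V ^ 2 + #V ^ 4) := by gcongr
    _ = #V ^ 2 * (#(V + ξ • V) * (Fintype.card Fˣ + #V ^ 2)) := by ring

lemma card_le_of_forall_ratio_coveredDilates {K L : ℝ} {V : Finset F}
    (hV : IsApproximateAddSubgroup K (V : Set F))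
    (h : ∀ ξ : F, ∃ x ∈ coveredDilates L (V : Set F), ∃ y ∈ coveredDilates L (V : Set F),
      y ≠ 0 ∧ x = ξ * y) :
    (Fintype.card Fˣ : ℝ) * #V ≤ L ^ 2 * K * (Fintype.card Fˣ + #V ^ 2) := by
  obtain ⟨ξ, hξ⟩ := exists_card_add_units_smul_ge V
  obtain ⟨x, hx, y, hy, hy0, rfl⟩ := h ξ
  have hVV : CovByVAdd F K ((V : Set F) + (V : Set F)) V :=
    two_nsmul (V : Set F) ▸ hV.two_nsmul_covByVAdd
  have hcov : CovByVAdd F (L * L * K) ((y • (V + ξ • V) : Finset F) : Set F) V := by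
    have := (covByVAdd_add hy hx).trans hVV
    rwa [mul_comm (ξ : F), mul_smul, ← smul_add, ← Units.smul_def, ← Finset.coe_smul_finset,
      ← Finset.coe_add, ← Finset.coe_smul_finset] at this
  have hcard : (#(V + ξ • V) : ℝ) ≤ L * L * K * #V := by
    have := card_le_of_covByVAdd hcov
    rwa [← Units.val_mk0 hy0, ← Units.smul_def, Finset.card_smul_finset] at this
  have hVpos : (0 : ℝ) < #V := mod_cast (Finset.coe_nonempty.1 hV.nonempty).card_pos
  refine le_of_mul_le_mul_left (a := (#V : ℝ)) ?_ hVpos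
  calc (#V : ℝ) * (Fintype.card Fˣ * #V) = Fintype.card Fˣ * #V ^ 2 := by ring
    _ ≤ #(V + ξ • V) * (Fintype.card Fˣ + #V ^ 2) := mod_cast hξ
    _ ≤ L * L * K * #V * (Fintype.card Fˣ + #V ^ 2) := by gcongr
    _ = #V * (L ^ 2 * K * (Fintype.card Fˣ + #V ^ 2)) := by ring

end SumDilates

section Pivot

open scoped Pointwise Finset

variable {p : ℕ} [Fact p.Prime]

-- If `ξ` is a ratio of differences and `ξ + 1` is not, then `(x, y) ↦ x + (ξ + 1) * y` is
-- injective; such a `ξ` exists because `1` generates the additive group of `ZMod p`.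
lemma forall_ratio_sub_or_exists_injOn {X Y : Finset (ZMod p)} (hX : X.Nonempty)
    (hY : 1 < #Y) :
    (∀ ξ : ZMod p, ∃ x₁ ∈ X, ∃ x₂ ∈ X, ∃ y₁ ∈ Y, ∃ y₂ ∈ Y,
      y₁ - y₂ ≠ 0 ∧ x₁ - x₂ = ξ * (y₁ - y₂)) ∨
    ∃ x₁ ∈ X, ∃ x₂ ∈ X, ∃ y₁ ∈ Y, ∃ y₂ ∈ Y,
      Set.InjOn (fun q : ZMod p × ZMod p ↦ (y₁ - y₂) * q.1 + (x₁ - x₂ + (y₁ - y₂)) * q.2)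
        (X ×ˢ Y : Finset (ZMod p × ZMod p)) := by
  let IsRatio : ZMod p → Prop := fun ξ ↦ ∃ x₁ ∈ X, ∃ x₂ ∈ X, ∃ y₁ ∈ Y, ∃ y₂ ∈ Y,
    y₁ - y₂ ≠ 0 ∧ x₁ - x₂ = ξ * (y₁ - y₂)
  by_cases hall : ∀ ξ, IsRatio ξ
  · exact .inl hall
  have hzero : IsRatio 0 := by
    obtain ⟨x, hx⟩ := hX
    obtain ⟨y₁, hy₁, y₂, hy₂, hne⟩ := Finset.one_lt_card.1 hY
    exact ⟨x, hx, x, hx, y₁, hy₁, y₂, hy₂, sub_ne_zero.2 hne, by simp⟩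
  obtain ⟨ξ, ⟨x₁, hx₁, x₂, hx₂, y₁, hy₁, y₂, hy₂, hy0, hxy⟩, hξ⟩ :
      ∃ ξ, IsRatio ξ ∧ ¬ IsRatio (ξ + 1) := by
    by_contra! hstep
    refine hall fun ξ ↦ ?_
    rw [← ZMod.natCast_zmod_val ξ]
    induction ξ.val with
    | zero => simpa using hzero
    | succ k ih => simpa using hstep _ ih
  refine .inr ⟨x₁, hx₁, x₂, hx₂, y₁, hy₁, y₂, hy₂, ?_⟩
  rintro ⟨x, y⟩ hq ⟨x', y'⟩ hq' heq
  rw [Finset.mem_coe, Finset.mem_product] at hq hq'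
  have hxx : x - x' = (ξ + 1) * (y' - y) := by
    refine sub_eq_zero.1 ((mul_eq_zero.1 (?_ : (y₁ - y₂) * _ = 0)).resolve_left hy0)
    linear_combination heq + (y' - y) * hxy
  by_cases hyy : y' - y = 0
  · rw [hyy, mul_zero] at hxx
    rw [sub_eq_zero.1 hxx, sub_eq_zero.1 hyy]
  · exact absurd ⟨x, hq.1, x', hq'.1, y', hq'.2, y, hq.2, hyy, hxx⟩ hξ

variable {K L : ℝ} {V : Set (ZMod p)}

lemma forall_ratio_coveredDilates_or_exists_card_eq_mul (hV : IsApproximateAddSubgroup K V)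
    (hKL : K ≤ L) {X Y : Finset (ZMod p)} (hXV : (X : Set (ZMod p)) ⊆ coveredDilates L V)
    (hYV : (Y : Set (ZMod p)) ⊆ coveredDilates L V) (hX : X.Nonempty) (hY : 1 < #Y) :
    (∀ ξ : ZMod p, ∃ x ∈ coveredDilates (L ^ 3) V, ∃ y ∈ coveredDilates (L ^ 3) V,
      y ≠ 0 ∧ x = ξ * y) ∨
    ∃ Z : Finset (ZMod p), #Z = #X * #Y ∧
      (Z : Set (ZMod p)) ⊆ coveredDilates (L ^ 13) V := by
  have hVL : IsApproximateAddSubgroup L V := hV.mono hKL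
  have hsub {x y : ZMod p} (hx : x ∈ coveredDilates L V) (hy : y ∈ coveredDilates L V) :
      x - y ∈ coveredDilates (L ^ 3) V := by
    rw [show L ^ 3 = L * L * L by ring]
    exact sub_mem_coveredDilates hVL hx hy
  rcases forall_ratio_sub_or_exists_injOn hX hY with
    hratio | ⟨x₁, hx₁, x₂, hx₂, y₁, hy₁, y₂, hy₂, hinj⟩
  · refine .inl fun ξ ↦ ?_
    obtain ⟨x₁, hx₁, x₂, hx₂, y₁, hy₁, y₂, hy₂, hne, heq⟩ := hratio ξ
    exact ⟨_, hsub (hXV hx₁) (hXV hx₂), _, hsub (hYV hy₁) (hYV hy₂), hne, heq⟩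
  · refine .inr ⟨_, (Finset.card_image_of_injOn hinj).trans (Finset.card_product X Y), ?_⟩
    intro z hz
    obtain ⟨⟨x, y⟩, hq, rfl⟩ := Finset.mem_image.1 (Finset.mem_coe.1 hz)
    obtain ⟨hx, hy⟩ := Finset.mem_product.1 hq
    have hb := hsub (hYV hy₁) (hYV hy₂)
    have hc := add_mem_coveredDilates hVL (hsub (hXV hx₁) (hXV hx₂)) hb
    rw [show L ^ 13 = L * L ^ 3 * (L * (L ^ 3 * L ^ 3 * L)) * L by ring]
    exact add_mem_coveredDilates hVL (mul_mem_coveredDilates hb (hXV hx))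
      (mul_mem_coveredDilates hc (hYV hy))

lemma forall_ratio_coveredDilates_or_exists_card_eq_pow (hV : IsApproximateAddSubgroup K V)
    {Y : Finset (ZMod p)} (hKL : K ≤ L) (hYV : (Y : Set (ZMod p)) ⊆ coveredDilates L V)
    (hY : 1 < #Y) (n : ℕ) :
    (∀ ξ : ZMod p, ∃ x ∈ coveredDilates (L ^ (3 * 13 ^ n)) V,
      ∃ y ∈ coveredDilates (L ^ (3 * 13 ^ n)) V, y ≠ 0 ∧ x = ξ * y) ∨
    ∃ Z : Finset (ZMod p), #Z = #Y ^ (n + 1) ∧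
      (Z : Set (ZMod p)) ⊆ coveredDilates (L ^ 13 ^ n) V := by
  have hL : 1 ≤ L := hV.one_le.trans hKL
  induction n with
  | zero => exact .inr ⟨Y, by simpa using hYV⟩
  | succ n ih =>
    rcases ih with hratio | ⟨X, hXcard, hXV⟩
    · refine .inl fun ξ ↦ ?_
      have hmono : coveredDilates (L ^ (3 * 13 ^ n)) V ⊆
          coveredDilates (L ^ (3 * 13 ^ (n + 1))) V :=
        coveredDilates_mono (pow_le_pow_right₀ hL (by gcongr <;> omega))
      obtain ⟨x, hx, y, hy, h⟩ := hratio ξ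
      exact ⟨x, hmono hx, y, hmono hy, h⟩
    · have hLpow : L ≤ L ^ 13 ^ n := le_self_pow₀ hL (by positivity)
      have hX : X.Nonempty := Finset.card_pos.1 (by rw [hXcard]; positivity)
      rcases forall_ratio_coveredDilates_or_exists_card_eq_mul hV (hKL.trans hLpow) hXV
        (hYV.trans (coveredDilates_mono hLpow)) hX hY with hratio | ⟨Z, hZcard, hZV⟩
      · have hmono : coveredDilates ((L ^ 13 ^ n) ^ 3) V ⊆
            coveredDilates (L ^ (3 * 13 ^ (n + 1))) V := by
          refine coveredDilates_mono ?_
          rw [← pow_mul, mul_comm]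
          exact pow_le_pow_right₀ hL (by gcongr <;> omega)
        refine .inl fun ξ ↦ ?_
        obtain ⟨x, hx, y, hy, h⟩ := hratio ξ
        exact ⟨x, hmono hx, y, hmono hy, h⟩
      · refine .inr ⟨Z, by rw [hZcard, hXcard, ← pow_succ], ?_⟩
        rwa [← pow_mul, ← pow_succ] at hZV

lemma card_le_of_subset_coveredDilates {V : Finset (ZMod p)}
    (hV : IsApproximateAddSubgroup K (V : Set (ZMod p))) {Y : Finset (ZMod p)} (hKL : K ≤ L)
    (hYV : (Y : Set (ZMod p)) ⊆ coveredDilates L V) (hY : 1 < #Y) {n : ℕ}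
    (hn : p < #Y ^ (n + 1)) :
    ((p : ℝ) - 1) * #V ≤ L ^ 13 ^ (n + 1) * (p - 1 + #V ^ 2) := by
  have hL : 1 ≤ L := hV.one_le.trans hKL
  have hunits : (Fintype.card (ZMod p)ˣ : ℝ) = p - 1 := by
    rw [ZMod.card_units, Nat.cast_pred (Fact.out : p.Prime).pos]
  have hp : (0 : ℝ) ≤ p - 1 := hunits ▸ Nat.cast_nonneg _
  rcases forall_ratio_coveredDilates_or_exists_card_eq_pow hV hKL hYV hY n with
    hratio | ⟨Z, hZ, -⟩
  · have hpow : (L ^ (3 * 13 ^ n)) ^ 2 * K ≤ L ^ 13 ^ (n + 1) := by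
      calc (L ^ (3 * 13 ^ n)) ^ 2 * K ≤ (L ^ (3 * 13 ^ n)) ^ 2 * L := by gcongr
        _ = L ^ (3 * 13 ^ n * 2 + 1) := by rw [← pow_mul, ← pow_succ]
        _ ≤ L ^ 13 ^ (n + 1) := pow_le_pow_right₀ hL (by
          have := Nat.one_le_pow n 13 (by norm_num)
          rw [pow_succ]; omega)
    rw [← hunits] at hp ⊢
    exact (card_le_of_forall_ratio_coveredDilates hV hratio).trans (by gcongr)
  · have := Finset.card_le_univ Z
    rw [ZMod.card, hZ] at this
    omega

end Pivot

section BalogSzemerediGowers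

open scoped Pointwise Finset

section Bipartite

variable {α β : Type*} {A : Finset α} {C : Finset β} {r : α → β → Prop} [∀ a c, Decidable (r a c)]
  {K : ℝ}

lemma card_sq_mul_card_le_sum_card_neighbors_sq (hC : C.Nonempty)
    (hr : (#A : ℝ) * #C ≤ K * #{q ∈ A ×ˢ C | r q.1 q.2}) :
    (#A : ℝ) ^ 2 * #C ≤ K ^ 2 * ∑ c ∈ C, (#{a ∈ A | r a c} : ℝ) ^ 2 := by
  have hedges : (#{q ∈ A ×ˢ C | r q.1 q.2} : ℝ) = ∑ c ∈ C, (#{a ∈ A | r a c} : ℝ) := by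
    simp only [Finset.card_filter, Finset.sum_product_right, Nat.cast_sum]
  have hC0 : (0 : ℝ) < #C := mod_cast hC.card_pos
  refine le_of_mul_le_mul_left (a := (#C : ℝ)) ?_ hC0
  calc (#C : ℝ) * ((#A : ℝ) ^ 2 * #C) = (#A * #C) ^ 2 := by ring
    _ ≤ (K * ∑ c ∈ C, (#{a ∈ A | r a c} : ℝ)) ^ 2 := by rw [← hedges]; gcongr
    _ = K ^ 2 * (∑ c ∈ C, (#{a ∈ A | r a c} : ℝ)) ^ 2 := mul_pow _ _ _
    _ ≤ K ^ 2 * (#C * ∑ c ∈ C, (#{a ∈ A | r a c} : ℝ) ^ 2) := by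
        gcongr; exact sq_sum_le_card_mul_sum_sq
    _ = #C * (K ^ 2 * ∑ c ∈ C, (#{a ∈ A | r a c} : ℝ) ^ 2) := by ring

/-- Two vertices of a bipartite graph `r` between `A` and `C` are poorly connected if they have
fewer than `T` common neighbours in `C`. -/
def PoorlyConnected (C : Finset β) (r : α → β → Prop) [∀ a c, Decidable (r a c)] (T : ℝ)
    (a a' : α) : Prop :=
  (#{c ∈ C | r a c ∧ r a' c} : ℝ) < T

noncomputable instance (T : ℝ) (a a' : α) : Decidable (PoorlyConnected C r T a a') :=
  inferInstanceAs (Decidable ((_ : ℝ) < T))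

lemma sum_card_poorlyConnected_neighbors_le {T : ℝ} (hT : 0 ≤ T) :
    ∑ c ∈ C, (#{q ∈ {a ∈ A | r a c} ×ˢ {a ∈ A | r a c} | PoorlyConnected C r T q.1 q.2} : ℝ) ≤
      #A ^ 2 * T := by
  calc ∑ c ∈ C, (#{q ∈ {a ∈ A | r a c} ×ˢ {a ∈ A | r a c} | PoorlyConnected C r T q.1 q.2} : ℝ)
      = ∑ c ∈ C, ∑ q ∈ A ×ˢ A with PoorlyConnected C r T q.1 q.2,
          if r q.1 c ∧ r q.2 c then (1 : ℝ) else 0 := by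
        refine Finset.sum_congr rfl fun c _ ↦ ?_
        rw [← Finset.filter_product, Finset.filter_comm, Finset.natCast_card_filter]
    _ = ∑ q ∈ A ×ˢ A with PoorlyConnected C r T q.1 q.2, (#{c ∈ C | r q.1 c ∧ r q.2 c} : ℝ) := by
        rw [Finset.sum_comm]
        simp only [Finset.natCast_card_filter]
    _ ≤ ∑ q ∈ A ×ˢ A with PoorlyConnected C r T q.1 q.2, T :=
        Finset.sum_le_sum fun _ hq ↦ (Finset.mem_filter.1 hq).2.le
    _ ≤ ∑ _q ∈ A ×ˢ A, T :=
        Finset.sum_le_sum_of_subset_of_nonneg (Finset.filter_subset _ _) fun _ _ _ ↦ hT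
    _ = #A ^ 2 * T := by
        rw [Finset.sum_const, Finset.card_product, nsmul_eq_mul]; push_cast; ring

lemma exists_subset_few_poorlyConnected (hK : 0 < K) (hC : C.Nonempty)
    (hr : (#A : ℝ) * #C ≤ K * #{q ∈ A ×ˢ C | r q.1 q.2}) :
    ∃ A' ⊆ A, (#A : ℝ) ≤ 2 * K * #A' ∧
      8 * (#{q ∈ A' ×ˢ A' | PoorlyConnected C r (#C / (16 * K ^ 2)) q.1 q.2} : ℝ) ≤ #A' ^ 2 := by
  have hneighbors := card_sq_mul_card_le_sum_card_neighbors_sq hC hr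
  have hpoor := sum_card_poorlyConnected_neighbors_le (A := A) (C := C) (r := r)
    (T := #C / (16 * K ^ 2)) (by positivity)
  have hnonneg : 0 ≤ (#A : ℝ) ^ 2 / (2 * K ^ 2) := by positivity
  obtain ⟨c, -, hc⟩ : ∃ c ∈ C, (#A : ℝ) ^ 2 / (2 * K ^ 2) ≤ (#{a ∈ A | r a c} : ℝ) ^ 2 - 8 *
      #{q ∈ {a ∈ A | r a c} ×ˢ {a ∈ A | r a c} |
        PoorlyConnected C r (#C / (16 * K ^ 2)) q.1 q.2} := by
    refine Finset.exists_le_of_sum_le hC ?_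
    rw [Finset.sum_sub_distrib, ← Finset.mul_sum, Finset.sum_const, nsmul_eq_mul]
    rw [mul_comm (K ^ 2), ← div_le_iff₀ (by positivity)] at hneighbors
    calc (#C : ℝ) * ((#A : ℝ) ^ 2 / (2 * K ^ 2))
        = #A ^ 2 * #C / K ^ 2 - 8 * (#A ^ 2 * (#C / (16 * K ^ 2))) := by field_simp; ring
      _ ≤ _ := by gcongr
  refine ⟨{a ∈ A | r a c}, Finset.filter_subset _ _, ?_, by linarith⟩
  · have h : (#A : ℝ) ^ 2 / (2 * K ^ 2) ≤ (#{a ∈ A | r a c} : ℝ) ^ 2 := hc.trans (by simp)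
    rw [div_le_iff₀ (by positivity)] at h
    refine le_of_sq_le_sq ?_ (by positivity)
    nlinarith [sq_nonneg (K * (#{a ∈ A | r a c} : ℝ))]

lemma exists_subset_forall_card_filter_le {bad : α → α → Prop} [∀ a a', Decidable (bad a a')]
    (h : 8 * #{q ∈ A ×ˢ A | bad q.1 q.2} ≤ #A ^ 2) :
    ∃ B ⊆ A, #A ≤ 2 * #B ∧ ∀ a ∈ B, 4 * #{a' ∈ A | bad a a'} ≤ #A := by
  refine ⟨{a ∈ A | 4 * #{a' ∈ A | bad a a'} ≤ #A}, Finset.filter_subset _ _, ?_,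
    fun a ha ↦ (Finset.mem_filter.1 ha).2⟩
  have hsplit := Finset.card_filter_add_card_filter_not (s := A)
    (fun a ↦ 4 * #{a' ∈ A | bad a a'} ≤ #A)
  have hmarkov : #{a ∈ A | ¬ 4 * #{a' ∈ A | bad a a'} ≤ #A} * #A ≤
      4 * #{q ∈ A ×ˢ A | bad q.1 q.2} := by
    calc #{a ∈ A | ¬ 4 * #{a' ∈ A | bad a a'} ≤ #A} * #A
        ≤ ∑ a ∈ A with ¬ 4 * #{a' ∈ A | bad a a'} ≤ #A, 4 * #{a' ∈ A | bad a a'} :=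
          Finset.card_nsmul_le_sum _ _ _ fun a ha ↦ (not_le.1 (Finset.mem_filter.1 ha).2).le
      _ ≤ ∑ a ∈ A, 4 * #{a' ∈ A | bad a a'} :=
          Finset.sum_le_sum_of_subset (Finset.filter_subset _ _)
      _ = 4 * #{q ∈ A ×ˢ A | bad q.1 q.2} := by
          simp only [← Finset.mul_sum, Finset.card_filter, Finset.sum_product]
  nlinarith

/-- The paths `a, c, a'', c', a'` from `a` to `a'` in a bipartite graph `r` between `A` and `C`,
recorded as `(a'', c, c')`. -/
def fourPaths (A : Finset α) (C : Finset β) (r : α → β → Prop) [∀ a c, Decidable (r a c)]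
    (a a' : α) : Finset (α × β × β) :=
  {q ∈ A ×ˢ C ×ˢ C | (r a q.2.1 ∧ r q.1 q.2.1) ∧ r a' q.2.2 ∧ r q.1 q.2.2}

lemma card_fourPaths (a a' : α) :
    #(fourPaths A C r a a') =
      ∑ x ∈ A, #{c ∈ C | r a c ∧ r x c} * #{c ∈ C | r a' c ∧ r x c} := by
  rw [fourPaths, Finset.card_filter, Finset.sum_product]
  refine Finset.sum_congr rfl fun x _ ↦ ?_
  rw [← Finset.card_filter, ← Finset.card_product,
    ← Finset.filter_product (fun c ↦ r a c ∧ r x c) (fun c ↦ r a' c ∧ r x c)]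

lemma card_mul_sq_le_card_fourPaths {A' : Finset α} (hA' : A' ⊆ A) {T : ℝ} (hT : 0 ≤ T) {a a' : α}
    (ha : 4 * #{x ∈ A' | PoorlyConnected C r T a x} ≤ #A')
    (ha' : 4 * #{x ∈ A' | PoorlyConnected C r T a' x} ≤ #A') :
    #A' / 2 * T ^ 2 ≤ (#(fourPaths A C r a a') : ℝ) := by
  classical
  let good : Finset α := {x ∈ A' | ¬ PoorlyConnected C r T a x ∧ ¬ PoorlyConnected C r T a' x}
  have hgood : #A' ≤ 2 * #good := by
    have hcover : A' ⊆ good ∪ ({x ∈ A' | PoorlyConnected C r T a x} ∪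
        {x ∈ A' | PoorlyConnected C r T a' x}) := by
      intro x hx
      simp only [good, Finset.mem_union, Finset.mem_filter]
      tauto
    have := (Finset.card_le_card hcover).trans ((Finset.card_union_le _ _).trans
      (Nat.add_le_add_left (Finset.card_union_le _ _) _))
    omega
  rw [card_fourPaths]
  push_cast
  calc #A' / 2 * T ^ 2 ≤ #good * T ^ 2 := by
        gcongr; rw [div_le_iff₀ two_pos, mul_comm]; exact_mod_cast hgood
    _ = ∑ _x ∈ good, T * T := by rw [Finset.sum_const, nsmul_eq_mul, sq]
    _ ≤ ∑ x ∈ good, (#{c ∈ C | r a c ∧ r x c} : ℝ) * #{c ∈ C | r a' c ∧ r x c} := by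
        refine Finset.sum_le_sum fun _ hx ↦ ?_
        obtain ⟨h, h'⟩ := (Finset.mem_filter.1 hx).2
        have h := not_lt.1 h
        have h' := not_lt.1 h'
        gcongr
    _ ≤ ∑ x ∈ A, (#{c ∈ C | r a c ∧ r x c} : ℝ) * #{c ∈ C | r a' c ∧ r x c} :=
        Finset.sum_le_sum_of_subset_of_nonneg ((Finset.filter_subset _ _).trans hA')
          fun _ _ _ ↦ by positivity

lemma exists_subset_forall_card_fourPaths_ge (hK : 0 < K) (hC : C.Nonempty)
    (hr : (#A : ℝ) * #C ≤ K * #{q ∈ A ×ˢ C | r q.1 q.2}) :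
    ∃ B ⊆ A, (#A : ℝ) ≤ 4 * K * #B ∧
      ∀ a ∈ B, ∀ a' ∈ B, (#A : ℝ) * #C ^ 2 / (1024 * K ^ 5) ≤ #(fourPaths A C r a a') := by
  obtain ⟨A', hA'A, hcard, hpoor⟩ := exists_subset_few_poorlyConnected hK hC hr
  obtain ⟨B, hBA', hBcard, hB⟩ := exists_subset_forall_card_filter_le (mod_cast hpoor)
  have hBcard : (#A' : ℝ) ≤ 2 * #B := mod_cast hBcard
  refine ⟨B, hBA'.trans hA'A, ?_, fun a ha a' ha' ↦ ?_⟩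
  · calc (#A : ℝ) ≤ 2 * K * #A' := hcard
      _ ≤ 2 * K * (2 * #B) := by gcongr
      _ = 4 * K * #B := by ring
  · calc (#A : ℝ) * #C ^ 2 / (1024 * K ^ 5) ≤ 2 * K * #A' * #C ^ 2 / (1024 * K ^ 5) := by gcongr
      _ = #A' / 2 * (#C / (16 * K ^ 2)) ^ 2 := by field_simp; ring
      _ ≤ #(fourPaths A C r a a') :=
        card_mul_sq_le_card_fourPaths hA'A (by positivity) (hB a ha) (hB a' ha')

end Bipartite

variable {G : Type*} [AddCommGroup G] [DecidableEq G] {A B D : Finset G} {r : G → G → Prop}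
  [DecidableRel r]

-- A path `a, c, a'', c', a'` writes `a - a'` as `(a - c) - (a'' - c) + (a'' - c') - (a' - c')`.
lemma card_fourPaths_le (hr : ∀ a ∈ A, ∀ b ∈ A, r a b → a - b ∈ D) {a a' : G} (ha : a ∈ A)
    (ha' : a' ∈ A) :
    #(fourPaths A A r a a') ≤
      #{q ∈ D ×ˢ D ×ˢ D ×ˢ D | q.1 - q.2.1 + q.2.2.1 - q.2.2.2 = a - a'} := by
  refine Finset.card_le_card_of_injOn
    (fun q ↦ (a - q.2.1, q.1 - q.2.1, q.1 - q.2.2, a' - q.2.2)) ?_ ?_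
  · rintro ⟨x, y, z⟩ hq
    simp only [fourPaths, Finset.coe_filter, Finset.mem_product, Set.mem_ofPred_eq] at hq ⊢
    obtain ⟨⟨hx, hy, hz⟩, ⟨hay, hxy⟩, haz, hxz⟩ := hq
    exact ⟨⟨hr _ ha _ hy hay, hr _ hx _ hy hxy, hr _ hx _ hz hxz, hr _ ha' _ hz haz⟩, by abel⟩
  · rintro ⟨x, y, z⟩ - ⟨x', y', z'⟩ - heq
    simp only [Prod.mk.injEq, sub_right_inj] at heq
    obtain ⟨rfl, hx, -, rfl⟩ := heq
    rw [sub_left_inj.1 hx]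

lemma card_sub_mul_le_of_forall_card_fourPaths_ge (hr : ∀ a ∈ A, ∀ b ∈ A, r a b → a - b ∈ D)
    (hBA : B ⊆ A) {T : ℝ} (hT : ∀ a ∈ B, ∀ a' ∈ B, T ≤ #(fourPaths A A r a a')) :
    (#(B - B) : ℝ) * T ≤ #D ^ 4 := by
  let reps : G → Finset (G × G × G × G) := fun d ↦
    {q ∈ D ×ˢ D ×ˢ D ×ˢ D | q.1 - q.2.1 + q.2.2.1 - q.2.2.2 = d}
  have hreps : ∀ d ∈ B - B, T ≤ #(reps d) := by
    intro d hd
    obtain ⟨a, ha, a', ha', rfl⟩ := Finset.mem_sub.1 hd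
    exact (hT a ha a' ha').trans (mod_cast card_fourPaths_le hr (hBA ha) (hBA ha'))
  calc (#(B - B) : ℝ) * T ≤ ∑ d ∈ B - B, (#(reps d) : ℝ) := by
        simpa using Finset.card_nsmul_le_sum _ _ _ hreps
    _ ≤ #(D ×ˢ D ×ˢ D ×ˢ D) := by
        simp only [reps]
        exact_mod_cast (Finset.sum_card_fiberwise_eq_card_filter _ _ _).trans_le
          (Finset.card_filter_le _ _)
    _ = #D ^ 4 := by simp only [Finset.card_product]; push_cast; ring

/-- The Balog–Szemerédi–Gowers theorem, for a dense graph whose edges span few differences. -/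
lemma exists_subset_card_sub_le_of_dense {K : ℝ} (hK : 1 ≤ K) (hA : A.Nonempty)
    (hr : ∀ a ∈ A, ∀ b ∈ A, r a b → a - b ∈ D) (hD : (#D : ℝ) ≤ K * #A)
    (hdense : (#A : ℝ) ^ 2 ≤ K * #{q ∈ A ×ˢ A | r q.1 q.2}) :
    ∃ B ⊆ A, (#A : ℝ) ≤ 4 * K * #B ∧ (#(B - B) : ℝ) ≤ 4096 * K ^ 10 * #B := by
  have hK0 : 0 < K := by linarith
  obtain ⟨B, hBA, hBcard, hpaths⟩ :=
    exists_subset_forall_card_fourPaths_ge hK0 hA (sq (#A : ℝ) ▸ hdense)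
  refine ⟨B, hBA, hBcard, ?_⟩
  have hsub := card_sub_mul_le_of_forall_card_fourPaths_ge hr hBA hpaths
  rw [← mul_div_assoc, div_le_iff₀ (by positivity)] at hsub
  refine le_of_mul_le_mul_left (a := (#A : ℝ) ^ 3) ?_ (by positivity)
  calc (#A : ℝ) ^ 3 * #(B - B) = #(B - B) * (#A * #A ^ 2) := by ring
    _ ≤ #D ^ 4 * (1024 * K ^ 5) := hsub
    _ ≤ (K * #A) ^ 4 * (1024 * K ^ 5) := by gcongr
    _ = #A ^ 3 * (1024 * K ^ 9 * #A) := by ring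
    _ ≤ #A ^ 3 * (1024 * K ^ 9 * (4 * K * #B)) := by gcongr
    _ = #A ^ 3 * (4096 * K ^ 10 * #B) := by ring

end BalogSzemerediGowers

section SubgroupGrowth

open scoped Pointwise Finset

lemma isApproximateAddSubgroup_sub {G : Type*} [AddCommGroup G] [DecidableEq G] {B : Finset G}
    {K : ℝ} (hB : B.Nonempty) (hK : (#(B - B) : ℝ) ≤ K * #B) :
    IsApproximateAddSubgroup (K ^ 5) ((B - B : Finset G) : Set G) := by
  have hB0 : (0 : ℝ) < #B := mod_cast hB.card_pos
  have hpluennecke : (#((B - B) + (B - B) + B) : ℝ) ≤ K ^ 5 * #B := by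
    have hplu := (NNRat.cast_le (K := ℝ)).2 (Finset.pluennecke_ruzsa_inequality_nsmul_sub_nsmul_sub
      hB B 3 2)
    push_cast at hplu
    have hnsmul : (B - B) + (B - B) + B = 3 • B - 2 • B := by
      simp only [succ_nsmul, zero_nsmul, zero_add, sub_eq_add_neg, neg_add]
      ac_rfl
    rw [hnsmul]
    refine hplu.trans ?_
    gcongr
    rwa [div_le_iff₀ hB0]
  obtain ⟨T, -, hT, hcover⟩ := Finset.ruzsa_covering_add hB hpluennecke
  refine ⟨?_, ?_, T, hT, ?_⟩
  · obtain ⟨b, hb⟩ := hB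
    exact Finset.mem_coe.2 (Finset.mem_sub.2 ⟨b, hb, b, hb, sub_self b⟩)
  · rw [← Finset.coe_neg, neg_sub]
  · rw [two_nsmul, vadd_eq_add]
    exact_mod_cast hcover

lemma mem_coveredDilates_sub_of_card_le {R : Type*} [Ring R] [DecidableEq R] {B : Finset R}
    {K M : ℝ} {x : R} (hB : B.Nonempty) (hK : (#(B - B) : ℝ) ≤ K * #B)
    (hx : (#B : ℝ) ≤ M * #(B ∩ x • B)) :
    x ∈ coveredDilates ((M * K) ^ 2 * K ^ 5) ((B - B : Finset R) : Set R) := by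
  have hK0 : 0 ≤ K := by
    have : (0 : ℝ) < #B := mod_cast hB.card_pos
    exact nonneg_of_mul_nonneg_left ((Nat.cast_nonneg _).trans hK) this
  have hdist : x • (B - B) = x • B - x • B := Finset.image_image₂_distrib (mul_sub x)
  have hne : (B ∩ x • B).Nonempty := by
    by_contra! hempty
    rw [hempty, Finset.card_empty, Nat.cast_zero, mul_zero] at hx
    exact hB.card_pos.ne' (by exact_mod_cast hx.antisymm (Nat.cast_nonneg _))
  have hcard : (#(x • B + -(B ∩ x • B)) : ℝ) ≤ M * K * #(-(B ∩ x • B)) := by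
    have hsub : x • B + -(B ∩ x • B) ⊆ x • (B - B) := by
      rw [← sub_eq_add_neg, hdist]
      exact Finset.sub_subset_sub_left Finset.inter_subset_right
    calc (#(x • B + -(B ∩ x • B)) : ℝ) ≤ #(B - B) :=
          mod_cast (Finset.card_le_card hsub).trans Finset.card_image_le
      _ ≤ K * (M * #(B ∩ x • B)) := hK.trans (by gcongr)
      _ = M * K * #(-(B ∩ x • B)) := by rw [Finset.card_neg]; ring
  obtain ⟨T, -, hT, hcover⟩ := Finset.ruzsa_covering_add hne.neg hcard
  have hxB : CovByVAdd R (M * K) (x • B : Finset R) ((B - B : Finset R) : Set R) := by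
    refine ⟨T, hT, ?_⟩
    rw [vadd_eq_add]
    refine (Finset.coe_subset.2 (hcover.trans (Finset.add_subset_add_left ?_))).trans_eq
      (Finset.coe_add _ _)
    rw [neg_sub_neg]
    exact Finset.sub_subset_sub Finset.inter_subset_left Finset.inter_subset_left
  have hV := isApproximateAddSubgroup_sub hB hK
  have hVV := hV.two_nsmul_covByVAdd
  rw [two_nsmul] at hVV
  nth_rw 2 [← hV.neg_eq_self] at hVV
  have hxV := (covByVAdd_add hxB (covByVAdd_neg hxB)).trans hVV
  rwa [← sub_eq_add_neg, ← Finset.coe_sub, ← hdist, Finset.coe_smul_finset, ← sq] at hxV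

section GroupAction

variable {G X : Type*} [Group G] [Fintype G] [MulAction G X] [DecidableEq X] {A B : Finset X}

lemma card_mul_card_sq_le_sum_card_inter_smul (hA : ∀ g : G, g • B ⊆ A) :
    Fintype.card G * #B ^ 2 ≤ #A * ∑ g : G, #(B ∩ g • B) := by
  have hcount : ∑ x ∈ A, #{g : G | x ∈ g • B} = Fintype.card G * #B := by
    simp_rw [Finset.card_filter]
    rw [Finset.sum_comm]
    simp_rw [← Finset.card_filter, Finset.filter_mem_eq_inter, Finset.inter_eq_right.2 (hA _),
      Finset.card_smul_finset, Finset.sum_const, smul_eq_mul, Finset.card_univ]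
  have htranslate (g g' : G) : #(g • B ∩ g' • B) = #(B ∩ (g⁻¹ * g') • B) := by
    rw [← Finset.card_smul_finset g⁻¹, Finset.smul_finset_inter, inv_smul_smul, smul_smul]
  have hsq : ∑ x ∈ A, #{g : G | x ∈ g • B} ^ 2 ≤
      Fintype.card G * ∑ g : G, #(B ∩ g • B) := by
    calc ∑ x ∈ A, #{g : G | x ∈ g • B} ^ 2
        = ∑ g : G, ∑ g' : G, #{x ∈ A | x ∈ g • B ∧ x ∈ g' • B} := by
          simp_rw [sq, ← Finset.card_product, ← Finset.filter_product, Finset.univ_product_univ,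
            Finset.card_filter]
          rw [Finset.sum_comm, Fintype.sum_prod_type]
      _ ≤ ∑ g : G, ∑ g' : G, #(g • B ∩ g' • B) := by
          refine Finset.sum_le_sum fun g _ ↦ Finset.sum_le_sum fun g' _ ↦ Finset.card_le_card ?_
          exact fun x hx ↦ Finset.mem_inter.2 (Finset.mem_filter.1 hx).2
      _ = ∑ _g : G, ∑ g' : G, #(B ∩ g' • B) := by
          simp_rw [htranslate]
          exact Finset.sum_congr rfl fun g _ ↦
            Fintype.sum_equiv (Equiv.mulLeft g⁻¹) _ _ fun _ ↦ rfl
      _ = Fintype.card G * ∑ g : G, #(B ∩ g • B) := by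
          rw [Finset.sum_const, Finset.card_univ, smul_eq_mul]
  have hcs := sq_sum_le_card_mul_sum_sq (s := A) (f := fun x ↦ #{g : G | x ∈ g • B})
  rw [hcount, Nat.cast_id] at hcs
  refine Nat.le_of_mul_le_mul_left (c := Fintype.card G) ?_ Fintype.card_pos
  calc Fintype.card G * (Fintype.card G * #B ^ 2) = (Fintype.card G * #B) ^ 2 := by ring
    _ ≤ #A * (Fintype.card G * ∑ g : G, #(B ∩ g • B)) := hcs.trans (by gcongr)
    _ = Fintype.card G * (#A * ∑ g : G, #(B ∩ g • B)) := by ring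

lemma card_le_mul_card_popular_translates {K : ℝ} (hK : 0 < K) (hB : B.Nonempty)
    (hA : ∀ g : G, g • B ⊆ A) (hAB : (#A : ℝ) ≤ K * #B) :
    (Fintype.card G : ℝ) ≤ 2 * K * #{g : G | (#B : ℝ) ≤ 2 * K * #(B ∩ g • B)} := by
  have hB0 : (0 : ℝ) < #B := mod_cast hB.card_pos
  have hsum : (Fintype.card G : ℝ) * #B ≤ K * ∑ g : G, (#(B ∩ g • B) : ℝ) := by
    refine le_of_mul_le_mul_right ?_ hB0
    calc (Fintype.card G : ℝ) * #B * #B = Fintype.card G * #B ^ 2 := by ring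
      _ ≤ #A * ∑ g : G, (#(B ∩ g • B) : ℝ) := mod_cast card_mul_card_sq_le_sum_card_inter_smul hA
      _ ≤ K * #B * ∑ g : G, (#(B ∩ g • B) : ℝ) := by gcongr
      _ = K * (∑ g : G, (#(B ∩ g • B) : ℝ)) * #B := by ring
  have hterm (g : G) : (#(B ∩ g • B) : ℝ) ≤
      (if (#B : ℝ) ≤ 2 * K * #(B ∩ g • B) then (#B : ℝ) else 0) + #B / (2 * K) := by
    split_ifs with h
    · exact (Nat.cast_le.2 (Finset.card_le_card Finset.inter_subset_left)).trans
        (le_add_of_nonneg_right (by positivity))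
    · rw [zero_add, le_div_iff₀ (by positivity), mul_comm]
      exact (not_le.1 h).le
  have hsplit : ∑ g : G, (#(B ∩ g • B) : ℝ) ≤
      #{g : G | (#B : ℝ) ≤ 2 * K * #(B ∩ g • B)} * #B + Fintype.card G * (#B / (2 * K)) := by
    refine (Finset.sum_le_sum fun g _ ↦ hterm g).trans_eq ?_
    rw [Finset.sum_add_distrib, ← Finset.sum_filter, Finset.sum_const, Finset.sum_const,
      nsmul_eq_mul, nsmul_eq_mul, Finset.card_univ]
  refine le_of_mul_le_mul_right ?_ hB0
  have hscale : K * (Fintype.card G * (#B / (2 * K))) = Fintype.card G * #B / 2 := by field_simp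
  linarith [mul_le_mul_of_nonneg_left hsplit hK.le]

end GroupAction

variable {p : ℕ} [Fact p.Prime] {H : Subgroup (ZMod p)ˣ} [Fintype H] {A D : Finset (ZMod p)}
  {r : ZMod p → ZMod p → Prop} [DecidableRel r] {K : ℝ}

lemma card_le_of_forall_subgroup_smul_subset {B : Finset (ZMod p)} {M : ℝ} (hM : 1 ≤ M)
    (hB : B.Nonempty) (hK : 1 ≤ K) (hHA : ∀ h : H, h • B ⊆ A) (hAB : (#A : ℝ) ≤ M * #B)
    (hBB : (#(B - B) : ℝ) ≤ K * #B) {n : ℕ} (hn : (p : ℝ) < (Fintype.card H / (2 * M)) ^ (n + 1)) :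
    ((p : ℝ) - 1) * #(B - B) ≤
      ((2 * M * K) ^ 2 * K ^ 5) ^ 13 ^ (n + 1) * (p - 1 + #(B - B) ^ 2) := by
  let Y : Finset (ZMod p) :=
    ({h : H | (#B : ℝ) ≤ 2 * M * #(B ∩ h • B)} : Finset H).image
      fun h : H ↦ ((h : (ZMod p)ˣ) : ZMod p)
  have hYcard : (Fintype.card H : ℝ) ≤ 2 * M * #Y := by
    rw [Finset.card_image_of_injective _ fun _ _ h ↦ Subtype.ext (Units.ext h)]
    exact card_le_mul_card_popular_translates (by positivity) hB hHA hAB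
  have hYV : (Y : Set (ZMod p)) ⊆
      coveredDilates ((2 * M * K) ^ 2 * K ^ 5) ((B - B : Finset (ZMod p)) : Set (ZMod p)) := by
    intro y hy
    obtain ⟨h, hh, rfl⟩ := Finset.mem_image.1 (Finset.mem_coe.1 hy)
    exact mem_coveredDilates_sub_of_card_le hB hBB (Finset.mem_filter.1 hh).2
  have hYpow : (p : ℝ) < (#Y : ℝ) ^ (n + 1) := by
    refine hn.trans_le ?_
    gcongr
    rwa [div_le_iff₀' (by positivity)]
  have hY : 1 < #Y := by
    by_contra! hY
    have : (#Y : ℝ) ^ (n + 1) ≤ 1 := pow_le_one₀ (by positivity) (mod_cast hY)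
    have : (1 : ℝ) ≤ p := mod_cast (Fact.out : p.Prime).one_lt.le
    linarith
  refine card_le_of_subset_coveredDilates (isApproximateAddSubgroup_sub hB hBB) ?_ hYV hY
    (mod_cast hYpow)
  exact le_mul_of_one_le_left (by positivity) (one_le_pow₀ (by nlinarith))

lemma exists_card_le_of_dense_of_forall_subgroup_smul_subset (hK : 1 ≤ K) (hA : A.Nonempty)
    (hr : ∀ a ∈ A, ∀ b ∈ A, r a b → a - b ∈ D) (hD : (#D : ℝ) ≤ K * #A)
    (hdense : (#A : ℝ) ^ 2 ≤ K * #{q ∈ A ×ˢ A | r q.1 q.2}) (hHA : ∀ h : H, h • A ⊆ A) {n : ℕ}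
    (hn : (p : ℝ) < (Fintype.card H / (8 * K)) ^ (n + 1)) :
    ∃ v : ℝ, #A ≤ 4 * K * v ∧ v ≤ 4096 * K ^ 10 * #A ∧
      ((p : ℝ) - 1) * v ≤
        ((8 * K * (4096 * K ^ 10)) ^ 2 * (4096 * K ^ 10) ^ 5) ^ 13 ^ (n + 1) * (p - 1 + v ^ 2) := by
  obtain ⟨B, hBA, hBcard, hBB⟩ := exists_subset_card_sub_le_of_dense hK hA hr hD hdense
  have hB : B.Nonempty := by
    by_contra! hB
    rw [hB, Finset.card_empty, Nat.cast_zero, mul_zero] at hBcard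
    exact hA.card_pos.ne' (by exact_mod_cast hBcard.antisymm (Nat.cast_nonneg _))
  have h8 : 2 * (4 * K) = 8 * K := by ring
  refine ⟨#(B - B), hBcard.trans ?_, hBB.trans ?_, ?_⟩
  · exact mul_le_mul_of_nonneg_left (mod_cast Finset.card_le_card_sub_right hB) (by positivity)
  · gcongr
  · have hK10 : 1 ≤ 4096 * K ^ 10 := by linarith [one_le_pow₀ hK (n := 10)]
    rw [← h8] at hn ⊢
    exact card_le_of_forall_subgroup_smul_subset (by linarith) hB hK10
      (fun h ↦ (Finset.smul_finset_subset_smul_finset hBA).trans (hHA h)) hBcard hBB hn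

end SubgroupGrowth

section CharacterSums

open scoped Finset

variable {ι R : Type*} [Fintype ι] [CommRing R]

/-- The exponential sum of the additive character `ψ`, dilated by `a`, over the family of points
`v`. A finite set is encoded as an injective family. -/
noncomputable def charSum (ψ : AddChar R ℂ) (v : ι → R) (a : R) : ℂ := ∑ i, ψ (a * v i)

section Finite

variable [Finite R] {ψ : AddChar R ℂ} {v : ι → R} {a : R}

lemma norm_charSum_le : ‖charSum ψ v a‖ ≤ Fintype.card ι :=
  (norm_sum_le _ _).trans_eq (by simp [AddChar.norm_apply])

lemma exists_norm_eq_one_mul_eq_norm (z : ℂ) : ∃ c : ℂ, ‖c‖ = 1 ∧ c * z = ‖z‖ := by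
  obtain rfl | hz := eq_or_ne z 0
  · exact ⟨1, by simp⟩
  · have hz' : (‖z‖ : ℂ) ≠ 0 := mod_cast norm_ne_zero_iff.2 hz
    refine ⟨‖z‖ / z, by simp [hz], by field_simp⟩

lemma sum_norm_sum_mul_sq_le (A : Finset R) {c : R → ℂ} (hc : ∀ a, ‖c a‖ = 1) :
    ∑ i, ‖∑ a ∈ A, c a * ψ (a * v i)‖ ^ 2 ≤ ∑ a ∈ A, ∑ b ∈ A, ‖charSum ψ v (a - b)‖ := by
  have hexpand (i : ι) : ((‖∑ a ∈ A, c a * ψ (a * v i)‖ ^ 2 : ℝ) : ℂ) =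
      ∑ a ∈ A, ∑ b ∈ A, c a * (starRingEnd ℂ) (c b) * ψ ((a - b) * v i) := by
    push_cast
    rw [← Complex.mul_conj', map_sum, Finset.sum_mul_sum]
    simp_rw [map_mul, ← AddChar.map_neg_eq_conj, sub_mul, sub_eq_add_neg, AddChar.map_add_eq_mul]
    exact Finset.sum_congr rfl fun a _ ↦ Finset.sum_congr rfl fun b _ ↦ by ring
  have hsum : ((∑ i, ‖∑ a ∈ A, c a * ψ (a * v i)‖ ^ 2 : ℝ) : ℂ) =
      ∑ a ∈ A, ∑ b ∈ A, c a * (starRingEnd ℂ) (c b) * charSum ψ v (a - b) := by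
    rw [Complex.ofReal_sum]
    simp_rw [hexpand]
    rw [Finset.sum_comm]
    refine Finset.sum_congr rfl fun a _ ↦ ?_
    rw [Finset.sum_comm]
    simp_rw [← Finset.mul_sum, charSum]
  have hnonneg : 0 ≤ ∑ i, ‖∑ a ∈ A, c a * ψ (a * v i)‖ ^ 2 := by positivity
  rw [← Complex.norm_of_nonneg hnonneg, hsum]
  refine (norm_sum_le _ _).trans (Finset.sum_le_sum fun a _ ↦ (norm_sum_le _ _).trans
    (Finset.sum_le_sum fun b _ ↦ ?_))
  rw [norm_mul, norm_mul, RCLike.norm_conj, hc, hc, one_mul, one_mul]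

lemma sq_sum_norm_charSum_le (A : Finset R) :
    (∑ a ∈ A, ‖charSum ψ v a‖) ^ 2 ≤
      Fintype.card ι * ∑ a ∈ A, ∑ b ∈ A, ‖charSum ψ v (a - b)‖ := by
  choose c hc hcnorm using fun a ↦ exists_norm_eq_one_mul_eq_norm (charSum ψ v a)
  have hdual : ((∑ a ∈ A, ‖charSum ψ v a‖ : ℝ) : ℂ) = ∑ i, ∑ a ∈ A, c a * ψ (a * v i) := by
    push_cast
    rw [Finset.sum_comm]
    simp_rw [← Finset.mul_sum, ← hcnorm, charSum]
  have hle : ∑ a ∈ A, ‖charSum ψ v a‖ ≤ ∑ i, ‖∑ a ∈ A, c a * ψ (a * v i)‖ := by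
    rw [← Complex.norm_of_nonneg (Finset.sum_nonneg fun _ _ ↦ norm_nonneg _), hdual]
    exact norm_sum_le _ _
  calc (∑ a ∈ A, ‖charSum ψ v a‖) ^ 2 ≤ (∑ i, ‖∑ a ∈ A, c a * ψ (a * v i)‖) ^ 2 := by gcongr
    _ ≤ Fintype.card ι * ∑ i, ‖∑ a ∈ A, c a * ψ (a * v i)‖ ^ 2 := sq_sum_le_card_mul_sum_sq
    _ ≤ Fintype.card ι * ∑ a ∈ A, ∑ b ∈ A, ‖charSum ψ v (a - b)‖ := by
        gcongr
        exact sum_norm_sum_mul_sq_le A hc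

end Finite

variable [Fintype R]

/-- The large spectrum of the family `v`: the dilates at which its exponential sum is at least
`δ` times the trivial bound. -/
noncomputable def largeSpectrum (ψ : AddChar R ℂ) (v : ι → R) (δ : ℝ) : Finset R := by
  classical exact {a | δ * Fintype.card ι ≤ ‖charSum ψ v a‖}

variable {ψ : AddChar R ℂ} {v : ι → R} {δ : ℝ} {a : R}

lemma mem_largeSpectrum : a ∈ largeSpectrum ψ v δ ↔ δ * Fintype.card ι ≤ ‖charSum ψ v a‖ := by
  simp [largeSpectrum]

lemma largeSpectrum_anti {δ' : ℝ} (h : δ' ≤ δ) : largeSpectrum ψ v δ ⊆ largeSpectrum ψ v δ' := by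
  intro a ha
  rw [mem_largeSpectrum] at ha ⊢
  exact le_trans (by gcongr) ha

lemma sum_norm_charSum_sq (hψ : ψ.IsPrimitive) (hv : Function.Injective v) :
    ∑ a, ‖charSum ψ v a‖ ^ 2 = Fintype.card R * Fintype.card ι := by
  classical
  have hexpand (a : R) : ((‖charSum ψ v a‖ ^ 2 : ℝ) : ℂ) = ∑ i, ∑ j, ψ (a * (v i - v j)) := by
    push_cast
    rw [← Complex.mul_conj', charSum, map_sum, Finset.sum_mul_sum]
    simp_rw [← AddChar.map_neg_eq_conj, ← AddChar.map_add_eq_mul, ← mul_neg, ← mul_add,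
      sub_eq_add_neg]
  have horthogonality : ∑ a, ((‖charSum ψ v a‖ ^ 2 : ℝ) : ℂ) = Fintype.card R * Fintype.card ι := by
    simp_rw [hexpand]
    rw [Finset.sum_comm]
    simp_rw [Finset.sum_comm (s := (Finset.univ : Finset R)), AddChar.sum_mulShift _ hψ,
      sub_eq_zero, hv.eq_iff]
    simp [mul_comm]
  exact_mod_cast horthogonality

lemma card_largeSpectrum_mul_le (hψ : ψ.IsPrimitive) (hv : Function.Injective v) [Nonempty ι]
    (hδ : 0 ≤ δ) : #(largeSpectrum ψ v δ) * Fintype.card ι * δ ^ 2 ≤ (Fintype.card R : ℝ) := by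
  have hι : (0 : ℝ) < Fintype.card ι := mod_cast Fintype.card_pos
  refine le_of_mul_le_mul_right ?_ hι
  calc #(largeSpectrum ψ v δ) * Fintype.card ι * δ ^ 2 * Fintype.card ι
      = #(largeSpectrum ψ v δ) • (δ * Fintype.card ι) ^ 2 := by rw [nsmul_eq_mul]; ring
    _ ≤ ∑ a ∈ largeSpectrum ψ v δ, ‖charSum ψ v a‖ ^ 2 :=
        Finset.card_nsmul_le_sum _ _ _ fun a ha ↦
          pow_le_pow_left₀ (by positivity) (mem_largeSpectrum.1 ha) 2
    _ ≤ ∑ a, ‖charSum ψ v a‖ ^ 2 :=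
        Finset.sum_le_sum_of_subset_of_nonneg (Finset.subset_univ _) fun _ _ _ ↦ by positivity
    _ = Fintype.card R * Fintype.card ι := sum_norm_charSum_sq hψ hv

lemma sq_mul_card_sq_le_card_sub_mem_largeSpectrum [DecidableEq R] [Nonempty ι] (hδ : 0 ≤ δ)
    {A : Finset R} (hA : A ⊆ largeSpectrum ψ v δ) :
    δ ^ 2 * (#A : ℝ) ^ 2 ≤ 2 * #{q ∈ A ×ˢ A | q.1 - q.2 ∈ largeSpectrum ψ v (δ ^ 2 / 2)} := by
  set s := Fintype.card ι
  set g := #{q ∈ A ×ˢ A | q.1 - q.2 ∈ largeSpectrum ψ v (δ ^ 2 / 2)}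
  have hs : (0 : ℝ) < s := mod_cast Fintype.card_pos
  have hlower : #A * (δ * s) ≤ ∑ a ∈ A, ‖charSum ψ v a‖ := by
    rw [← nsmul_eq_mul]
    exact Finset.card_nsmul_le_sum _ _ _ fun a ha ↦ mem_largeSpectrum.1 (hA ha)
  have hterm (q : R × R) : ‖charSum ψ v (q.1 - q.2)‖ ≤
      (if q.1 - q.2 ∈ largeSpectrum ψ v (δ ^ 2 / 2) then (s : ℝ) else 0) + δ ^ 2 / 2 * s := by
    split_ifs with h
    · exact norm_charSum_le.trans (le_add_of_nonneg_right (by positivity))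
    · rw [mem_largeSpectrum, not_le] at h
      rw [zero_add]
      exact h.le
  have hupper : ∑ a ∈ A, ∑ b ∈ A, ‖charSum ψ v (a - b)‖ ≤
      g * s + (#A : ℝ) ^ 2 * (δ ^ 2 / 2 * s) := by
    rw [← Finset.sum_product']
    refine (Finset.sum_le_sum fun q _ ↦ hterm q).trans_eq ?_
    rw [Finset.sum_add_distrib, ← Finset.sum_filter, Finset.sum_const, Finset.sum_const,
      nsmul_eq_mul, nsmul_eq_mul, Finset.card_product, Nat.cast_mul, sq (#A : ℝ)]
  have hsq : (#A * (δ * s)) ^ 2 ≤ s * (g * s + (#A : ℝ) ^ 2 * (δ ^ 2 / 2 * s)) :=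
    (pow_le_pow_left₀ (by positivity) hlower 2).trans
      ((sq_sum_norm_charSum_le A).trans (by gcongr))
  have hs2 : (0 : ℝ) < s ^ 2 := by positivity
  refine le_of_mul_le_mul_right ?_ hs2
  linarith

lemma card_sq_le_mul_card_sub_mem_largeSpectrum [DecidableEq R] [Nonempty ι] (hδ0 : 0 < δ)
    (hδ : δ ≤ 1 / 2) {K : ℝ} (hK : 1 ≤ K * δ ^ 3) {A : Finset R}
    (hA : A ⊆ largeSpectrum ψ v δ) :
    (#A : ℝ) ^ 2 ≤ K * #{q ∈ A ×ˢ A | q.1 - q.2 ∈ largeSpectrum ψ v (δ ^ 3)} := by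
  have hK0 : 0 < K := pos_of_mul_pos_left (one_pos.trans_le hK) (by positivity)
  have hsub : #{q ∈ A ×ˢ A | q.1 - q.2 ∈ largeSpectrum ψ v (δ ^ 2 / 2)} ≤
      #{q ∈ A ×ˢ A | q.1 - q.2 ∈ largeSpectrum ψ v (δ ^ 3)} := by
    refine Finset.card_le_card (Finset.monotone_filter_right _ fun q _ hq ↦ ?_)
    exact largeSpectrum_anti (by nlinarith [sq_pos_of_pos hδ0]) hq
  calc (#A : ℝ) ^ 2 ≤ K * δ ^ 3 * #A ^ 2 := le_mul_of_one_le_left (by positivity) hK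
    _ = K * δ * (δ ^ 2 * #A ^ 2) := by ring
    _ ≤ K * δ * (2 * #{q ∈ A ×ˢ A | q.1 - q.2 ∈ largeSpectrum ψ v (δ ^ 2 / 2)}) := by
        exact mul_le_mul_of_nonneg_left (sq_mul_card_sq_le_card_sub_mem_largeSpectrum hδ0.le hA)
          (by positivity)
    _ ≤ K * (1 / 2) * (2 * #{q ∈ A ×ˢ A | q.1 - q.2 ∈ largeSpectrum ψ v (δ ^ 3)}) := by
        gcongr
    _ = K * #{q ∈ A ×ˢ A | q.1 - q.2 ∈ largeSpectrum ψ v (δ ^ 3)} := by ring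

end CharacterSums

section SubgroupSums

open scoped Pointwise Finset

lemma exists_lt_apply_succ_le_mul {f : ℕ → ℝ} {K P : ℝ} {J : ℕ} (hK : 0 ≤ K) (h0 : 1 ≤ f 0)
    (hP : f J ≤ P) (hJ : P < K ^ J) : ∃ j < J, f (j + 1) ≤ K * f j := by
  by_contra! hgrowth
  refine (hP.trans_lt hJ).not_ge ?_
  suffices ∀ j ≤ J, K ^ j ≤ f j from this J le_rfl
  intro j hj
  induction j with
  | zero => simpa using h0
  | succ j ih =>
    rw [pow_succ']
    exact (mul_le_mul_of_nonneg_left (ih (by lia)) hK).trans (hgrowth j hj).le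

lemma lt_pow_of_mul_le_pow_mul_add_sq {K q v a h : ℝ} {e : ℕ} (hK : 2 ≤ K) (hq : 0 < q)
    (hh : 0 < h) (hha : h ≤ a) (hav : a ≤ 4 * K * v) (hva : v ≤ 4096 * K ^ 10 * a)
    (hah : a * h ≤ K ^ 2 * q)
    (hv : q * v ≤ ((8 * K * (4096 * K ^ 10)) ^ 2 * (4096 * K ^ 10) ^ 5) ^ e * (q + v ^ 2)) :
    h < K ^ (162 * e + 25) := by
  have : 0 < K := two_pos.trans_le hK
  have hv0 : 0 < v := pos_of_mul_pos_right (hh.trans_le (hha.trans hav)) (by positivity)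
  have hbase : (8 * K * (4096 * K ^ 10)) ^ 2 * (4096 * K ^ 10) ^ 5 ≤ K ^ 162 := by
    calc (8 * K * (4096 * K ^ 10)) ^ 2 * (4096 * K ^ 10) ^ 5 = 2 ^ 90 * K ^ 72 := by ring
      _ ≤ K ^ 90 * K ^ 72 := by gcongr
      _ = K ^ 162 := by ring
  have hhv : h ≤ K ^ 3 * v := by
    calc h ≤ 2 ^ 2 * K * v := (hha.trans hav).trans_eq (by norm_num)
      _ ≤ K ^ 2 * K * v := by gcongr
      _ = K ^ 3 * v := by ring
  have hvh : v * h ≤ K ^ 24 * q := by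
    calc v * h ≤ 2 ^ 12 * K ^ 10 * a * h := by norm_num; gcongr
      _ ≤ K ^ 12 * K ^ 10 * a * h := by gcongr; exact hh.le.trans hha
      _ = K ^ 22 * (a * h) := by ring
      _ ≤ K ^ 22 * (K ^ 2 * q) := by gcongr
      _ = K ^ 24 * q := by ring
  have hle : h ≤ K ^ (162 * e) * (K ^ 3 + K ^ 24) := by
    have hqv : 0 < q * v := by positivity
    refine le_of_mul_le_mul_left ?_ hqv
    calc q * v * h ≤ (K ^ 162) ^ e * (q + v ^ 2) * h :=
          mul_le_mul_of_nonneg_right (hv.trans (by gcongr)) hh.le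
      _ = K ^ (162 * e) * (q * h + v * (v * h)) := by ring
      _ ≤ K ^ (162 * e) * (q * (K ^ 3 * v) + v * (K ^ 24 * q)) := by gcongr
      _ = q * v * (K ^ (162 * e) * (K ^ 3 + K ^ 24)) := by ring
  have hK1 : 1 < K := one_lt_two.trans_le hK
  calc h ≤ K ^ (162 * e) * (K ^ 3 + K ^ 24) := hle
    _ < K ^ (162 * e) * (K ^ 24 + K ^ 24) := by gcongr; norm_num
    _ = K ^ (162 * e) * (2 * K ^ 24) := by ring
    _ ≤ K ^ (162 * e) * (K * K ^ 24) := by gcongr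
    _ = K ^ (162 * e + 25) := by ring

variable {p : ℕ} [Fact p.Prime]

/-- The family of elements of a subgroup of `F_pˣ`, viewed in `F_p`, over which character sums are
taken. -/
def subgroupPoints (H : Subgroup (ZMod p)ˣ) (h : H) : ZMod p := (h : (ZMod p)ˣ)

lemma subgroupPoints_injective (H : Subgroup (ZMod p)ˣ) : Function.Injective (subgroupPoints H) :=
  Units.val_injective.comp Subtype.val_injective

variable {H : Subgroup (ZMod p)ˣ} [Fintype H] {K : ℝ}

lemma card_subgroup_lt_pow_of_dense {A D : Finset (ZMod p)} (hK : 2 ≤ K) {a₀ : ZMod p}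
    (ha₀A : a₀ ∈ A) (ha₀ : a₀ ≠ 0) (hD : (#D : ℝ) ≤ K * #A)
    (hdense : (#A : ℝ) ^ 2 ≤ K * #{q ∈ A ×ˢ A | q.1 - q.2 ∈ D}) (hHA : ∀ h : H, h • A ⊆ A)
    (hAH : (#A : ℝ) * Fintype.card H ≤ K * p) {n : ℕ}
    (hn : (p : ℝ) < (K ^ (162 * 13 ^ (n + 1) + 21)) ^ (n + 1)) :
    (Fintype.card H : ℝ) < K ^ (162 * 13 ^ (n + 1) + 25) := by
  by_contra! hH
  have hgrowth : K ^ (162 * 13 ^ (n + 1) + 21) ≤ Fintype.card H / (8 * K) := by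
    rw [le_div_iff₀ (by positivity)]
    calc K ^ (162 * 13 ^ (n + 1) + 21) * (8 * K)
        = K ^ (162 * 13 ^ (n + 1) + 21) * (2 ^ 3 * K) := by norm_num
      _ ≤ K ^ (162 * 13 ^ (n + 1) + 21) * (K ^ 3 * K) := by gcongr
      _ = K ^ (162 * 13 ^ (n + 1) + 25) := by ring
      _ ≤ Fintype.card H := hH
  obtain ⟨v, hAv, hvA, hv⟩ := exists_card_le_of_dense_of_forall_subgroup_smul_subset
    (r := fun a b ↦ a - b ∈ D) (one_le_two.trans hK) ⟨a₀, ha₀A⟩ (fun _ _ _ _ h ↦ h) hD hdense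
    hHA (hn.trans_le (by gcongr))
  have hp : (2 : ℝ) ≤ p := mod_cast (Fact.out : p.Prime).two_le
  have hinj : Function.Injective fun h : H ↦ h • a₀ := fun h h' heq ↦
    subgroupPoints_injective H (mul_right_cancel₀ ha₀ heq)
  have hHA' : (Fintype.card H : ℝ) ≤ #A := by
    rw [Nat.cast_le, ← Finset.card_univ, ← Finset.card_image_of_injective _ hinj]
    exact Finset.card_le_card (Finset.image_subset_iff.2 fun h _ ↦
      hHA h (Finset.smul_mem_smul_finset ha₀A))
  refine hH.not_gt (lt_pow_of_mul_le_pow_mul_add_sq hK (q := p - 1) (by linarith)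
    (mod_cast Fintype.card_pos) hHA' hAv hvA ?_ hv)
  calc (#A : ℝ) * Fintype.card H ≤ K * p := hAH
    _ ≤ K * (K * (p - 1)) := by gcongr; nlinarith
    _ = K ^ 2 * (p - 1) := by ring

variable {ψ : AddChar (ZMod p) ℂ}

lemma charSum_subgroupPoints_smul (h : H) (a : ZMod p) :
    charSum ψ (subgroupPoints H) (h • a) = charSum ψ (subgroupPoints H) a :=
  Fintype.sum_equiv (Equiv.mulLeft h) _ _ fun h' ↦ congr_arg ψ <| by
    change (h : (ZMod p)ˣ) * a * ((h' : (ZMod p)ˣ) : ZMod p) =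
      a * ((h * h' : H) : (ZMod p)ˣ)
    push_cast
    ring

lemma smul_largeSpectrum_subgroupPoints_subset (δ : ℝ) (h : H) :
    h • largeSpectrum ψ (subgroupPoints H) δ ⊆ largeSpectrum ψ (subgroupPoints H) δ := by
  refine Finset.image_subset_iff.2 fun a ha ↦ ?_
  rw [mem_largeSpectrum, charSum_subgroupPoints_smul]
  exact mem_largeSpectrum.1 ha

lemma card_subgroup_lt_pow_of_card_largeSpectrum_le (hψ : ψ ≠ 1) {δ : ℝ} (hδ0 : 0 < δ)
    (hδ : δ ≤ 1 / 2) (hK : 1 ≤ K * δ ^ 3) (hone : 1 ∈ largeSpectrum ψ (subgroupPoints H) δ)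
    (hΛ : (#(largeSpectrum ψ (subgroupPoints H) (δ ^ 3)) : ℝ) ≤
      K * #(largeSpectrum ψ (subgroupPoints H) δ))
    {n : ℕ} (hn : (p : ℝ) < (K ^ (162 * 13 ^ (n + 1) + 21)) ^ (n + 1)) :
    (Fintype.card H : ℝ) < K ^ (162 * 13 ^ (n + 1) + 25) := by
  have hK0 : 0 < K := pos_of_mul_pos_left (one_pos.trans_le hK) (by positivity)
  have hδ1 : δ ≤ 1 := by linarith
  have hKδ2 : 1 ≤ K * δ ^ 2 := hK.trans <|
    mul_le_mul_of_nonneg_left (pow_le_pow_of_le_one hδ0.le hδ1 (by norm_num)) hK0.le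
  have hK2 : 2 ≤ K := by
    linarith [mul_le_mul_of_nonneg_left ((pow_le_of_le_one hδ0.le hδ1 two_ne_zero).trans hδ) hK0.le]
  refine card_subgroup_lt_pow_of_dense hK2 hone one_ne_zero hΛ
    (card_sq_le_mul_card_sub_mem_largeSpectrum hδ0 hδ hK subset_rfl)
    (smul_largeSpectrum_subgroupPoints_subset δ) ?_ hn
  have hparseval := card_largeSpectrum_mul_le (AddChar.IsPrimitive.of_ne_one hψ)
    (subgroupPoints_injective H) hδ0.le
  rw [ZMod.card] at hparseval
  set N : ℝ := #(largeSpectrum ψ (subgroupPoints H) δ) * Fintype.card H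
  calc N ≤ N * (K * δ ^ 2) := le_mul_of_one_le_right (by positivity) hKδ2
    _ = K * (N * δ ^ 2) := by ring
    _ ≤ K * p := by gcongr

lemma norm_charSum_subgroupPoints_le (hψ : ψ ≠ 1) {δ : ℝ} (hδ0 : 0 < δ) (hδ : δ ≤ 1 / 2)
    {J n : ℕ} (hK : 1 ≤ K * δ ^ 3 ^ J) (hKJ : (p : ℝ) < K ^ J)
    (hn : (p : ℝ) < (K ^ (162 * 13 ^ (n + 1) + 21)) ^ (n + 1))
    (hH : K ^ (162 * 13 ^ (n + 1) + 25) ≤ Fintype.card H) :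
    ‖charSum ψ (subgroupPoints H) 1‖ ≤ δ * Fintype.card H := by
  by_contra! hlarge
  have hδ1 : δ ≤ 1 := by linarith
  have hK0 : 0 < K := pos_of_mul_pos_left (one_pos.trans_le hK) (by positivity)
  let Λ (j : ℕ) := largeSpectrum ψ (subgroupPoints H) (δ ^ 3 ^ j)
  have hone (j : ℕ) : 1 ∈ Λ j := by
    refine mem_largeSpectrum.2 (le_trans ?_ hlarge.le)
    gcongr
    exact pow_le_of_le_one hδ0.le hδ1 (by positivity)
  have hcardΛ (j : ℕ) : (#(Λ j) : ℝ) ≤ p := mod_cast (Finset.card_le_univ _).trans_eq (ZMod.card p)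
  obtain ⟨j, hjJ, hj⟩ := exists_lt_apply_succ_le_mul (f := fun j ↦ (#(Λ j) : ℝ)) hK0.le
    (mod_cast Finset.card_pos.2 ⟨1, hone 0⟩) (hcardΛ J) hKJ
  have hcube : δ ^ 3 ^ (j + 1) = (δ ^ 3 ^ j) ^ 3 := by rw [← pow_mul, ← pow_succ]
  simp only [Λ, hcube] at hj
  refine hH.not_gt (card_subgroup_lt_pow_of_card_largeSpectrum_le hψ (by positivity)
    ((pow_le_of_le_one hδ0.le hδ1 (by positivity)).trans hδ) ?_ (hone j) hj hn)
  refine hK.trans (mul_le_mul_of_nonneg_left ?_ hK0.le)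
  rw [← hcube]
  exact pow_le_pow_of_le_one hδ0.le hδ1 (pow_le_pow_right₀ (by norm_num) hjJ)

/-- The theorem of Bourgain, Glibichuk and Konyagin. -/
theorem exists_norm_sum_subgroup_le {ε : ℝ} (hε : 0 < ε) :
    ∃ γ : ℝ, 0 < γ ∧ ∀ᶠ p : ℕ in Filter.atTop, ∀ [Fact p.Prime] (H : Subgroup (ZMod p)ˣ)
      [Fintype H], (p : ℝ) ^ ε ≤ Fintype.card H → ∀ ψ : AddChar (ZMod p) ℂ, ψ ≠ 1 →
      ‖∑ h : H, ψ ((h : (ZMod p)ˣ) : ZMod p)‖ ≤ (p : ℝ) ^ (-γ) * Fintype.card H := by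
  obtain ⟨n, hn⟩ := exists_nat_gt (2 / ε)
  set E := 162 * 13 ^ (n + 1)
  set κ : ℝ := ε / (E + 25 : ℕ) with hκ
  have hκ0 : 0 < κ := by positivity
  have hκE : κ * (E + 25 : ℕ) = ε := div_mul_cancel₀ _ (by positivity)
  obtain ⟨J, hJ⟩ := exists_nat_gt (1 / κ)
  set γ : ℝ := κ / (3 ^ J : ℕ) with hγ
  have hγ0 : 0 < γ := by positivity
  have hlarge : ∀ᶠ p : ℕ in Filter.atTop, (2 : ℝ) ≤ (p : ℝ) ^ γ :=
    ((tendsto_rpow_atTop hγ0).comp tendsto_natCast_atTop_atTop).eventually_ge_atTop 2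
  refine ⟨γ, hγ0, hlarge.mono fun p hp _ H _ hH ψ hψ ↦ ?_⟩
  have hp1 : (1 : ℝ) < p := mod_cast (Fact.out : p.Prime).one_lt
  have hp0 : (0 : ℝ) < p := by linarith
  have hpow (k : ℕ) : ((p : ℝ) ^ κ) ^ k = (p : ℝ) ^ (κ * k) :=
    (Real.rpow_mul_natCast hp0.le κ k).symm
  have hlt {x : ℝ} (hx : 1 < x) : (p : ℝ) < (p : ℝ) ^ x := Real.self_lt_rpow_of_one_lt hp1 hx
  have hsum : ‖charSum ψ (subgroupPoints H) 1‖ ≤ (p : ℝ) ^ (-γ) * Fintype.card H := by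
    refine norm_charSum_subgroupPoints_le (K := (p : ℝ) ^ κ) (J := J) (n := n) hψ (by positivity)
      ?_ ?_ ?_ ?_ ?_
    · rw [Real.rpow_neg hp0.le, one_div]
      exact inv_anti₀ two_pos hp
    · rw [← Real.rpow_mul_natCast hp0.le, neg_mul, hγ, div_mul_cancel₀ _ (by positivity),
        ← Real.rpow_add hp0, add_neg_cancel, Real.rpow_zero]
    · rw [hpow]
      exact hlt ((div_lt_iff₀' hκ0).1 hJ)
    · rw [← pow_mul, hpow]
      refine hlt ?_
      have hE : (162 : ℝ) ≤ E := mod_cast Nat.le_mul_of_pos_right 162 (by positivity)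
      have hhalf : ε / 2 ≤ κ * (E + 21 : ℕ) := by
        rw [← hκE]; push_cast; nlinarith
      calc (1 : ℝ) < n * (ε / 2) := by rw [div_lt_iff₀ hε] at hn; linarith
        _ ≤ (n + 1) * (κ * (E + 21 : ℕ)) := by gcongr; linarith
        _ = κ * ((E + 21) * (n + 1) : ℕ) := by push_cast; ring
    · rw [hpow, hκE]
      exact hH
  simpa only [charSum, subgroupPoints, one_mul] using hsum

end SubgroupSums

section AffineRecurrences

open scoped Finset

lemma norm_sum_range_le_of_periodic {E : Type*} [SeminormedAddCommGroup E] {f : ℕ → E} {t : ℕ}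
    {B : ℝ} (hf : ∀ n, ‖f n‖ ≤ 1) (ht : 0 < t) (hper : Function.Periodic f t)
    (hB : ‖∑ n ∈ Finset.range t, f n‖ ≤ B) (N : ℕ) :
    ‖∑ n ∈ Finset.range N, f n‖ ≤ N / t * B + t := by
  have hB0 : 0 ≤ B := (norm_nonneg _).trans hB
  induction N using Nat.strong_induction_on with
  | _ N ih =>
    obtain hN | hN := lt_or_ge N t
    · calc ‖∑ n ∈ Finset.range N, f n‖ ≤ N :=
            (norm_sum_le _ _).trans ((Finset.sum_le_sum fun n _ ↦ hf n).trans (by simp))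
        _ ≤ t := mod_cast hN.le
        _ ≤ N / t * B + t := le_add_of_nonneg_left (by positivity)
    · obtain ⟨k, rfl⟩ := Nat.exists_eq_add_of_le hN
      have hshift : ∑ n ∈ Finset.range k, f (t + n) = ∑ n ∈ Finset.range k, f n :=
        Finset.sum_congr rfl fun n _ ↦ by rw [add_comm, hper]
      rw [Finset.sum_range_add, hshift]
      calc _ ≤ B + (k / t * B + t) := norm_add_le_of_le hB (ih k (by lia))
        _ = (t + k : ℕ) / t * B + t := by push_cast; field_simp; ring

lemma eq_add_nsmul_of_forall_succ {M : Type*} [AddCommMonoid M] {x : ℕ → M} {h : M}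
    (hx : ∀ n, x (n + 1) = x n + h) (n : ℕ) : x n = x 0 + n • h := by
  induction n with
  | zero => simp
  | succ n ih => rw [hx, ih, succ_nsmul, add_assoc]

lemma eq_fixedPoint_add_of_forall_succ {R : Type*} [CommRing R] {x : ℕ → R} {g h c : R}
    (hx : ∀ n, x (n + 1) = g * x n + h) (hc : g * c + h = c) (n : ℕ) :
    x n = c + g ^ n * (x 0 - c) := by
  induction n with
  | zero => simp
  | succ n ih => rw [hx, ih, pow_succ]; linear_combination hc

variable {p : ℕ} [Fact p.Prime] {ψ : AddChar (ZMod p) ℂ} {x : ℕ → ZMod p} {c h : ZMod p}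
  {g : (ZMod p)ˣ}

lemma periodic_of_forall_succ_eq_add (hx : ∀ n, x (n + 1) = x n + h) :
    Function.Periodic x p := fun n ↦ by
  rw [eq_add_nsmul_of_forall_succ hx, eq_add_nsmul_of_forall_succ hx n, add_nsmul]
  simp

lemma sum_range_addChar_eq_zero_of_forall_succ (hψ : ψ ≠ 1) (hh : h ≠ 0)
    (hx : ∀ n, x (n + 1) = x n + h) : ∑ n ∈ Finset.range p, ψ (x n) = 0 := by
  have hψh : ψ h - 1 ≠ 0 := by
    have := (AddChar.zmod_char_ne_one_iff p _).1 (AddChar.IsPrimitive.of_ne_one hψ hh)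
    rwa [AddChar.mulShift_apply, mul_one, ← sub_ne_zero] at this
  refine (mul_eq_zero_iff_right hψh).1 ?_
  calc (∑ n ∈ Finset.range p, ψ (x n)) * (ψ h - 1)
      = ∑ n ∈ Finset.range p, (ψ (x (n + 1)) - ψ (x n)) := by
        simp_rw [Finset.sum_mul, hx, AddChar.map_add_eq_mul, mul_sub, mul_one]
    _ = 0 := by rw [Finset.sum_range_sub (fun n ↦ ψ (x n)),
          (periodic_of_forall_succ_eq_add hx).eq, sub_self]

lemma periodic_orderOf_of_forall_succ (hx : ∀ n, x (n + 1) = g * x n + h) (hc : g * c + h = c) :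
    Function.Periodic x (orderOf g) := fun n ↦ by
  rw [eq_fixedPoint_add_of_forall_succ hx hc, eq_fixedPoint_add_of_forall_succ hx hc n, pow_add,
    ← Units.val_pow_eq_pow_val g (orderOf g), pow_orderOf_eq_one, Units.val_one, mul_one]

lemma norm_sum_range_orderOf (hx : ∀ n, x (n + 1) = g * x n + h) (hc : g * c + h = c) :
    ‖∑ n ∈ Finset.range (orderOf g), ψ (x n)‖ =
      ‖∑ k : Subgroup.zpowers g, ψ.mulShift (x 0 - c) ((k : (ZMod p)ˣ) : ZMod p)‖ := by
  have hsum : ∑ n ∈ Finset.range (orderOf g), ψ (x n) =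
      ψ c * ∑ k : Subgroup.zpowers g, ψ.mulShift (x 0 - c) ((k : (ZMod p)ˣ) : ZMod p) := by
    rw [Finset.sum_range, Finset.mul_sum]
    refine Fintype.sum_equiv (finEquivZPowers (isOfFinOrder_of_finite g)) _ _ fun n ↦ ?_
    rw [eq_fixedPoint_add_of_forall_succ hx hc, AddChar.map_add_eq_mul, AddChar.mulShift_apply,
      finEquivZPowers_apply, mul_comm (_ ^ _)]
    push_cast
    rfl
  rw [hsum, norm_mul, AddChar.norm_apply, one_mul]

lemma card_image_le_card_zpowers (hx : ∀ n, x (n + 1) = g * x n + h) (hc : g * c + h = c)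
    (s : Finset ℕ) : #(s.image x) ≤ Fintype.card (Subgroup.zpowers g) := by
  refine (Finset.card_le_card (t := Finset.univ.image fun k : Subgroup.zpowers g ↦
    c + ((k : (ZMod p)ˣ) : ZMod p) * (x 0 - c)) ?_).trans Finset.card_image_le
  refine Finset.image_subset_iff.2 fun n _ ↦ Finset.mem_image.2
    ⟨⟨g ^ n, Subgroup.npow_mem_zpowers g n⟩, Finset.mem_univ _, ?_⟩
  rw [eq_fixedPoint_add_of_forall_succ hx hc n]
  push_cast
  rfl

lemma exists_period_norm_sum_le {γ ε : ℝ} (hε : 0 < ε)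
    (hbgk : ∀ (H : Subgroup (ZMod p)ˣ) [Fintype H], (p : ℝ) ^ ε ≤ Fintype.card H →
      ∀ ψ : AddChar (ZMod p) ℂ, ψ ≠ 1 →
        ‖∑ k : H, ψ ((k : (ZMod p)ˣ) : ZMod p)‖ ≤ (p : ℝ) ^ (-γ) * Fintype.card H)
    (hψ : ψ ≠ 1) (hx : ∀ n, x (n + 1) = g * x n + h) {s : Finset ℕ}
    (hs : (p : ℝ) ^ ε ≤ #(s.image x)) :
    ∃ t, 0 < t ∧ t ≤ p ∧ Function.Periodic x t ∧
      ‖∑ n ∈ Finset.range t, ψ (x n)‖ ≤ (p : ℝ) ^ (-γ) * t := by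
  have hp : p.Prime := Fact.out
  have hnonconst : ¬ ∃ y, ∀ n, x n = y := by
    rintro ⟨y, hy⟩
    have hone : #(s.image x) ≤ 1 :=
      Finset.card_le_one_iff_subset_singleton.2 ⟨y,
        Finset.image_subset_iff.2 fun n _ ↦ Finset.mem_singleton.2 (hy n)⟩
    exact (Real.one_lt_rpow (mod_cast hp.one_lt) hε).not_ge (hs.trans (mod_cast hone))
  by_cases hg : g = 1
  · simp only [hg, Units.val_one, one_mul] at hx
    have hh : h ≠ 0 := by
      rintro rfl
      exact hnonconst ⟨x 0, fun n ↦ by simp [eq_add_nsmul_of_forall_succ hx n]⟩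
    refine ⟨p, hp.pos, le_rfl, periodic_of_forall_succ_eq_add hx, ?_⟩
    rw [sum_range_addChar_eq_zero_of_forall_succ hψ hh hx, norm_zero]
    positivity
  · obtain ⟨c, hc⟩ : ∃ c : ZMod p, g * c + h = c := by
      have : (1 : ZMod p) - g ≠ 0 := sub_ne_zero.2 fun h ↦ hg (Units.ext h.symm)
      exact ⟨h / (1 - g), by field_simp; ring⟩
    have hx0 : x 0 - c ≠ 0 := fun h0 ↦
      hnonconst ⟨c, fun n ↦ by simp [eq_fixedPoint_add_of_forall_succ hx hc n, h0]⟩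
    refine ⟨orderOf g, orderOf_pos g, ?_, periodic_orderOf_of_forall_succ hx hc, ?_⟩
    · calc orderOf g ≤ Fintype.card (ZMod p)ˣ := orderOf_le_card_univ
        _ ≤ p := by rw [ZMod.card_units]; exact Nat.sub_le p 1
    · rw [norm_sum_range_orderOf hx hc, ← Fintype.card_zpowers]
      exact hbgk _ (hs.trans (mod_cast card_image_le_card_zpowers hx hc s)) _
        (AddChar.IsPrimitive.of_ne_one hψ hx0)

theorem exists_norm_sum_affine_le {ε : ℝ} (hε : 0 < ε) :
    ∃ γ : ℝ, 0 < γ ∧ ∀ᶠ p : ℕ in Filter.atTop, ∀ [Fact p.Prime] (x : ℕ → ZMod p) (g : (ZMod p)ˣ)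
      (h : ZMod p), (∀ n, x (n + 1) = g * x n + h) → ∀ N : ℕ, (p : ℝ) ^ (1 + ε) ≤ N →
      (p : ℝ) ^ ε ≤ #((Finset.range N).image x) → ∀ ψ : AddChar (ZMod p) ℂ, ψ ≠ 1 →
      ‖∑ n ∈ Finset.range N, ψ (x n)‖ ≤ N * (2 * (p : ℝ) ^ (-γ)) := by
  obtain ⟨γ, hγ, hbgk⟩ := exists_norm_sum_subgroup_le hε
  refine ⟨min γ ε, lt_min hγ hε, hbgk.mono fun p hbgk _ x g h hx N hN hcard ψ hψ ↦ ?_⟩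
  have hp1 : (1 : ℝ) ≤ p := mod_cast (Fact.out : p.Prime).one_lt.le
  have hp0 : (0 : ℝ) < p := one_pos.trans_le hp1
  obtain ⟨t, ht0, htp, hper, hsum⟩ := exists_period_norm_sum_le hε hbgk hψ hx hcard
  have htN : (t : ℝ) ≤ N * (p : ℝ) ^ (-ε) := by
    calc (t : ℝ) ≤ p := mod_cast htp
      _ = (p : ℝ) ^ (1 + ε) * (p : ℝ) ^ (-ε) := by rw [← Real.rpow_add hp0]; simp
      _ ≤ N * (p : ℝ) ^ (-ε) := by gcongr
  calc ‖∑ n ∈ Finset.range N, ψ (x n)‖ ≤ N / t * ((p : ℝ) ^ (-γ) * t) + t :=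
        norm_sum_range_le_of_periodic (fun n ↦ (AddChar.norm_apply ψ _).le) ht0
          (hper.comp ψ) hsum N
    _ ≤ N * (p : ℝ) ^ (-γ) + N * (p : ℝ) ^ (-ε) := add_le_add (by field_simp; rfl) htN
    _ ≤ N * (p : ℝ) ^ (-min γ ε) + N * (p : ℝ) ^ (-min γ ε) := by
        gcongr
        exacts [min_le_left _ _, min_le_right _ _]
    _ = N * (2 * (p : ℝ) ^ (-min γ ε)) := by ring

end AffineRecurrences

section DegreesOfCompositions

variable {R σ τ : Type*} [CommRing R]

lemma degreeOf_eq_zero_of_notMem_vars {a : σ} {q : MvPolynomial σ R} (ha : a ∉ q.vars) :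
    degreeOf a q = 0 :=
  Nat.le_zero.1 (degreeOf_le_iff.2 fun _e he ↦ (mem_support_notMem_vars_zero he ha).le)

lemma notMem_vars_of_forall_support {a : σ} {q : MvPolynomial σ R}
    (h : ∀ e ∈ q.support, e a = 0) : a ∉ q.vars := by
  intro ha
  obtain ⟨e, he, hea⟩ := (mem_vars_iff_mem_support a).1 ha
  exact Finsupp.mem_support_iff.1 hea (h e he)

lemma bind₁_eq_sum (f : σ → MvPolynomial τ R) (q : MvPolynomial σ R) :
    bind₁ f q = ∑ e ∈ q.support, C (coeff e q) * ∏ l ∈ e.support, f l ^ e l := by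
  rw [bind₁, aeval_def, eval₂_eq, algebraMap_eq]

lemma bind₁_mem {S : Subalgebra R (MvPolynomial τ R)} {f : σ → MvPolynomial τ R}
    {q : MvPolynomial σ R} (h : ∀ l ∈ q.vars, f l ∈ S) : bind₁ f q ∈ S := by
  rw [bind₁_eq_sum]
  refine sum_mem fun e he ↦ mul_mem (S.algebraMap_mem _) (prod_mem fun l hl ↦ pow_mem (h l ?_) _)
  exact (mem_vars_iff_mem_support l).2 ⟨e, he, hl⟩

lemma degreeOf_bind₁_le {a : τ} {f : σ → MvPolynomial τ R} {q : MvPolynomial σ R} {B : ℕ}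
    (h : ∀ e ∈ q.support, ∑ l ∈ e.support, e l * degreeOf a (f l) ≤ B) :
    degreeOf a (bind₁ f q) ≤ B := by
  rw [bind₁_eq_sum]
  refine (degreeOf_sum_le _ _ _).trans (Finset.sup_le fun e he ↦ ?_)
  refine (degreeOf_C_mul_le _ _ _).trans ((degreeOf_prod_le _ _ _).trans (le_trans ?_ (h e he)))
  exact Finset.sum_le_sum fun l _ ↦ degreeOf_pow_le _ _ _

lemma totalDegree_bind₁_le {f : σ → MvPolynomial τ R} {q : MvPolynomial σ R} {B : ℕ}
    (h : ∀ e ∈ q.support, ∑ l ∈ e.support, e l * totalDegree (f l) ≤ B) :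
    totalDegree (bind₁ f q) ≤ B := by
  rw [bind₁_eq_sum]
  refine totalDegree_finsetSum_le fun e he ↦ (totalDegree_mul _ _).trans ?_
  rw [totalDegree_C, zero_add]
  refine (totalDegree_finsetProd _ _).trans (le_trans ?_ (h e he))
  exact Finset.sum_le_sum fun l _ ↦ totalDegree_pow _ _

lemma totalDegree_bind₁_le_add_mul {f : σ → MvPolynomial τ R} {q : MvPolynomial σ R} {j : σ}
    {d A B : ℕ} (hqj : degreeOf j q ≤ 1) (hq : totalDegree q ≤ d) (hfj : totalDegree (f j) ≤ A)
    (hf : ∀ l ∈ q.vars, l ≠ j → totalDegree (f l) ≤ B) :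
    totalDegree (bind₁ f q) ≤ A + d * B := by
  classical
  refine totalDegree_bind₁_le fun e he ↦ ?_
  calc ∑ l ∈ e.support, e l * totalDegree (f l)
      ≤ ∑ l ∈ e.support, ((if l = j then A else 0) + e l * B) := by
        refine Finset.sum_le_sum fun l hl ↦ ?_
        split_ifs with hlj
        · subst hlj
          nlinarith [degreeOf_le_iff.1 hqj e he, Nat.zero_le (e l * B)]
        · rw [zero_add]
          exact Nat.mul_le_mul_left _ (hf l ((mem_vars_iff_mem_support l).2 ⟨e, he, hl⟩) hlj)
    _ ≤ A + (∑ l ∈ e.support, e l) * B := by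
        rw [Finset.sum_add_distrib, Finset.sum_ite_eq', Finset.sum_mul]
        gcongr
        split_ifs <;> omega
    _ ≤ A + d * B := by
        gcongr
        exact (le_totalDegree he).trans hq

lemma totalDegree_bind₁_le_mul {f : σ → MvPolynomial τ R} {q : MvPolynomial σ R} {d B : ℕ}
    (hq : totalDegree q ≤ d) (hf : ∀ l ∈ q.vars, totalDegree (f l) ≤ B) :
    totalDegree (bind₁ f q) ≤ d * B := by
  refine totalDegree_bind₁_le fun e he ↦ ?_
  calc ∑ l ∈ e.support, e l * totalDegree (f l) ≤ ∑ l ∈ e.support, e l * B :=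
        Finset.sum_le_sum fun l hl ↦
          Nat.mul_le_mul_left _ (hf l ((mem_vars_iff_mem_support l).2 ⟨e, he, hl⟩))
    _ = (∑ l ∈ e.support, e l) * B := (Finset.sum_mul _ _ _).symm
    _ ≤ d * B := Nat.mul_le_mul_right _ ((le_totalDegree he).trans hq)

lemma totalDegree_le_totalDegree_X_mul_add {i : σ} {G H : MvPolynomial σ R} (hH : i ∉ H.vars) :
    totalDegree G ≤ totalDegree (X i * G + H) := by
  refine Finset.sup_le fun e he ↦ ?_
  have hcoeff : coeff (Finsupp.single i 1 + e) (X i * G + H) = coeff e G := by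
    have hH0 : coeff (Finsupp.single i 1 + e) H = 0 := by
      by_contra hne
      simpa using mem_support_notMem_vars_zero (mem_support_iff.2 hne) hH
    rw [coeff_add, coeff_X_mul, hH0, add_zero]
  have hmem : Finsupp.single i 1 + e ∈ (X i * G + H).support := by
    rwa [mem_support_iff, hcoeff, ← mem_support_iff]
  refine le_trans ?_ (le_totalDegree hmem)
  rw [Finsupp.sum_add_index' (fun _ ↦ rfl) fun _ _ _ ↦ rfl]
  exact Nat.le_add_left _ _

lemma eval_add_single_of_notMem_vars [DecidableEq σ] {i : σ} {q : MvPolynomial σ R}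
    (hi : i ∉ q.vars) (w : σ → R) (t : R) : eval (w + Pi.single i t) q = eval w q :=
  eval₂Hom_congr' rfl (fun l hl _ ↦ by simp [ne_of_mem_of_not_mem hl hi]) rfl

variable [IsDomain R]

lemma degreeOf_bind₁_of_leading_monomial {f : σ → MvPolynomial τ R} {q : MvPolynomial σ R} {g : R}
    {t : Finset σ} {n : σ → ℕ} {b : σ} {a : τ} (hf : ∀ l, f l ≠ 0) (hfb : degreeOf a (f b) = 1)
    (hfa : ∀ l ∈ t, l ≠ b → degreeOf a (f l) = 0) (hb : b ∈ t) (hn : n b ≠ 0) (hg : g ≠ 0)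
    (hqt : q.vars ⊆ t) (hqb : ∀ e ∈ q.support, e b < n b) :
    degreeOf a (bind₁ f (C g * ∏ l ∈ t, X l ^ n l + q)) = n b := by
  classical
  have hmain : degreeOf a (bind₁ f (C g * ∏ l ∈ t, X l ^ n l)) = n b := by
    simp only [map_mul, map_prod, map_pow, bind₁_X_right, algHom_C, algebraMap_eq]
    rw [degreeOf_C_mul _ _ (mem_nonZeroDivisors_of_ne_zero hg),
      degreeOf_prod_eq _ _ fun l _ ↦ pow_ne_zero _ (hf l), Finset.sum_eq_single_of_mem b hb]
    · rw [degreeOf_pow_eq _ _ _ (hf b), hfb, mul_one]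
    · intro l hl hlb
      rw [degreeOf_pow_eq _ _ _ (hf l), hfa l hl hlb, mul_zero]
  have hrest : degreeOf a (bind₁ f q) ≤ n b - 1 := by
    refine degreeOf_bind₁_le fun e he ↦ ?_
    calc ∑ l ∈ e.support, e l * degreeOf a (f l) ≤ ∑ l ∈ e.support, if l = b then e b else 0 := by
          refine Finset.sum_le_sum fun l hl ↦ ?_
          split_ifs with hlb
          · rw [hlb, hfb, mul_one]
          · rw [hfa l (hqt ((mem_vars_iff_mem_support l).2 ⟨e, he, hl⟩)) hlb, mul_zero]
      _ ≤ e b := by rw [Finset.sum_ite_eq']; split_ifs <;> omega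
      _ ≤ n b - 1 := Nat.le_sub_one_of_lt (hqb e he)
  rw [map_add, degreeOf_add_eq_of_degreeOf_lt (by omega), hmain]

lemma sum_C_mul_ne_zero_of_strictMono_degreeOf {a : σ} {P : ℕ → MvPolynomial σ R}
    (hP : P 0 ≠ 0) (hdeg : StrictMono fun k ↦ degreeOf a (P k)) {s : Finset ℕ} {c : ℕ → R}
    (hc : ∃ k ∈ s, c k ≠ 0) : ∑ k ∈ s, C (c k) * P k ≠ 0 := by
  classical
  obtain ⟨k, hk, hkmax⟩ := Finset.exists_max_image {k ∈ s | c k ≠ 0} id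
    (hc.imp fun k hk ↦ Finset.mem_filter.2 hk)
  obtain ⟨hks, hck⟩ := Finset.mem_filter.1 hk
  have hmain : degreeOf a (C (c k) * P k) = degreeOf a (P k) :=
    degreeOf_C_mul _ _ (mem_nonZeroDivisors_of_ne_zero hck)
  have hrest (l : ℕ) (hl : l ∈ s.erase k) (hl0 : C (c l) * P l ≠ 0) : l < k := by
    have hcl : c l ≠ 0 := fun h ↦ hl0 (by simp [h])
    exact lt_of_le_of_ne (hkmax l (Finset.mem_filter.2 ⟨Finset.mem_of_mem_erase hl, hcl⟩))
      (Finset.ne_of_mem_erase hl)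
  rw [← Finset.add_sum_erase s _ hks]
  intro hzero
  obtain hk0 | hk0 := Nat.eq_zero_or_pos k
  · rw [Finset.sum_eq_zero fun l hl ↦ by_contra fun hl0 ↦ by simpa [hk0] using hrest l hl hl0,
      add_zero] at hzero
    exact mul_ne_zero (C_ne_zero.2 hck) (hk0 ▸ hP) hzero
  · have hkpos : 0 < degreeOf a (P k) := (Nat.zero_le _).trans_lt (hdeg hk0)
    have hlt : degreeOf a (∑ l ∈ s.erase k, C (c l) * P l) < degreeOf a (P k) := by
      refine (degreeOf_sum_le _ _ _).trans_lt ((Finset.sup_lt_iff hkpos).2 fun l hl ↦ ?_)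
      by_cases hl0 : C (c l) * P l = 0
      · rwa [hl0, degreeOf_zero]
      · exact (degreeOf_C_mul_le _ _ _).trans_lt (hdeg (hrest l hl hl0))
    rw [← hmain] at hlt
    simpa [hzero, hmain, hkpos.ne] using degreeOf_add_eq_of_degreeOf_lt hlt

end DegreesOfCompositions

section TriangularSystems

variable {R : Type*} [CommRing R] {m d k : ℕ} {s : ℕ → ℕ → ℕ}
  {F : Fin (m + 1) → MvPolynomial (Fin (m + 1)) R} {i j : Fin (m + 1)}
  {G H : MvPolynomial (Fin (m + 1)) R}

/-- The decomposition `f = X_i G + H` of the `i`-th polynomial of a system in `𝔉(S,m)`, where `G`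
and `H` only involve the later variables and `G` has the leading monomial prescribed by `S`. -/
structure IsTriangularStep (s : ℕ → ℕ → ℕ) (i : Fin (m + 1))
    (f G H : MvPolynomial (Fin (m + 1)) R) : Prop where
  eq_X_mul_add : f = X i * G + H
  left_mem : G ∈ supported R (Set.Ioi i)
  right_mem : H ∈ supported R (Set.Ioi i)
  exists_leading : ∃ (g : R) (Gt : MvPolynomial (Fin (m + 1)) R), g ≠ 0 ∧
    G = C g * ∏ j ∈ Finset.Ioi i, X j ^ s i j + Gt ∧ Gt ∈ supported R (Set.Ioi i) ∧
    ∀ e ∈ Gt.support, ∀ j, i < j → e j < s i j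

lemma IsFSystem.exists_isTriangularStep (hF : IsFSystem m s F) (hi : (i : ℕ) < m) :
    ∃ G H, IsTriangularStep s i (F i) G H := by
  obtain ⟨G, H, Gt, g, hg, hFi, hG, hH, hGeq, hGt, -⟩ := hF.2 i hi
  have hmem {q : MvPolynomial (Fin (m + 1)) R} (hq : ∀ e ∈ q.support, ∀ j, j ≤ i → e j = 0) :
      q ∈ supported R (Set.Ioi i) := mem_supported.2 fun l hl ↦
    lt_of_not_ge fun hli ↦ notMem_vars_of_forall_support (fun e he ↦ hq e he l hli) hl
  rw [Finset.filter_lt_eq_Ioi] at hGeq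
  refine ⟨G, H, hFi, hmem hG, hmem hH, g, Gt, hg, hGeq, ?_, hGt⟩
  rw [← sub_eq_of_eq_add' hGeq]
  refine sub_mem (hmem hG) (mul_mem (Subalgebra.algebraMap_mem _ g) (prod_mem fun j hj ↦ ?_))
  exact pow_mem (Algebra.subset_adjoin (Set.mem_image_of_mem X (Finset.mem_Ioi.1 hj))) _

lemma IsFSystem.mem_supported_Ici (hF : IsFSystem m s F) (j : Fin (m + 1)) :
    F j ∈ supported R (Set.Ici j) := by
  have hX : (X j : MvPolynomial (Fin (m + 1)) R) ∈ supported R (Set.Ici j) :=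
    Algebra.subset_adjoin (Set.mem_image_of_mem X Set.self_mem_Ici)
  obtain hj | hj := lt_or_ge (j : ℕ) m
  · obtain ⟨G, H, hstep⟩ := hF.exists_isTriangularStep hj
    have hle := supported_mono (R := R) (Set.Ioi_subset_Ici_self (a := j))
    rw [hstep.eq_X_mul_add]
    exact add_mem (mul_mem hX (hle hstep.left_mem)) (hle hstep.right_mem)
  · obtain rfl : j = Fin.last m := Fin.ext (by simp; omega)
    obtain ⟨g, h, -, hFj⟩ := hF.1
    rw [hFj]
    exact add_mem (mul_mem (Subalgebra.algebraMap_mem _ g) hX) (Subalgebra.algebraMap_mem _ h)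

/-- The iterates `F^{(k)}` of a single polynomial system. -/
noncomputable abbrev systemIterate (F : Fin (m + 1) → MvPolynomial (Fin (m + 1)) R) (k : ℕ) :
    Fin (m + 1) → MvPolynomial (Fin (m + 1)) R := iterSys m (fun _ ↦ F) k

lemma systemIterate_zero : systemIterate F 0 = X := rfl

lemma systemIterate_succ : systemIterate F (k + 1) j = bind₁ (systemIterate F k) (F j) := rfl

lemma IsTriangularStep.systemIterate_succ_eq_mul_add (hstep : IsTriangularStep s i (F i) G H) :
    systemIterate F (k + 1) i =
      systemIterate F k i * bind₁ (systemIterate F k) G + bind₁ (systemIterate F k) H := by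
  rw [systemIterate_succ, hstep.eq_X_mul_add, map_add, map_mul, bind₁_X_right]

lemma IsFSystem.systemIterate_mem_supported_Ici (hF : IsFSystem m s F) (k : ℕ) (j : Fin (m + 1)) :
    systemIterate F k j ∈ supported R (Set.Ici j) := by
  induction k generalizing j with
  | zero => exact Algebra.subset_adjoin (Set.mem_image_of_mem X Set.self_mem_Ici)
  | succ k ih =>
    refine bind₁_mem fun l hl ↦ supported_mono (Set.Ici_subset_Ici.2 ?_) (ih l)
    exact mem_supported.1 (hF.mem_supported_Ici j) hl

lemma IsFSystem.bind₁_systemIterate_mem_supported_Ioi (hF : IsFSystem m s F) (k : ℕ)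
    (hG : G ∈ supported R (Set.Ioi i)) : bind₁ (systemIterate F k) G ∈ supported R (Set.Ioi i) :=
  bind₁_mem fun l hl ↦ supported_mono (Set.Ici_subset_Ioi.2 (mem_supported.1 hG hl))
    (hF.systemIterate_mem_supported_Ici k l)

lemma degreeOf_eq_zero_of_mem_supported_Ioi (hG : G ∈ supported R (Set.Ioi i)) :
    degreeOf i G = 0 :=
  degreeOf_eq_zero_of_notMem_vars fun hi ↦ lt_irrefl i (mem_supported.1 hG hi)

lemma IsFSystem.degreeOf_systemIterate_eq_zero (hF : IsFSystem m s F) (k : ℕ) (hij : i < j) :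
    degreeOf i (systemIterate F k j) = 0 :=
  degreeOf_eq_zero_of_notMem_vars fun hi ↦
    hij.not_ge (mem_supported.1 (hF.systemIterate_mem_supported_Ici k j) hi)

section Domain

variable [IsDomain R]

lemma IsTriangularStep.degreeOf_bind₁_systemIterate (hF : IsFSystem m s F)
    (hstep : IsTriangularStep s i (F i) G H) (hij : (j : ℕ) = i + 1) (hs : s i j ≠ 0)
    (hk : ∀ l, degreeOf l (systemIterate F k l) = 1) :
    degreeOf j (bind₁ (systemIterate F k) G) = s i j := by
  obtain ⟨g, Gt, hg, rfl, hGt, hGt_lt⟩ := hstep.exists_leading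
  have hij' : i < j := Fin.lt_def.2 (by omega)
  refine degreeOf_bind₁_of_leading_monomial (fun l hl ↦ by simpa [hl] using hk l) (hk j)
    (fun l hl hlj ↦ hF.degreeOf_systemIterate_eq_zero k (lt_of_le_of_ne ?_ hlj.symm))
    (Finset.mem_Ioi.2 hij') hs hg (fun l hl ↦ Finset.mem_Ioi.2 (mem_supported.1 hGt hl))
    fun e he ↦ hGt_lt e he j hij'
  rw [Finset.mem_Ioi, Fin.lt_def] at hl
  exact Fin.le_def.2 (by omega)

lemma IsFSystem.degreeOf_systemIterate_self (hF : IsFSystem m s F) (hs : ∀ i < m, s i (i + 1) ≠ 0)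
    (k : ℕ) (j : Fin (m + 1)) : degreeOf j (systemIterate F k j) = 1 := by
  induction k generalizing j with
  | zero => exact degreeOf_X_self j
  | succ k ih =>
    have hne : systemIterate F k j ≠ 0 := fun h ↦ by simpa [h] using ih j
    obtain hj | hj := lt_or_ge (j : ℕ) m
    · obtain ⟨G, H, hstep⟩ := hF.exists_isTriangularStep hj
      have hG : bind₁ (systemIterate F k) G ≠ 0 := fun h ↦ hs j hj <| by
        simpa [h] using (hstep.degreeOf_bind₁_systemIterate (j := ⟨j + 1, by omega⟩) hF rfl
          (hs j hj) ih).symm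
      have hzero {q} (hq : q ∈ supported R (Set.Ioi j)) :
          degreeOf j (bind₁ (systemIterate F k) q) = 0 :=
        degreeOf_eq_zero_of_mem_supported_Ioi (hF.bind₁_systemIterate_mem_supported_Ioi k hq)
      have hmul : degreeOf j (systemIterate F k j * bind₁ (systemIterate F k) G) = 1 := by
        rw [degreeOf_mul_eq hne hG, ih, hzero hstep.left_mem]
      rw [hstep.systemIterate_succ_eq_mul_add, degreeOf_add_eq_of_degreeOf_lt, hmul]
      rw [hmul, hzero hstep.right_mem]
      exact Nat.one_pos
    · obtain rfl : j = Fin.last m := Fin.ext (by simp; omega)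
      obtain ⟨g, h, hg, hFj⟩ := hF.1
      have hmul : degreeOf (Fin.last m) (C g * systemIterate F k (Fin.last m)) = 1 := by
        rw [degreeOf_C_mul _ _ (mem_nonZeroDivisors_of_ne_zero hg), ih]
      rw [systemIterate_succ, hFj, map_add, map_mul, bind₁_X_right, algHom_C, algHom_C,
        algebraMap_eq, degreeOf_add_eq_of_degreeOf_lt, hmul]
      rw [hmul, degreeOf_C]
      exact Nat.one_pos

lemma IsFSystem.totalDegree_systemIterate_le (hF : IsFSystem m s F)
    (hs : ∀ i < m, s i (i + 1) ≠ 0) (hdeg : ∀ j, (F j).totalDegree ≤ d) (k : ℕ)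
    (j : Fin (m + 1)) : totalDegree (systemIterate F k j) ≤ (1 + d * k) ^ (m - j : ℕ) := by
  induction k generalizing j with
  | zero => rw [systemIterate_zero, totalDegree_X, mul_zero, add_zero, one_pow]
  | succ k ih =>
    have hFj : degreeOf j (F j) ≤ 1 := by
      have h := (hF.degreeOf_systemIterate_self hs 1 j).le
      rwa [systemIterate_succ, systemIterate_zero, bind₁_X_left, AlgHom.id_apply] at h
    have hlt {l} (hl : l ∈ (F j).vars) (hlj : l ≠ j) : (j : ℕ) < l :=
      lt_of_le_of_ne (mem_supported.1 (hF.mem_supported_Ici j) hl) (Fin.val_ne_of_ne hlj.symm)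
    rw [systemIterate_succ]
    obtain hr | ⟨r, hr⟩ : (m - j : ℕ) = 0 ∨ ∃ r, (m - j : ℕ) = r + 1 :=
      Nat.eq_zero_or_eq_succ_pred _ |>.imp_right fun h ↦ ⟨_, h⟩
    · refine (totalDegree_bind₁_le_add_mul (B := 0) hFj (hdeg j) (ih j) fun l hl hlj ↦ ?_).trans_eq
        (by simp [hr])
      have := hlt hl hlj
      omega
    · have hB (l) (hl : l ∈ (F j).vars) (hlj : l ≠ j) :
          totalDegree (systemIterate F k l) ≤ (1 + d * k) ^ r := by
        have := hlt hl hlj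
        exact (ih l).trans (Nat.pow_le_pow_right (by omega) (by omega))
      calc _ ≤ (1 + d * k) ^ (m - j : ℕ) + d * (1 + d * k) ^ r :=
            totalDegree_bind₁_le_add_mul hFj (hdeg j) (ih j) hB
        _ = (1 + d * (k + 1)) * (1 + d * k) ^ r := by rw [hr]; ring
        _ ≤ (1 + d * (k + 1)) * (1 + d * (k + 1)) ^ r := by gcongr; omega
        _ = (1 + d * (k + 1)) ^ (m - j : ℕ) := by rw [hr, pow_succ']

end Domain

/-- The rate at which the `i`-th coordinate of `F^{(k)}` responds to a shift of the variable `X_i`,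
when `F_i = X_i G + H`. -/
noncomputable def shiftFactor (F : Fin (m + 1) → MvPolynomial (Fin (m + 1)) R)
    (G : MvPolynomial (Fin (m + 1)) R) (k : ℕ) : MvPolynomial (Fin (m + 1)) R :=
  ∏ r ∈ Finset.range k, bind₁ (systemIterate F r) G

section Domain

variable [IsDomain R]

lemma IsTriangularStep.sum_C_mul_shiftFactor_ne_zero (hF : IsFSystem m s F)
    (hstep : IsTriangularStep s i (F i) G H) (hs : ∀ i < m, s i (i + 1) ≠ 0) (hi : (i : ℕ) < m)
    {t : Finset ℕ} {c : ℕ → R} (hc : ∃ k ∈ t, c k ≠ 0) :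
    ∑ k ∈ t, C (c k) * shiftFactor F G k ≠ 0 := by
  let j : Fin (m + 1) := ⟨i + 1, by omega⟩
  have hdeg (r : ℕ) : degreeOf j (bind₁ (systemIterate F r) G) = s i j :=
    hstep.degreeOf_bind₁_systemIterate hF rfl (hs i hi) (hF.degreeOf_systemIterate_self hs r)
  have hne (r : ℕ) : bind₁ (systemIterate F r) G ≠ 0 := fun h ↦ hs i hi (by
    simpa [h] using (hdeg r).symm)
  refine sum_C_mul_ne_zero_of_strictMono_degreeOf (a := j) (by simp [shiftFactor]) ?_ hc
  refine strictMono_nat_of_lt_succ fun k ↦ ?_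
  rw [shiftFactor, shiftFactor, Finset.prod_range_succ, degreeOf_mul_eq
    (Finset.prod_ne_zero_iff.2 fun r _ ↦ hne r) (hne k), hdeg]
  exact Nat.lt_add_of_pos_right (Nat.pos_of_ne_zero (hs i hi))

lemma IsTriangularStep.totalDegree_shiftFactor_le (hF : IsFSystem m s F)
    (hstep : IsTriangularStep s i (F i) G H) (hs : ∀ i < m, s i (i + 1) ≠ 0)
    (hdeg : ∀ j, (F j).totalDegree ≤ d) (hi : (i : ℕ) < m) (k : ℕ) :
    totalDegree (shiftFactor F G k) ≤ (1 + d * k) ^ m := by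
  obtain ⟨r, hr⟩ : ∃ r, m = r + 1 := ⟨m - 1, by omega⟩
  have hG : totalDegree G ≤ d := by
    refine (totalDegree_le_totalDegree_X_mul_add fun h ↦ ?_).trans
      (hstep.eq_X_mul_add ▸ hdeg i)
    exact lt_irrefl i (mem_supported.1 hstep.right_mem h)
  have hfactor (t) (ht : t ∈ Finset.range k) :
      totalDegree (bind₁ (systemIterate F t) G) ≤ d * (1 + d * k) ^ r := by
    refine totalDegree_bind₁_le_mul hG fun l hl ↦ ?_
    have hil : (i : ℕ) < l := mem_supported.1 hstep.left_mem hl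
    calc _ ≤ (1 + d * t) ^ (m - l : ℕ) := hF.totalDegree_systemIterate_le hs hdeg t l
      _ ≤ (1 + d * k) ^ (m - l : ℕ) := by gcongr; exact (Finset.mem_range.1 ht).le
      _ ≤ (1 + d * k) ^ r := Nat.pow_le_pow_right (by omega) (by omega)
  calc totalDegree (shiftFactor F G k)
      ≤ ∑ t ∈ Finset.range k, totalDegree (bind₁ (systemIterate F t) G) :=
        totalDegree_finsetProd _ _
    _ ≤ k * (d * (1 + d * k) ^ r) := by
        simpa using Finset.sum_le_card_nsmul _ _ _ hfactor
    _ ≤ (1 + d * k) * (1 + d * k) ^ r := by nlinarith [Nat.zero_le ((1 + d * k) ^ r)]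
    _ = (1 + d * k) ^ m := by rw [hr, pow_succ']

lemma IsTriangularStep.totalDegree_sum_C_mul_shiftFactor_le (hF : IsFSystem m s F)
    (hstep : IsTriangularStep s i (F i) G H) (hs : ∀ i < m, s i (i + 1) ≠ 0)
    (hdeg : ∀ j, (F j).totalDegree ≤ d) (hi : (i : ℕ) < m) (c : ℕ → R) (K : ℕ) :
    totalDegree (∑ k ∈ Finset.range K, C (c k) * shiftFactor F G k) ≤ (1 + d * K) ^ m := by
  refine totalDegree_finsetSum_le fun k hk ↦ (totalDegree_mul _ _).trans ?_
  rw [totalDegree_C, zero_add]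
  refine (hstep.totalDegree_shiftFactor_le hF hs hdeg hi k).trans ?_
  gcongr
  exact (Finset.mem_range.1 hk).le

end Domain

end TriangularSystems

section CompleteSums

open scoped Finset

variable {R : Type*} [CommRing R] {m d k : ℕ} {s : ℕ → ℕ → ℕ}
  {F : Fin (m + 1) → MvPolynomial (Fin (m + 1)) R} {i j : Fin (m + 1)}
  {G H : MvPolynomial (Fin (m + 1)) R}

/-- The self-map of affine space given by a system of polynomials. -/
noncomputable def evalSystem (F : Fin (m + 1) → MvPolynomial (Fin (m + 1)) R)
    (w : Fin (m + 1) → R) : Fin (m + 1) → R := fun j ↦ eval w (F j)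

lemma iterate_evalSystem_apply (w : Fin (m + 1) → R) :
    (evalSystem F)^[k] w j = eval w (systemIterate F k j) := by
  induction k generalizing j with
  | zero => exact (eval_X j).symm
  | succ k ih =>
    rw [Function.iterate_succ_apply', evalSystem, funext fun l ↦ ih (j := l)]
    exact (eval₂Hom_bind₁ (RingHom.id _) w (systemIterate F k) (F j)).symm

lemma eval_add_single_of_mem_supported_Ioi {q : MvPolynomial (Fin (m + 1)) R}
    (hq : q ∈ supported R (Set.Ioi i)) (w : Fin (m + 1) → R) (t : R) :
    eval (w + Pi.single i t) q = eval w q :=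
  eval_add_single_of_notMem_vars (fun hi ↦ lt_irrefl i (mem_supported.1 hq hi)) w t

lemma IsFSystem.iterate_evalSystem_add_single_of_lt (hF : IsFSystem m s F) (hij : i < j)
    (w : Fin (m + 1) → R) (t : R) :
    (evalSystem F)^[k] (w + Pi.single i t) j = (evalSystem F)^[k] w j := by
  rw [iterate_evalSystem_apply, iterate_evalSystem_apply]
  exact eval_add_single_of_mem_supported_Ioi (supported_mono (Set.Ici_subset_Ioi.2 hij)
    (hF.systemIterate_mem_supported_Ici k j)) w t

lemma IsTriangularStep.iterate_evalSystem_add_single_self (hF : IsFSystem m s F)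
    (hstep : IsTriangularStep s i (F i) G H) (w : Fin (m + 1) → R) (t : R) :
    (evalSystem F)^[k] (w + Pi.single i t) i =
      (evalSystem F)^[k] w i + t * eval w (shiftFactor F G k) := by
  rw [iterate_evalSystem_apply, iterate_evalSystem_apply]
  induction k with
  | zero => simp [systemIterate_zero, shiftFactor]
  | succ k ih =>
    rw [hstep.systemIterate_succ_eq_mul_add, shiftFactor, Finset.prod_range_succ, ← shiftFactor]
    simp only [map_add, map_mul]
    rw [ih, eval_add_single_of_mem_supported_Ioi
        (hF.bind₁_systemIterate_mem_supported_Ioi k hstep.left_mem),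
      eval_add_single_of_mem_supported_Ioi
        (hF.bind₁_systemIterate_mem_supported_Ioi k hstep.right_mem)]
    ring

lemma IsTriangularStep.sum_mul_iterate_evalSystem_add_single (hF : IsFSystem m s F)
    (hstep : IsTriangularStep s i (F i) G H) {a : Fin (m + 1) → R} (ha : ∀ j < i, a j = 0)
    (w : Fin (m + 1) → R) (t : R) :
    ∑ j, a j * (evalSystem F)^[k] (w + Pi.single i t) j =
      ∑ j, a j * (evalSystem F)^[k] w j + t * (a i * eval w (shiftFactor F G k)) := by
  rw [← sub_eq_iff_eq_add', ← Finset.sum_sub_distrib, Finset.sum_eq_single i]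
  · rw [hstep.iterate_evalSystem_add_single_self hF]
    ring
  · intro j _ hji
    obtain hji | hij := hji.lt_or_gt
    · rw [ha j hji, zero_mul, zero_mul, sub_zero]
    · rw [hF.iterate_evalSystem_add_single_of_lt hij, sub_self]
  · exact fun h ↦ absurd (Finset.mem_univ i) h

variable {ψ : AddChar R ℂ}

lemma norm_sum_le_card_of_shift [Finite R] {W : Type*} [AddGroup W] [Fintype W] [DecidableEq R]
    (hψ : ψ.IsPrimitive) {f : W → ℂ} (hf : ∀ w, ‖f w‖ ≤ 1) {v : R → W} {q : W → R}
    (hshift : ∀ w t, f (w + v t) = f w * ψ (t * q w)) :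
    ‖∑ w, f w‖ ≤ #{w | q w = 0} := by
  have := Fintype.ofFinite R
  have hR : (Fintype.card R : ℂ) ≠ 0 := Nat.cast_ne_zero.2 Fintype.card_ne_zero
  have hsum (t : R) : ∑ w, f w = ∑ w, f w * ψ (t * q w) := by
    rw [← Equiv.sum_comp (Equiv.addRight (v t)) f]
    exact Finset.sum_congr rfl fun w _ ↦ hshift w t
  have havg : (Fintype.card R : ℂ) * ∑ w, f w = Fintype.card R * ∑ w with q w = 0, f w :=
    calc (Fintype.card R : ℂ) * ∑ w, f w = ∑ t : R, ∑ w, f w * ψ (t * q w) := by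
          rw [← Finset.sum_congr rfl fun t _ ↦ hsum t, Finset.sum_const, nsmul_eq_mul,
            Finset.card_univ]
      _ = ∑ w, f w * ∑ t : R, ψ (t * q w) := by simp_rw [Finset.mul_sum, Finset.sum_comm (γ := W)]
      _ = Fintype.card R * ∑ w with q w = 0, f w := by
          rw [Finset.sum_filter, Finset.mul_sum]
          refine Finset.sum_congr rfl fun w _ ↦ ?_
          rw [AddChar.sum_mulShift _ hψ]
          split_ifs <;> simp [mul_comm]
  rw [mul_left_cancel₀ hR havg]
  exact (norm_sum_le_of_le _ fun w _ ↦ hf w).trans_eq (by simp)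

variable [Fintype R] [IsDomain R]

lemma card_eval_eq_zero_le [DecidableEq R] {Q : MvPolynomial (Fin (m + 1)) R} (hQ : Q ≠ 0) :
    #{w : Fin (m + 1) → R | eval w Q = 0} ≤ totalDegree Q * Fintype.card R ^ m := by
  have hR : 0 < Fintype.card R := Fintype.card_pos
  have h := schwartz_zippel_totalDegree hQ Finset.univ
  rw [Finset.card_univ, Fintype.piFinset_univ,
    div_le_div_iff₀ (by positivity) (by exact_mod_cast hR)] at h
  refine Nat.le_of_mul_le_mul_right ?_ hR
  rw [mul_assoc, ← pow_succ]
  exact_mod_cast h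

lemma IsFSystem.norm_sum_addChar_iterate_le (hF : IsFSystem m s F)
    (hs : ∀ i < m, s i (i + 1) ≠ 0) (hdeg : ∀ j, (F j).totalDegree ≤ d) (hi : (i : ℕ) < m)
    {a : Fin (m + 1) → R} (hai : a i ≠ 0) (ha : ∀ j < i, a j = 0) {K : ℕ} {c : ℕ → R}
    (hc : ∃ k ∈ Finset.range K, c k ≠ 0) (hψ : ψ.IsPrimitive) :
    ‖∑ w, ψ (∑ k ∈ Finset.range K, c k * ∑ j, a j * (evalSystem F)^[k] w j)‖ ≤
      (1 + d * K) ^ m * Fintype.card R ^ m := by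
  classical
  obtain ⟨G, H, hstep⟩ := hF.exists_isTriangularStep hi
  set Q := ∑ k ∈ Finset.range K, C (c k) * shiftFactor F G k with hQ
  let f (w : Fin (m + 1) → R) : ℂ :=
    ψ (∑ k ∈ Finset.range K, c k * ∑ j, a j * (evalSystem F)^[k] w j)
  have hshift (w : Fin (m + 1) → R) (t : R) :
      f (w + Pi.single i t) = f w * ψ (t * (a i * eval w Q)) := by
    simp_rw [f, hstep.sum_mul_iterate_evalSystem_add_single hF ha, mul_add]
    rw [Finset.sum_add_distrib, AddChar.map_add_eq_mul, hQ, map_sum (eval w), Finset.mul_sum,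
      Finset.mul_sum]
    simp only [map_mul, eval_C, mul_left_comm]
  have hcard := norm_sum_le_card_of_shift (f := f) hψ (fun w ↦ (AddChar.norm_apply ψ _).le) hshift
  simp only [mul_eq_zero, hai, false_or] at hcard
  refine hcard.trans ?_
  have hzeros := card_eval_eq_zero_le (hstep.sum_C_mul_shiftFactor_ne_zero hF hs hi hc)
  exact_mod_cast hzeros.trans (Nat.mul_le_mul_right _
    (hstep.totalDegree_sum_C_mul_shiftFactor_le hF hs hdeg hi c K))

end CompleteSums

section FiberCards

open Finset

variable {ι α : Type*} [Fintype ι] [DecidableEq ι] [Fintype α] [DecidableEq α]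

lemma card_pairs_with_equal_fiber_cards_le :
    #{q : (ι → α) × (ι → α) | ∀ k, #{j | q.1 j = k} = #{j | q.2 j = k}} ≤
      Fintype.card α ^ Fintype.card ι * Fintype.card ι ^ Fintype.card ι := by
  calc #{q : (ι → α) × (ι → α) | ∀ k, #{j | q.1 j = k} = #{j | q.2 j = k}}
      ≤ #((univ : Finset ((ι → α) × (ι → ι))).image fun q ↦ (q.1, q.1 ∘ q.2)) := by
        refine card_le_card fun ⟨κ, κ'⟩ hq ↦ ?_
        have hfiber : ∀ j, ∃ j', κ j' = κ' j := fun j ↦ by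
          have hpos : 0 < #{l | κ' l = κ' j} := card_pos.2 ⟨j, by simp⟩
          rw [← (mem_filter.1 hq).2 (κ' j)] at hpos
          simpa [card_pos, filter_nonempty_iff] using hpos
        choose f hf using hfiber
        exact mem_image.2 ⟨(κ, f), mem_univ _, Prod.ext rfl (funext hf)⟩
    _ ≤ Fintype.card α ^ Fintype.card ι * Fintype.card ι ^ Fintype.card ι :=
        card_image_le.trans_eq (by simp)

end FiberCards

section Moments

open Finset

variable {ι α R : Type*} [Fintype ι] [Fintype α] [CommRing R] (ψ : AddChar R ℂ)

lemma addChar_sum_eq_prod (f : ι → R) : ψ (∑ j, f j) = ∏ j, ψ (f j) :=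
  map_prod ψ.toMonoidHom (fun j ↦ Multiplicative.ofAdd (f j)) univ

lemma sum_comp_eq_sum_card_fiber_mul [DecidableEq α] (κ : ι → α) (θ : α → R) :
    ∑ j, θ (κ j) = ∑ k, (#{j | κ j = k} : R) * θ k := by
  rw [← sum_fiberwise' univ κ θ]
  simp

lemma norm_sum_addChar_pow_two_mul [DecidableEq α] [Finite R] (ν : ℕ) (θ : α → R) :
    (‖∑ k, ψ (θ k)‖ ^ (2 * ν) : ℂ) = ∑ q : (Fin ν → α) × (Fin ν → α),
      ψ (∑ k, ((#{j | q.1 j = k} : R) - #{j | q.2 j = k}) * θ k) := by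
  rw [pow_mul, ← Complex.mul_conj', mul_pow, ← map_pow, Fintype.sum_pow, map_sum, sum_mul_sum,
    ← sum_product', univ_product_univ]
  refine sum_congr rfl fun q _ ↦ ?_
  simp_rw [sub_mul]
  rw [← addChar_sum_eq_prod, ← addChar_sum_eq_prod, ← AddChar.map_neg_eq_conj,
    ← AddChar.map_add_eq_mul, ← sub_eq_add_neg, sum_comp_eq_sum_card_fiber_mul,
    sum_comp_eq_sum_card_fiber_mul, sum_sub_distrib]

variable {ψ}

lemma sum_norm_sum_addChar_pow_le [Finite R] {p ν : ℕ} [CharP R p] {W : Type*} [Fintype W]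
    (Θ : W → α → R) (hν : ν < p) {B : ℝ} (hB : 0 ≤ B)
    (hΘ : ∀ c : α → R, c ≠ 0 → ‖∑ w, ψ (∑ k, c k * Θ w k)‖ ≤ B) :
    ∑ w, ‖∑ k, ψ (Θ w k)‖ ^ (2 * ν) ≤
      (Fintype.card α : ℝ) ^ ν * ν ^ ν * Fintype.card W + Fintype.card α ^ (2 * ν) * B := by
  classical
  let c (q : (Fin ν → α) × (Fin ν → α)) (k : α) : R := #{j | q.1 j = k} - #{j | q.2 j = k}
  have hterm (q) : ‖∑ w, ψ (∑ k, c q k * Θ w k)‖ ≤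
      (if c q = 0 then (Fintype.card W : ℝ) else 0) + B := by
    split_ifs with hq
    · simp [hq, hB]
    · simpa using hΘ _ hq
  have hdiag : #{q | c q = 0} ≤ Fintype.card α ^ ν * ν ^ ν := by
    have hlt (κ : Fin ν → α) (k : α) : #{j | κ j = k} < p :=
      ((card_le_univ _).trans_eq (Fintype.card_fin ν)).trans_lt hν
    have hiff (q) : c q = 0 ↔ ∀ k, #{j | q.1 j = k} = #{j | q.2 j = k} := by
      simp only [funext_iff, c, Pi.zero_apply, sub_eq_zero,
        (CharP.natCast_injOn_Iio R p).eq_iff (hlt _ _) (hlt _ _)]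
    simpa [hiff] using card_pairs_with_equal_fiber_cards_le (ι := Fin ν) (α := α)
  calc ∑ w, ‖∑ k, ψ (Θ w k)‖ ^ (2 * ν)
      = ‖∑ q, ∑ w, ψ (∑ k, c q k * Θ w k)‖ := by
        rw [sum_comm, ← sum_congr rfl fun w _ ↦ norm_sum_addChar_pow_two_mul ψ ν (Θ w)]
        norm_cast
        exact (abs_of_nonneg (by positivity)).symm
    _ ≤ ∑ q, ((if c q = 0 then (Fintype.card W : ℝ) else 0) + B) :=
        norm_sum_le_of_le _ fun q _ ↦ hterm q
    _ = #{q | c q = 0} * Fintype.card W + Fintype.card α ^ (2 * ν) * B := by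
        rw [sum_add_distrib, ← sum_filter, sum_const, sum_const, nsmul_eq_mul, nsmul_eq_mul]
        simp [two_mul, pow_add]
    _ ≤ (Fintype.card α : ℝ) ^ ν * ν ^ ν * Fintype.card W + Fintype.card α ^ (2 * ν) * B := by
        gcongr
        exact_mod_cast hdiag

end Moments

section ShiftedAverages

open Finset

variable {E : Type*} [NormedAddCommGroup E] {z : ℕ → E}

lemma norm_sum_range_sub_sum_range_add_le (hz : ∀ n, ‖z n‖ ≤ 1) (N k : ℕ) :
    ‖∑ n ∈ range N, z n - ∑ n ∈ range N, z (n + k)‖ ≤ 2 * k := by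
  have hswap : ∑ n ∈ range N, z n - ∑ n ∈ range N, z (n + k) =
      ∑ n ∈ range k, z n - ∑ n ∈ range k, z (N + n) := by
    have h := sum_range_add z N k
    rw [add_comm N k, sum_range_add] at h
    simp_rw [add_comm _ k]
    exact sub_eq_sub_iff_add_eq_add.2 h.symm
  have hk (y : ℕ → E) (hy : ∀ n, ‖y n‖ ≤ 1) : ‖∑ n ∈ range k, y n‖ ≤ k :=
    (norm_sum_le_of_le _ fun n _ ↦ hy n).trans_eq (by simp)
  rw [hswap, two_mul]
  exact (norm_sub_le _ _).trans (add_le_add (hk _ hz) (hk _ fun n ↦ hz _))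

variable [NormedSpace ℝ E]

lemma mul_norm_sum_range_le_sum_norm_shifted_sum (hz : ∀ n, ‖z n‖ ≤ 1) (N K : ℕ) :
    K * ‖∑ n ∈ range N, z n‖ ≤ ∑ n ∈ range N, ‖∑ k ∈ range K, z (n + k)‖ + 2 * (K : ℝ) ^ 2 := by
  have hsplit : (K : ℝ) • ∑ n ∈ range N, z n = ∑ n ∈ range N, ∑ k ∈ range K, z (n + k) +
      ∑ k ∈ range K, (∑ n ∈ range N, z n - ∑ n ∈ range N, z (n + k)) := by
    rw [sum_sub_distrib, sum_comm, sum_const, card_range, Nat.cast_smul_eq_nsmul, add_sub_cancel]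
  calc K * ‖∑ n ∈ range N, z n‖ = ‖(K : ℝ) • ∑ n ∈ range N, z n‖ := by simp [norm_smul]
    _ ≤ ∑ n ∈ range N, ‖∑ k ∈ range K, z (n + k)‖ + ∑ k ∈ range K, 2 * (K : ℝ) := by
        rw [hsplit]
        refine (norm_add_le _ _).trans (add_le_add (norm_sum_le _ _)
          (norm_sum_le_of_le _ fun k hk ↦ (norm_sum_range_sub_sum_range_add_le hz N k).trans ?_))
        have := (mem_range.1 hk).le
        gcongr
    _ = ∑ n ∈ range N, ‖∑ k ∈ range K, z (n + k)‖ + 2 * (K : ℝ) ^ 2 := by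
        rw [sum_const, card_range, nsmul_eq_mul]
        ring

lemma norm_sum_range_le_of_moment_le (hz : ∀ n, ‖z n‖ ≤ 1) {N K r : ℕ} (hK : 0 < K) (hr : r ≠ 0)
    {T : ℝ} (hT : 0 ≤ T)
    (hmom : ∑ n ∈ range N, ‖∑ k ∈ range K, z (n + k)‖ ^ r ≤ N * (K * T) ^ r) :
    ‖∑ n ∈ range N, z n‖ ≤ N * T + 2 * K := by
  obtain ⟨r, rfl⟩ := Nat.exists_eq_succ_of_ne_zero hr
  have hHolder : ∑ n ∈ range N, ‖∑ k ∈ range K, z (n + k)‖ ≤ N * (K * T) := by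
    obtain rfl | hN := N.eq_zero_or_pos
    · simp
    refine le_of_pow_le_pow_left₀ hr (by positivity) ?_
    have h := pow_sum_div_card_le_sum_pow (s := range N)
      (fun n _ ↦ norm_nonneg (∑ k ∈ range K, z (n + k))) r
    rw [card_range, div_le_iff₀ (by positivity)] at h
    calc (∑ n ∈ range N, ‖∑ k ∈ range K, z (n + k)‖) ^ (r + 1)
        ≤ N * (K * T) ^ (r + 1) * (N : ℝ) ^ r := h.trans (by gcongr)
      _ = (N * (K * T)) ^ (r + 1) := by ring
  refine le_of_mul_le_mul_left ((mul_norm_sum_range_le_sum_norm_shifted_sum hz N K).trans ?_)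
    (Nat.cast_pos.2 hK)
  linarith

end ShiftedAverages

section OrbitSums

open Finset

variable {R : Type*} [CommRing R] {m d : ℕ} {s : ℕ → ℕ → ℕ}
  {F : Fin (m + 1) → MvPolynomial (Fin (m + 1)) R} {u : ℕ → Fin (m + 1) → R} {i : Fin (m + 1)}
  {a : Fin (m + 1) → R}

lemma iterate_evalSystem_orbit (hu : ∀ n i, u (n + 1) i = eval (u n) (F i)) (n k : ℕ) :
    (evalSystem F)^[k] (u n) = u (n + k) := by
  induction k with
  | zero => rfl
  | succ k ih =>
    rw [Function.iterate_succ_apply', ih]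
    exact funext fun j ↦ (hu (n + k) j).symm

lemma IsFSystem.sum_norm_orbit_sum_pow_le [IsDomain R] [Fintype R] {p ν : ℕ} [CharP R p]
    (hν : ν < p) (hF : IsFSystem m s F) (hs : ∀ i < m, s i (i + 1) ≠ 0)
    (hdeg : ∀ j, (F j).totalDegree ≤ d) (hi : (i : ℕ) < m) (hai : a i ≠ 0)
    (ha : ∀ j < i, a j = 0) {ψ : AddChar R ℂ} (hψ : ψ.IsPrimitive)
    (hu : ∀ n i, u (n + 1) i = eval (u n) (F i)) {N : ℕ} (hinj : Set.InjOn u (range N)) (K : ℕ) :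
    ∑ n ∈ range N, ‖∑ k ∈ range K, ψ (∑ j, a j * u (n + k) j)‖ ^ (2 * ν) ≤
      (K : ℝ) ^ ν * ν ^ ν * Fintype.card R ^ (m + 1) +
        K ^ (2 * ν) * ((1 + d * K) ^ m * Fintype.card R ^ m) := by
  classical
  let Θ (w : Fin (m + 1) → R) (k : Fin K) : R := ∑ j, a j * (evalSystem F)^[k] w j
  have hΘ (c : Fin K → R) (hc : c ≠ 0) :
      ‖∑ w, ψ (∑ k, c k * Θ w k)‖ ≤ (1 + d * K) ^ m * Fintype.card R ^ m := by
    obtain ⟨k, hk⟩ := Function.ne_iff.1 hc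
    have hext (l : Fin K) : Function.extend Fin.val c 0 l = c l :=
      Fin.val_injective.extend_apply c 0 l
    simpa only [Finset.sum_range, hext] using hF.norm_sum_addChar_iterate_le hs hdeg hi hai ha
      (c := Function.extend Fin.val c 0) ⟨k, mem_range.2 k.2, (hext k).trans_ne hk⟩ hψ
  calc ∑ n ∈ range N, ‖∑ k ∈ range K, ψ (∑ j, a j * u (n + k) j)‖ ^ (2 * ν)
      = ∑ w ∈ (range N).image u, ‖∑ k, ψ (Θ w k)‖ ^ (2 * ν) := by
        rw [sum_image hinj]
        simp_rw [Θ, iterate_evalSystem_orbit hu, Finset.sum_range]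
    _ ≤ ∑ w, ‖∑ k, ψ (Θ w k)‖ ^ (2 * ν) :=
        sum_le_univ_sum_of_nonneg fun w ↦ by positivity
    _ ≤ _ := by
        simpa using sum_norm_sum_addChar_pow_le Θ hν (by positivity) hΘ

lemma moment_bound_le {P K N D : ℝ} {m d ν : ℕ} (hP : 0 ≤ P) (hK : 1 ≤ K) (hD : 1 ≤ D)
    (hPK : P ≤ (2 * K) ^ ν) (hKD : K ^ m ≤ D) (hN : P ^ m * D ^ 2 ≤ N) :
    K ^ ν * ν ^ ν * P ^ (m + 1) + K ^ (2 * ν) * ((1 + d * K) ^ m * P ^ m) ≤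
      N * (K ^ (2 * ν) * (((2 * ν) ^ ν + (1 + d) ^ m) * D⁻¹)) := by
  have := one_pos.trans_le hD
  have hdiag : K ^ ν * ν ^ ν * P ^ (m + 1) ≤ P ^ m * D * (K ^ (2 * ν) * (2 * ν) ^ ν) :=
    calc K ^ ν * ν ^ ν * P ^ (m + 1) = K ^ ν * ν ^ ν * (P ^ m * 1 * P) := by ring
      _ ≤ K ^ ν * ν ^ ν * (P ^ m * D * (2 * K) ^ ν) := by gcongr
      _ = P ^ m * D * (K ^ (2 * ν) * (2 * ν) ^ ν) := by
        rw [two_mul ν, pow_add, mul_pow, mul_pow]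
        ring
  have hoff : (1 + d * K) ^ m * P ^ m ≤ P ^ m * D * (1 + d) ^ m :=
    calc (1 + d * K) ^ m * P ^ m ≤ ((1 + d) * K) ^ m * P ^ m := by
          gcongr
          linarith
      _ = P ^ m * K ^ m * (1 + d) ^ m := by
        rw [mul_pow]
        ring
      _ ≤ P ^ m * D * (1 + d) ^ m := by gcongr
  calc K ^ ν * ν ^ ν * P ^ (m + 1) + K ^ (2 * ν) * ((1 + d * K) ^ m * P ^ m)
      ≤ P ^ m * D * (K ^ (2 * ν) * (2 * ν) ^ ν) + K ^ (2 * ν) * (P ^ m * D * (1 + d) ^ m) := by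
        gcongr
    _ = P ^ m * D ^ 2 * (K ^ (2 * ν) * (((2 * ν) ^ ν + (1 + d) ^ m) * D⁻¹)) := by
        field_simp
    _ ≤ N * (K ^ (2 * ν) * (((2 * ν) ^ ν + (1 + d) ^ m) * D⁻¹)) := by gcongr

lemma exists_nat_pow_le_rpow_of_le_two_mul_pow {m ν : ℕ} {ε η P : ℝ} (hη : 0 ≤ η)
    (hηm : η * m ≤ ε) (hην : 1 ≤ η * ν) (hP : 1 ≤ P) :
    ∃ K : ℕ, 0 < K ∧ (K : ℝ) ^ m ≤ P ^ ε ∧ P ≤ (2 * K) ^ ν := by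
  have hP0 : 0 ≤ P := zero_le_one.trans hP
  have hx : 1 ≤ P ^ η := Real.one_le_rpow hP hη
  have hfloor : 1 ≤ ⌊P ^ η⌋₊ := (Nat.one_le_floor_iff _).2 hx
  refine ⟨⌊P ^ η⌋₊, hfloor, ?_, ?_⟩
  · calc (⌊P ^ η⌋₊ : ℝ) ^ m ≤ (P ^ η) ^ m := by
          gcongr
          exact Nat.floor_le (by positivity)
      _ = P ^ (η * m) := (Real.rpow_mul_natCast hP0 η m).symm
      _ ≤ P ^ ε := Real.rpow_le_rpow_of_exponent_le hP hηm
  · calc P = P ^ (1 : ℝ) := (Real.rpow_one P).symm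
      _ ≤ P ^ (η * ν) := Real.rpow_le_rpow_of_exponent_le hP hην
      _ = (P ^ η) ^ ν := Real.rpow_mul_natCast hP0 η ν
      _ ≤ (2 * ⌊P ^ η⌋₊) ^ ν := by
        gcongr
        have := Nat.lt_floor_add_one (P ^ η)
        have : (1 : ℝ) ≤ ⌊P ^ η⌋₊ := by exact_mod_cast hfloor
        linarith

lemma IsFSystem.norm_sum_orbit_le [IsDomain R] [Fintype R] {p ν : ℕ} [CharP R p]
    (hν : ν < p) (hν0 : ν ≠ 0) (hm : m ≠ 0) (hF : IsFSystem m s F)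
    (hs : ∀ i < m, s i (i + 1) ≠ 0) (hdeg : ∀ j, (F j).totalDegree ≤ d) (hi : (i : ℕ) < m)
    (hai : a i ≠ 0) (ha : ∀ j < i, a j = 0) {ψ : AddChar R ℂ} (hψ : ψ.IsPrimitive)
    (hu : ∀ n i, u (n + 1) i = eval (u n) (F i)) {N : ℕ} (hinj : Set.InjOn u (range N))
    {K : ℕ} (hK : 0 < K) {D : ℝ} (hD : 1 ≤ D) (hKD : (K : ℝ) ^ m ≤ D)
    (hRK : (Fintype.card R : ℝ) ≤ (2 * K) ^ ν) (hN : (Fintype.card R : ℝ) ^ m * D ^ 2 ≤ N)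
    {δ : ℝ} (hδ0 : 0 ≤ δ) (hδ1 : δ ≤ 1) (hδD : δ ^ (2 * ν) = D⁻¹) :
    ‖∑ n ∈ range N, ψ (∑ j, a j * u n j)‖ ≤ N * (((2 * ν) ^ ν + (1 + d) ^ m + 2) * δ) := by
  have hK1 : (1 : ℝ) ≤ K := by exact_mod_cast hK
  have hR1 : (1 : ℝ) ≤ Fintype.card R := by exact_mod_cast Fintype.card_pos (α := R)
  set A : ℝ := (2 * ν) ^ ν + (1 + d) ^ m
  have hA1 : 1 ≤ A := le_add_of_nonneg_of_le (by positivity) (one_le_pow₀ (by simp))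
  have hKN : (K : ℝ) ≤ N * δ :=
    calc (K : ℝ) ≤ K ^ m := le_self_pow₀ hK1 hm
      _ ≤ D := hKD
      _ ≤ Fintype.card R ^ m * D := le_mul_of_one_le_left (by positivity) (one_le_pow₀ hR1)
      _ = Fintype.card R ^ m * D ^ 2 * δ ^ (2 * ν) := by
        rw [hδD]
        field_simp
      _ ≤ N * δ := by
        gcongr
        exact pow_le_of_le_one hδ0 hδ1 (by positivity)
  have hmom : ∑ n ∈ range N, ‖∑ k ∈ range K, ψ (∑ j, a j * u (n + k) j)‖ ^ (2 * ν) ≤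
      N * (K * (A * δ)) ^ (2 * ν) :=
    calc _ ≤ N * (K ^ (2 * ν) * (A * D⁻¹)) :=
          (hF.sum_norm_orbit_sum_pow_le hν hs hdeg hi hai ha hψ hu hinj K).trans
            (moment_bound_le (by positivity) hK1 hD hRK hKD hN)
      _ ≤ N * (K ^ (2 * ν) * (A ^ (2 * ν) * D⁻¹)) := by
        gcongr
        exact le_self_pow₀ hA1 (by positivity)
      _ = N * (K * (A * δ)) ^ (2 * ν) := by rw [← hδD, mul_pow, mul_pow]
  calc ‖∑ n ∈ range N, ψ (∑ j, a j * u n j)‖ ≤ N * (A * δ) + 2 * K :=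
        norm_sum_range_le_of_moment_le (fun n ↦ (AddChar.norm_apply ψ _).le) hK (by positivity)
          (by positivity) hmom
    _ ≤ N * (A * δ) + 2 * (N * δ) := by gcongr
    _ = N * ((A + 2) * δ) := by ring

theorem exists_norm_sum_orbit_le {m : ℕ} (hm : m ≠ 0) (d : ℕ) {ε : ℝ} (hε : 0 < ε) :
    ∃ γ C : ℝ, 0 < γ ∧ ∀ᶠ p : ℕ in Filter.atTop, ∀ [Fact p.Prime] {s : ℕ → ℕ → ℕ}
      {F : Fin (m + 1) → MvPolynomial (Fin (m + 1)) (ZMod p)}, IsFSystem m s F →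
      (∀ i < m, s i (i + 1) ≠ 0) → (∀ j, (F j).totalDegree ≤ d) →
      ∀ {u : ℕ → Fin (m + 1) → ZMod p}, (∀ n i, u (n + 1) i = eval (u n) (F i)) →
      ∀ {N : ℕ}, Set.InjOn u (range N) → (p : ℝ) ^ (m + ε) ≤ N →
      ∀ {i : Fin (m + 1)}, (i : ℕ) < m → ∀ {a : Fin (m + 1) → ZMod p}, a i ≠ 0 →
      (∀ j < i, a j = 0) → ∀ {ψ : AddChar (ZMod p) ℂ}, ψ ≠ 1 →
      ‖∑ n ∈ range N, ψ (∑ j, a j * u n j)‖ ≤ N * (C * (p : ℝ) ^ (-γ)) := by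
  set η : ℝ := ε / 2 / m
  have hη0 : 0 < η := by positivity
  obtain ⟨ν, hν⟩ := exists_nat_gt (1 / η)
  have hν0 : 0 < ν := Nat.cast_pos.1 ((by positivity : 0 < 1 / η).trans hν)
  have hην : 1 ≤ η * ν := by
    rw [div_lt_iff₀ hη0] at hν
    linarith
  refine ⟨ε / (4 * ν), (2 * ν) ^ ν + (1 + d) ^ m + 2, by positivity, ?_⟩
  filter_upwards [Filter.eventually_gt_atTop ν]
  intro p hνp _ s F hF hs hdeg u hu N hinj hN i hi a hai ha ψ hψ
  have hp1 : (1 : ℝ) ≤ p := by exact_mod_cast (Fact.out : p.Prime).one_le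
  have hp0 : (0 : ℝ) < p := one_pos.trans_le hp1
  obtain ⟨K, hK, hKD, hpK⟩ := exists_nat_pow_le_rpow_of_le_two_mul_pow hη0.le
    (div_mul_cancel₀ _ (Nat.cast_ne_zero.2 hm)).le hην hp1
  have hN' : (p : ℝ) ^ m * (p ^ (ε / 2) : ℝ) ^ 2 ≤ N := by
    rwa [← Real.rpow_mul_natCast hp0.le, ← Real.rpow_natCast (p : ℝ) m, ← Real.rpow_add hp0,
      Nat.cast_two, div_mul_cancel₀ ε two_ne_zero]
  have hδD : ((p : ℝ) ^ (-(ε / (4 * ν)))) ^ (2 * ν) = ((p : ℝ) ^ (ε / 2))⁻¹ := by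
    rw [← Real.rpow_mul_natCast hp0.le, ← Real.rpow_neg hp0.le]
    congr 1
    push_cast
    field_simp
    ring
  exact hF.norm_sum_orbit_le hνp hν0.ne' hm hs hdeg hi hai ha (.of_ne_one hψ) hu hinj hK
    (Real.one_le_rpow hp1 (by positivity)) hKD (by rwa [ZMod.card]) (by rwa [ZMod.card])
    (by positivity) (Real.rpow_le_one_of_one_le_of_nonpos hp1 (neg_nonpos.2 (by positivity))) hδD

end OrbitSums

section DiscreteFourierTransform

open Finset ZMod

variable {q : ℕ} [NeZero q]

lemma four_mul_abs_valMinAbs_le (a : ZMod q) :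
    4 * |(a.valMinAbs : ℝ)| ≤ q * ‖stdAddChar a - 1‖ := by
  have hq : (0 : ℝ) < q := Nat.cast_pos.2 (NeZero.pos q)
  have hnorm : ‖stdAddChar a - 1‖ = 2 * |Real.sin (Real.pi * a.valMinAbs / q)| := by
    have hexp : stdAddChar a =
        Complex.exp (Complex.I * (2 * Real.pi * a.valMinAbs / q : ℝ)) := by
      conv_lhs => rw [← coe_valMinAbs a, stdAddChar_coe]
      push_cast
      ring_nf
    rw [hexp, Complex.norm_exp_I_mul_ofReal_sub_one, Real.norm_eq_abs, abs_mul, abs_two]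
    ring_nf
  have habs : |(a.valMinAbs : ℝ)| * 2 ≤ q := by
    have hmem := valMinAbs_mem_Ioc a
    have : |a.valMinAbs| * 2 ≤ q := by
      rw [← abs_two, ← abs_mul]
      exact abs_le.2 ⟨hmem.1.le, hmem.2⟩
    exact_mod_cast this
  have hangle : |Real.pi * a.valMinAbs / q| = Real.pi * |(a.valMinAbs : ℝ)| / q := by
    rw [abs_div, abs_mul, abs_of_pos Real.pi_pos, abs_of_pos hq]
  have hsin := Real.mul_abs_le_abs_sin (x := Real.pi * a.valMinAbs / q) <| by
    rw [hangle, div_le_div_iff₀ hq two_pos, mul_assoc]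
    gcongr
  rw [hangle] at hsin
  have hπ : 2 / Real.pi * (Real.pi * |(a.valMinAbs : ℝ)| / q) = 2 * |(a.valMinAbs : ℝ)| / q := by
    field_simp
  rw [hπ, div_le_iff₀ hq] at hsin
  rw [hnorm]
  linarith

lemma inv_abs_valMinAbs_le (a : ZMod q) :
    |(a.valMinAbs : ℝ)|⁻¹ ≤ (a.val : ℝ)⁻¹ + ((-a).val : ℝ)⁻¹ := by
  obtain rfl | ha := eq_or_ne a 0
  · simp
  have := NeZero.mk ha
  have habs : |(a.valMinAbs : ℝ)| = (min a.val (-a).val : ℕ) := by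
    rw [val_neg_of_ne_zero, ← valMinAbs_natAbs_eq_min, Nat.cast_natAbs, Int.cast_abs]
  rw [habs]
  obtain h | h := min_choice a.val (-a).val <;> rw [h]
  · exact le_add_of_nonneg_right (by positivity)
  · exact le_add_of_nonneg_left (by positivity)

lemma sum_inv_val_le : ∑ a : ZMod q, (a.val : ℝ)⁻¹ ≤ 1 + Real.log q := by
  obtain ⟨n, rfl⟩ := Nat.exists_eq_succ_of_ne_zero (NeZero.ne q)
  calc ∑ a : ZMod (n + 1), (a.val : ℝ)⁻¹ = ∑ r ∈ range (n + 1), (r : ℝ)⁻¹ :=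
        Fin.sum_univ_eq_sum_range (fun r ↦ (r : ℝ)⁻¹) (n + 1)
    _ = harmonic n := by
        rw [sum_range_succ', harmonic]
        push_cast
        simp
    _ ≤ harmonic (n + 1) := by
        exact_mod_cast harmonic_succ n ▸ le_add_of_nonneg_right (by positivity)
    _ ≤ 1 + Real.log ↑(n + 1) := harmonic_le_one_add_log _

lemma norm_geom_sum_Ico_le {z : ℂ} (hz : ‖z‖ = 1) (hz1 : z ≠ 1) {k l : ℕ} (hkl : k ≤ l) :
    ‖∑ n ∈ Ico k l, z ^ n‖ ≤ 2 / ‖z - 1‖ := by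
  rw [geom_sum_Ico hz1 hkl, norm_div]
  gcongr
  refine (norm_sub_le _ _).trans_eq ?_
  rw [norm_pow, norm_pow, hz, one_pow, one_pow, one_add_one_eq_two]

lemma norm_sum_prod_sub_prod_sum_le {ι κ : Type*} [Fintype ι] {S : Finset κ}
    {v : κ → ι → ZMod q} {M : ℝ}
    (hM : ∀ a : ι → ZMod q, a ≠ 0 → ‖∑ n ∈ S, stdAddChar (∑ j, a j * v n j)‖ ≤ M)
    (hM0 : 0 ≤ M) (f : ι → ZMod q → ℂ) :
    ‖∑ n ∈ S, ∏ j, f j (v n j) - #S * ∏ j, (q : ℂ)⁻¹ * ∑ x, f j x‖ ≤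
      M * ∏ j, (q : ℝ)⁻¹ * ∑ a, ‖𝓕 (f j) a‖ := by
  classical
  let c (j : ι) (a : ZMod q) : ℂ := (q : ℂ)⁻¹ * 𝓕 (f j) a
  let e (a : ι → ZMod q) : ℂ := ∑ n ∈ S, stdAddChar (∑ j, a j * v n j)
  have hinv (j : ι) (y : ZMod q) : f j y = ∑ a, c j a * stdAddChar (a * y) := by
    conv_lhs => rw [← dft.symm_apply_apply (f j), invDFT_apply, smul_eq_mul, mul_sum]
    refine sum_congr rfl fun a _ ↦ ?_
    rw [smul_eq_mul]
    ring
  have hexpand : ∑ n ∈ S, ∏ j, f j (v n j) = ∑ a : ι → ZMod q, (∏ j, c j (a j)) * e a := by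
    simp_rw [e, mul_sum]
    rw [sum_comm]
    refine sum_congr rfl fun n _ ↦ ?_
    rw [prod_congr rfl fun j _ ↦ hinv j (v n j), prod_univ_sum, Fintype.piFinset_univ]
    exact sum_congr rfl fun a _ ↦ by rw [prod_mul_distrib, addChar_sum_eq_prod]
  have hzero : #S * ∏ j, (q : ℂ)⁻¹ * ∑ x, f j x = (∏ j, c j 0) * e 0 := by
    simp [c, e, dft_apply_zero, mul_comm]
  calc ‖∑ n ∈ S, ∏ j, f j (v n j) - #S * ∏ j, (q : ℂ)⁻¹ * ∑ x, f j x‖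
      = ‖∑ a ∈ univ.erase (0 : ι → ZMod q), (∏ j, c j (a j)) * e a‖ := by
        rw [hexpand, hzero, ← add_sum_erase univ _ (mem_univ (0 : ι → ZMod q))]
        simp
    _ ≤ ∑ a ∈ univ.erase (0 : ι → ZMod q), (∏ j, ‖c j (a j)‖) * M := by
        refine norm_sum_le_of_le _ fun a ha ↦ ?_
        rw [norm_mul, norm_prod]
        gcongr
        exact hM a (ne_of_mem_erase ha)
    _ ≤ ∑ a : ι → ZMod q, (∏ j, ‖c j (a j)‖) * M :=
        sum_le_univ_sum_of_nonneg fun a ↦ by positivity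
    _ = M * ∏ j, ∑ a, ‖c j a‖ := by
        rw [← sum_mul, mul_comm, prod_univ_sum, Fintype.piFinset_univ]
    _ = M * ∏ j, (q : ℝ)⁻¹ * ∑ a, ‖𝓕 (f j) a‖ := by
        simp [c, mul_sum]

end DiscreteFourierTransform

section Discrepancy

open Finset ZMod

variable {q : ℕ} [NeZero q] {α β : ℝ}

variable (q α β) in
/-- The residues `x` modulo `q` with `x / q ∈ [α, β)`, where `x` is represented in `[0, q)`. -/
noncomputable def residueInterval : Finset (ZMod q) :=
  {x | α ≤ (x.val : ℝ) / q ∧ (x.val : ℝ) / q < β}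

lemma sum_residueInterval {M : Type*} [AddCommMonoid M] (hβ : β ≤ 1) (f : ZMod q → M) :
    ∑ x ∈ residueInterval q α β, f x = ∑ k ∈ Ico ⌈α * q⌉₊ ⌈β * q⌉₊, f k := by
  have hq : (0 : ℝ) < q := Nat.cast_pos.2 (NeZero.pos q)
  have hβq : ⌈β * q⌉₊ ≤ q := Nat.ceil_le.2 (mul_le_of_le_one_left hq.le hβ)
  have hval {k : ℕ} (hk : k ∈ Ico ⌈α * q⌉₊ ⌈β * q⌉₊) : (k : ZMod q).val = k :=
    val_cast_of_lt ((mem_Ico.1 hk).2.trans_le hβq)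
  refine sum_bij' (fun x _ ↦ x.val) (fun k _ ↦ (k : ZMod q)) (fun x hx ↦ ?_) (fun k hk ↦ ?_)
    (fun x _ ↦ natCast_zmod_val x) (fun k hk ↦ hval hk) fun x _ ↦ by rw [natCast_zmod_val]
  · simpa only [residueInterval, mem_filter_univ, le_div_iff₀ hq, div_lt_iff₀ hq, mem_Ico,
      Nat.ceil_le, Nat.lt_ceil] using hx
  · simpa only [residueInterval, mem_filter_univ, hval hk, le_div_iff₀ hq, div_lt_iff₀ hq,
      mem_Ico, Nat.ceil_le, Nat.lt_ceil] using hk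

lemma card_residueInterval_div_le_one : (#(residueInterval q α β) : ℝ) / q ≤ 1 := by
  refine div_le_one_of_le₀ (Nat.cast_le.2 ?_) q.cast_nonneg
  exact (card_le_univ _).trans_eq (ZMod.card q)

lemma abs_card_residueInterval_div_sub_le (hα : 0 ≤ α) (hαβ : α ≤ β) (hβ : β ≤ 1) :
    |(#(residueInterval q α β) : ℝ) / q - (β - α)| ≤ 1 / q := by
  have hq : (0 : ℝ) < q := Nat.cast_pos.2 (NeZero.pos q)
  have hcard : #(residueInterval q α β) = ⌈β * q⌉₊ - ⌈α * q⌉₊ := by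
    simpa using sum_residueInterval (q := q) (α := α) hβ fun _ ↦ (1 : ℕ)
  rw [hcard, Nat.cast_sub (by gcongr)]
  have hα_le := Nat.le_ceil (α * q)
  have hα_lt := Nat.ceil_lt_add_one (a := α * q) (by positivity)
  have hβ_le := Nat.le_ceil (β * q)
  have hβ_lt := Nat.ceil_lt_add_one (a := β * q) (mul_nonneg (hα.trans hαβ) hq.le)
  rw [div_sub' hq.ne', abs_div, abs_of_pos hq]
  gcongr
  rw [abs_le]
  constructor <;> linarith

lemma norm_dft_residueInterval_le (hαβ : α ≤ β) (hβ : β ≤ 1) {a : ZMod q} (ha : a ≠ 0) :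
    ‖𝓕 (fun x ↦ if x ∈ residueInterval q α β then (1 : ℂ) else 0) a‖ ≤
      q / 2 * ((a.val : ℝ)⁻¹ + ((-a).val : ℝ)⁻¹) := by
  have hgeom : 𝓕 (fun x ↦ if x ∈ residueInterval q α β then (1 : ℂ) else 0) a =
      ∑ k ∈ Ico ⌈α * q⌉₊ ⌈β * q⌉₊, stdAddChar (-a) ^ k := by
    simp only [dft_apply, smul_eq_mul, mul_ite, mul_one, mul_zero, sum_ite_mem, univ_inter]
    rw [sum_residueInterval hβ]
    refine sum_congr rfl fun k _ ↦ ?_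
    rw [← AddChar.map_nsmul_eq_pow, nsmul_eq_mul, mul_neg]
  have hne : stdAddChar (-a) ≠ 1 := fun h ↦
    ha (neg_eq_zero.1 (injective_stdAddChar (h.trans (AddChar.map_zero_eq_one _).symm)))
  have habs : 0 < |((-a).valMinAbs : ℝ)| := by
    simpa [valMinAbs_eq_zero] using ha
  rw [hgeom]
  calc ‖∑ k ∈ Ico ⌈α * q⌉₊ ⌈β * q⌉₊, stdAddChar (-a) ^ k‖
      ≤ 2 / ‖stdAddChar (-a) - 1‖ :=
        norm_geom_sum_Ico_le (AddChar.norm_apply _ _) hne (by gcongr)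
    _ ≤ q / 2 * |((-a).valMinAbs : ℝ)|⁻¹ := by
        rw [← div_eq_mul_inv, div_div,
          div_le_div_iff₀ (norm_pos_iff.2 (sub_ne_zero.2 hne)) (by positivity)]
        linarith [four_mul_abs_valMinAbs_le (-a)]
    _ ≤ q / 2 * ((a.val : ℝ)⁻¹ + ((-a).val : ℝ)⁻¹) := by
        gcongr
        simpa only [neg_neg, add_comm] using inv_abs_valMinAbs_le (-a)

lemma sum_norm_dft_residueInterval_le (hαβ : α ≤ β) (hβ : β ≤ 1) :
    (q : ℝ)⁻¹ * ∑ a, ‖𝓕 (fun x ↦ if x ∈ residueInterval q α β then (1 : ℂ) else 0) a‖ ≤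
      2 + Real.log q := by
  have hq : (0 : ℝ) < q := Nat.cast_pos.2 (NeZero.pos q)
  set f : ZMod q → ℂ := fun x ↦ if x ∈ residueInterval q α β then 1 else 0 with hf
  have hzero : ‖𝓕 f 0‖ ≤ q := by
    have := (div_le_one hq).1 (card_residueInterval_div_le_one (q := q) (α := α) (β := β))
    simpa [hf, dft_apply_zero] using this
  have hterm (a : ZMod q) : ‖𝓕 f a‖ ≤
      (if a = 0 then (q : ℝ) else 0) + q / 2 * ((a.val : ℝ)⁻¹ + ((-a).val : ℝ)⁻¹) := by
    obtain rfl | ha := eq_or_ne a 0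
    · simpa using hzero
    · simpa [ha] using norm_dft_residueInterval_le hαβ hβ ha
  have hneg : ∑ a : ZMod q, ((-a).val : ℝ)⁻¹ = ∑ a : ZMod q, (a.val : ℝ)⁻¹ :=
    Fintype.sum_equiv (Equiv.neg (ZMod q)) _ _ fun _ ↦ rfl
  calc (q : ℝ)⁻¹ * ∑ a, ‖𝓕 f a‖
      ≤ (q : ℝ)⁻¹ *
          ∑ a : ZMod q, ((if a = 0 then (q : ℝ) else 0) +
            q / 2 * ((a.val : ℝ)⁻¹ + ((-a).val : ℝ)⁻¹)) := by
        gcongr with a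
        exact hterm a
    _ = 1 + ∑ a : ZMod q, (a.val : ℝ)⁻¹ := by
        rw [sum_add_distrib, ← mul_sum, sum_add_distrib, hneg, sum_ite_eq' univ,
          if_pos (mem_univ _)]
        field_simp
        ring
    _ ≤ 2 + Real.log q := by linarith [sum_inv_val_le (q := q)]

lemma abs_prod_sub_prod_le {ι : Type*} (S : Finset ι) {x y : ι → ℝ} {δ : ℝ}
    (hx : ∀ i, x i ∈ Set.Icc 0 1) (hy : ∀ i, y i ∈ Set.Icc 0 1) (h : ∀ i, |x i - y i| ≤ δ) :
    |∏ i ∈ S, x i - ∏ i ∈ S, y i| ≤ #S * δ := by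
  induction S using Finset.cons_induction with
  | empty => simp
  | cons a S ha ih =>
    rw [prod_cons, prod_cons, card_cons]
    calc |x a * ∏ i ∈ S, x i - y a * ∏ i ∈ S, y i|
        = |x a * (∏ i ∈ S, x i - ∏ i ∈ S, y i) + (x a - y a) * ∏ i ∈ S, y i| := by ring_nf
      _ ≤ x a * |∏ i ∈ S, x i - ∏ i ∈ S, y i| + |x a - y a| * ∏ i ∈ S, y i := by
          refine (abs_add_le _ _).trans_eq ?_
          rw [abs_mul, abs_mul, abs_of_nonneg (hx a).1,
            abs_of_nonneg (prod_nonneg fun i _ ↦ (hy i).1)]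
      _ ≤ 1 * (#S * δ) + δ * 1 := by
          gcongr
          · exact (hx a).2
          · exact prod_nonneg fun i _ ↦ (hy i).1
          · exact (abs_nonneg _).trans (h a)
          · exact h a
          · exact prod_le_one (fun i _ ↦ (hy i).1) fun i _ ↦ (hy i).2
      _ = ((#S + 1 : ℕ) : ℝ) * δ := by
          push_cast
          ring

lemma discrepancy_le {s N : ℕ} {P : ℕ → Fin s → ℝ} {δ : ℝ}
    (h : ∀ a b : Fin s → ℝ, (∀ j, 0 ≤ a j ∧ a j ≤ b j ∧ b j ≤ 1) →
      |(#{n ∈ range N | ∀ j, a j ≤ P n j ∧ P n j < b j} : ℝ) / N - ∏ j, (b j - a j)| ≤ δ) :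
    discrepancy s N P ≤ δ := by
  refine csSup_le ⟨_, 0, 0, fun j ↦ by simp, rfl⟩ ?_
  rintro _ ⟨a, b, hab, rfl⟩
  exact h a b hab

lemma discrepancy_le_one (s N : ℕ) (P : ℕ → Fin s → ℝ) : discrepancy s N P ≤ 1 := by
  refine discrepancy_le fun a b hab ↦ abs_sub_le_of_nonneg_of_le (by positivity) ?_
    (prod_nonneg fun j _ ↦ sub_nonneg.2 (hab j).2.1)
    (prod_le_one (fun j _ ↦ sub_nonneg.2 (hab j).2.1) fun j _ ↦ ?_)
  · refine div_le_one_of_le₀ (Nat.cast_le.2 ?_) N.cast_nonneg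
    exact (card_filter_le _ _).trans_eq (card_range N)
  · linarith [(hab j).1, (hab j).2.2]

theorem discrepancy_val_div_le {s N : ℕ} (hN : 0 < N) {v : ℕ → Fin s → ZMod q} {δ : ℝ}
    (hδ : 0 ≤ δ)
    (h : ∀ a : Fin s → ZMod q, a ≠ 0 →
      ‖∑ n ∈ range N, stdAddChar (∑ j, a j * v n j)‖ ≤ N * δ) :
    discrepancy s N (fun n j ↦ ((v n j).val : ℝ) / q) ≤
      δ * (2 + Real.log q) ^ s + s * (1 / q) := by
  refine discrepancy_le fun α β hαβ ↦ ?_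
  set T : ℕ := #{n ∈ range N | ∀ j, α j ≤ ((v n j).val : ℝ) / q ∧ ((v n j).val : ℝ) / q < β j}
  let I (j : Fin s) : Finset (ZMod q) := residueInterval q (α j) (β j)
  let V : ℝ := ∏ j, (#(I j) : ℝ) / q
  have hN0 : (0 : ℝ) < N := Nat.cast_pos.2 hN
  have hcount : |(T : ℝ) - N * V| ≤ N * δ * (2 + Real.log q) ^ s := by
    have hT : ∑ n ∈ range N, ∏ j, (if v n j ∈ I j then (1 : ℂ) else 0) = T := by
      simp [T, I, residueInterval, prod_ite_zero]
    have hV : ∏ j, (q : ℂ)⁻¹ * ∑ x, (if x ∈ I j then (1 : ℂ) else 0) = V := by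
      push_cast [V]
      exact prod_congr rfl fun j _ ↦ by simp [div_eq_inv_mul]
    have hfourier := norm_sum_prod_sub_prod_sum_le h (by positivity) fun j x ↦
      if x ∈ I j then (1 : ℂ) else 0
    rw [hT, hV, card_range, ← Complex.ofReal_natCast, ← Complex.ofReal_natCast,
      ← Complex.ofReal_mul, ← Complex.ofReal_sub, Complex.norm_real, Real.norm_eq_abs] at hfourier
    refine hfourier.trans ?_
    gcongr
    refine (prod_le_prod (fun j _ ↦ by positivity) fun j _ ↦
      sum_norm_dft_residueInterval_le (hαβ j).2.1 (hαβ j).2.2).trans_eq ?_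
    rw [prod_const, card_univ, Fintype.card_fin]
  have hdensity : |(T : ℝ) / N - V| ≤ δ * (2 + Real.log q) ^ s := by
    rw [div_sub' hN0.ne', abs_div, abs_of_pos hN0, div_le_iff₀ hN0]
    exact hcount.trans_eq (by ring)
  have hvolume : |V - ∏ j, (β j - α j)| ≤ s * (1 / q) := by
    simpa only [card_univ, Fintype.card_fin] using abs_prod_sub_prod_le univ
      (fun j ↦ ⟨by positivity, card_residueInterval_div_le_one⟩)
      (fun j ↦ ⟨sub_nonneg.2 (hαβ j).2.1, by linarith [(hαβ j).1, (hαβ j).2.2]⟩)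
      fun j ↦ abs_card_residueInterval_div_sub_le (q := q) (hαβ j).1 (hαβ j).2.1 (hαβ j).2.2
  exact (abs_sub_le _ V _).trans (add_le_add hdensity hvolume)

end Discrepancy

section TriangularOrbits

open Finset

lemma injOn_range_of_minimal_period {α : Type*} {f : α → α} {u : ℕ → α}
    (hu : ∀ n, u (n + 1) = f (u n)) {τ : ℕ} (hτ : 0 < τ) (hper : ∀ n, u (n + τ) = u n)
    (hmin : ∀ t, 0 < t → (∀ n, u (n + t) = u n) → τ ≤ t) :
    Set.InjOn u (range τ) := by
  have hiter (n t : ℕ) : u (n + t) = f^[n] (u t) := by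
    induction n with
    | zero => simp
    | succ n ih => rw [Nat.succ_add, hu, ih, Function.iterate_succ_apply']
  have hu_eq : u = fun n ↦ f^[n] (u 0) := funext fun n ↦ hiter n 0
  have hτper : Function.IsPeriodicPt f τ (u 0) := by
    rw [Function.IsPeriodicPt, Function.IsFixedPt, ← hiter, add_comm, hper]
  have hτ_le : τ ≤ Function.minimalPeriod f (u 0) :=
    hmin _ (hτper.minimalPeriod_pos hτ) fun n ↦ by
      have hfix : u (Function.minimalPeriod f (u 0)) = u 0 := by
        rw [← add_zero (Function.minimalPeriod f (u 0)), hiter]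
        exact Function.isPeriodicPt_minimalPeriod f (u 0)
      rw [hiter, hfix, ← hiter, add_zero]
  rw [hu_eq, coe_range]
  exact Function.iterate_injOn_Iio_minimalPeriod.mono (Set.Iio_subset_Iio hτ_le)

lemma card_le_card_image_last_mul {α ι : Type*} [Fintype α] [DecidableEq α] {m : ℕ}
    {u : ι → Fin (m + 1) → α} {S : Finset ι} (hinj : Set.InjOn u S) :
    #S ≤ #(S.image fun n ↦ u n (Fin.last m)) * Fintype.card α ^ m := by
  calc #S ≤ #((S.image fun n ↦ u n (Fin.last m)) ×ˢ (univ : Finset (Fin m → α))) := by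
        refine card_le_card_of_injOn (fun n ↦ (u n (Fin.last m), Fin.init (u n)))
          (fun n hn ↦ mem_product.2 ⟨mem_image_of_mem _ hn, mem_univ _⟩)
          fun n hn k hk h ↦ hinj hn hk ?_
        obtain ⟨hlast, hinit⟩ := Prod.mk.inj h
        rw [← Fin.snoc_init_self (u n), ← Fin.snoc_init_self (u k), hlast, hinit]
    _ = #(S.image fun n ↦ u n (Fin.last m)) * Fintype.card α ^ m := by
        rw [card_product, card_univ, Fintype.card_fun, Fintype.card_fin]

lemma exists_norm_sum_last_le {m : ℕ} (hm : m ≠ 0) {ε : ℝ} (hε : 0 < ε) :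
    ∃ γ : ℝ, 0 < γ ∧ ∀ᶠ p : ℕ in Filter.atTop, ∀ [Fact p.Prime] {s : ℕ → ℕ → ℕ}
      {F : Fin (m + 1) → MvPolynomial (Fin (m + 1)) (ZMod p)}, IsFSystem m s F →
      ∀ {u : ℕ → Fin (m + 1) → ZMod p}, (∀ n i, u (n + 1) i = eval (u n) (F i)) →
      ∀ {N : ℕ}, Set.InjOn u (range N) → (p : ℝ) ^ (m + ε) ≤ N →
      ∀ {ψ : AddChar (ZMod p) ℂ}, ψ ≠ 1 →
      ‖∑ n ∈ range N, ψ (u n (Fin.last m))‖ ≤ N * (2 * (p : ℝ) ^ (-γ)) := by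
  obtain ⟨γ, hγ, haffine⟩ := exists_norm_sum_affine_le hε
  refine ⟨γ, hγ, haffine.mono fun p haffine _ s F hF u hu N hinj hN ψ hψ ↦ ?_⟩
  obtain ⟨g, h, hg, hlast⟩ := hF.1
  have hp1 : (1 : ℝ) ≤ p := by exact_mod_cast (Fact.out : p.Prime).one_le
  have hp0 : (0 : ℝ) < p := one_pos.trans_le hp1
  have hmany : (p : ℝ) ^ ε ≤ #((range N).image fun n ↦ u n (Fin.last m)) := by
    have hcard := card_le_card_image_last_mul hinj
    rw [card_range, ZMod.card] at hcard
    have hle := hN.trans (Nat.cast_le.2 hcard)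
    rw [Real.rpow_add hp0, Real.rpow_natCast, mul_comm, Nat.cast_mul, Nat.cast_pow] at hle
    exact le_of_mul_le_mul_right hle (by positivity)
  refine haffine (fun n ↦ u n (Fin.last m)) (Units.mk0 g hg) h (fun n ↦ ?_) N ?_ hmany ψ hψ
  · simp [hu, hlast]
  · refine (Real.rpow_le_rpow_of_exponent_le hp1 ?_).trans hN
    gcongr
    exact_mod_cast Nat.one_le_iff_ne_zero.2 hm

theorem exists_norm_sum_linear_form_le {m : ℕ} (hm : m ≠ 0) (d : ℕ) {ε : ℝ} (hε : 0 < ε) :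
    ∃ γ C : ℝ, 0 < γ ∧ 0 < C ∧ ∀ᶠ p : ℕ in Filter.atTop, ∀ [Fact p.Prime] {s : ℕ → ℕ → ℕ}
      {F : Fin (m + 1) → MvPolynomial (Fin (m + 1)) (ZMod p)}, IsFSystem m s F →
      (∀ i < m, s i (i + 1) ≠ 0) → (∀ j, (F j).totalDegree ≤ d) →
      ∀ {u : ℕ → Fin (m + 1) → ZMod p}, (∀ n i, u (n + 1) i = eval (u n) (F i)) →
      ∀ {N : ℕ}, Set.InjOn u (range N) → (p : ℝ) ^ (m + ε) ≤ N →
      ∀ {a : Fin (m + 1) → ZMod p}, a ≠ 0 → ∀ {ψ : AddChar (ZMod p) ℂ}, ψ ≠ 1 →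
      ‖∑ n ∈ range N, ψ (∑ j, a j * u n j)‖ ≤ N * (C * (p : ℝ) ^ (-γ)) := by
  obtain ⟨γ₁, C, hγ₁, hinner⟩ := exists_norm_sum_orbit_le hm d hε
  obtain ⟨γ₂, hγ₂, hlast⟩ := exists_norm_sum_last_le hm hε
  refine ⟨min γ₁ γ₂, max C 2, lt_min hγ₁ hγ₂, by positivity, ?_⟩
  filter_upwards [hinner, hlast]
  intro p hinner hlast _ s F hF hs hdeg u hu N hinj hN a ha ψ hψ
  have hp1 : (1 : ℝ) ≤ p := by exact_mod_cast (Fact.out : p.Prime).one_le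
  obtain ⟨i, hai, hmin⟩ := wellFounded_lt.has_min {i | a i ≠ 0} (Function.ne_iff.1 ha)
  have hbefore (j : Fin (m + 1)) (hj : j < i) : a j = 0 := not_not.1 fun h ↦ hmin j h hj
  obtain hi | rfl := (Fin.le_last i).lt_or_eq
  · refine (hinner hF hs hdeg hu hinj hN hi hai hbefore hψ).trans ?_
    gcongr
    exacts [le_max_left _ _, min_le_left _ _]
  · have hsum (n : ℕ) : ψ (∑ j, a j * u n j) = ψ.mulShift (a (Fin.last m)) (u n (Fin.last m)) := by
      rw [AddChar.mulShift_apply, sum_eq_single (Fin.last m) (fun j _ hj ↦ by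
        rw [hbefore j (Fin.lt_last_iff_ne_last.2 hj), zero_mul]) (by simp)]
    simp_rw [hsum]
    refine (hlast hF hu hinj hN (AddChar.IsPrimitive.of_ne_one hψ hai)).trans ?_
    gcongr
    exacts [le_max_right _ _, min_le_right _ _]

lemma eventually_two_add_log_pow_le (s : ℕ) {η : ℝ} (hη : 0 < η) :
    ∀ᶠ x : ℝ in Filter.atTop, (2 + Real.log x) ^ s ≤ x ^ η := by
  set θ : ℝ := η / (s + 1)
  have hθ : 0 < θ := by positivity
  have hconst : (fun _ : ℝ ↦ (2 : ℝ)) =o[Filter.atTop] fun x : ℝ ↦ x ^ θ :=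
    Asymptotics.isLittleO_const_left.2
      (.inr (tendsto_norm_atTop_atTop.comp (tendsto_rpow_atTop hθ)))
  filter_upwards [(hconst.add (isLittleO_log_rpow_atTop hθ)).eventuallyLE,
    Filter.eventually_ge_atTop 1] with x hx hx1
  have hx0 : 0 ≤ x := zero_le_one.trans hx1
  have hlog : 0 ≤ 2 + Real.log x := add_nonneg zero_le_two (Real.log_nonneg hx1)
  rw [Real.norm_of_nonneg hlog, Real.norm_of_nonneg (by positivity)] at hx
  calc (2 + Real.log x) ^ s ≤ (x ^ θ) ^ s := by gcongr
    _ = x ^ (θ * s) := by rw [← Real.rpow_mul_natCast hx0]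
    _ ≤ x ^ η := by
      gcongr
      rw [div_mul_eq_mul_div, div_le_iff₀ (by positivity)]
      gcongr
      exact le_add_of_nonneg_right zero_le_one

theorem exists_eventually_discrepancy_le {m : ℕ} (hm : m ≠ 0) (d : ℕ) {ε : ℝ} (hε : 0 < ε) :
    ∃ γ c : ℝ, 0 < γ ∧ 0 < c ∧ ∀ᶠ p : ℕ in Filter.atTop, ∀ [Fact p.Prime] {s : ℕ → ℕ → ℕ}
      {F : Fin (m + 1) → MvPolynomial (Fin (m + 1)) (ZMod p)}, IsFSystem m s F →
      (∀ i < m, s i (i + 1) ≠ 0) → (∀ j, (F j).totalDegree ≤ d) →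
      ∀ {u : ℕ → Fin (m + 1) → ZMod p}, (∀ n i, u (n + 1) i = eval (u n) (F i)) →
      ∀ {N : ℕ}, Set.InjOn u (range N) → (p : ℝ) ^ (m + ε) ≤ N →
      discrepancy (m + 1) N (fun n j ↦ ((u n j).val : ℝ) / p) ≤ c * (p : ℝ) ^ (-γ) := by
  obtain ⟨γ, C, hγ, hC, hsum⟩ := exists_norm_sum_linear_form_le hm d hε
  refine ⟨min (γ / 2) 1, C + (m + 1 : ℕ), lt_min (half_pos hγ) one_pos, by positivity, ?_⟩
  filter_upwards [hsum, tendsto_natCast_atTop_atTop.eventually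
    (eventually_two_add_log_pow_le (m + 1) (half_pos hγ))]
  intro p hsum hlog _ s F hF hs hdeg u hu N hinj hN
  have hp : p.Prime := Fact.out
  have hp1 : (1 : ℝ) ≤ p := by exact_mod_cast hp.one_le
  have hp0 : (0 : ℝ) < p := one_pos.trans_le hp1
  have hN0 : 0 < N := Nat.cast_pos.1 ((Real.rpow_pos_of_pos hp0 _).trans_le hN)
  have hψ : (ZMod.stdAddChar : AddChar (ZMod p) ℂ) ≠ 1 := by
    have := Fact.mk hp.one_lt
    exact AddChar.ne_one_iff.2 ⟨1, fun h ↦ one_ne_zero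
      (ZMod.injective_stdAddChar (h.trans (AddChar.map_zero_eq_one _).symm))⟩
  calc discrepancy (m + 1) N (fun n j ↦ ((u n j).val : ℝ) / p)
      ≤ C * (p : ℝ) ^ (-γ) * (2 + Real.log p) ^ (m + 1) + (m + 1 : ℕ) * (1 / p) :=
        discrepancy_val_div_le hN0 (by positivity)
          fun a ha ↦ hsum hF hs hdeg hu hinj hN ha hψ
    _ ≤ C * (p : ℝ) ^ (-γ) * (p : ℝ) ^ (γ / 2) + (m + 1 : ℕ) * (p : ℝ) ^ (-1 : ℝ) := by
        rw [Real.rpow_neg_one, one_div]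
        gcongr
    _ = C * (p : ℝ) ^ (-(γ / 2)) + (m + 1 : ℕ) * (p : ℝ) ^ (-1 : ℝ) := by
        rw [mul_assoc, ← Real.rpow_add hp0]
        ring_nf
    _ ≤ C * (p : ℝ) ^ (-min (γ / 2) 1) + (m + 1 : ℕ) * (p : ℝ) ^ (-min (γ / 2) 1) := by
        gcongr
        exacts [min_le_left _ _, min_le_right _ _]
    _ = (C + (m + 1 : ℕ)) * (p : ℝ) ^ (-min (γ / 2) 1) := by ring

end TriangularOrbits

theorem stmt6_general {m : ℕ} (hm : m ≠ 0) (d : ℕ) {ε : ℝ} (hε : 0 < ε) :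
    ∃ γ c : ℝ, 0 < γ ∧ 0 < c ∧ ∀ (p : ℕ) [Fact p.Prime] {s : ℕ → ℕ → ℕ}
      {F : Fin (m + 1) → MvPolynomial (Fin (m + 1)) (ZMod p)}, IsFSystem m s F →
      (∀ i < m, s i (i + 1) ≠ 0) → (∀ j, (F j).totalDegree ≤ d) →
      ∀ {u : ℕ → Fin (m + 1) → ZMod p}, (∀ n i, u (n + 1) i = eval (u n) (F i)) →
      ∀ {N : ℕ}, Set.InjOn u (Finset.range N) → (p : ℝ) ^ (m + ε) ≤ N →
      discrepancy (m + 1) N (fun n j ↦ ((u n j).val : ℝ) / p) ≤ c * (p : ℝ) ^ (-γ) := by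
  obtain ⟨γ, c, hγ, hc, hlarge⟩ := exists_eventually_discrepancy_le hm d hε
  obtain ⟨P, hP⟩ := Filter.eventually_atTop.1 hlarge
  refine ⟨γ, c + (P : ℝ) ^ γ, hγ, by positivity, fun p _ s F hF hs hdeg u hu N hinj hN ↦ ?_⟩
  have hp0 : (0 : ℝ) < p := Nat.cast_pos.2 (Fact.out : p.Prime).pos
  obtain hPp | hpP := le_or_gt P p
  · refine (hP p hPp hF hs hdeg hu hinj hN).trans ?_
    gcongr
    exact le_add_of_nonneg_right (by positivity)
  · calc discrepancy (m + 1) N (fun n j ↦ ((u n j).val : ℝ) / p)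
        ≤ 1 := discrepancy_le_one _ _ _
      _ = (p : ℝ) ^ γ * (p : ℝ) ^ (-γ) := by
          rw [← Real.rpow_add hp0, add_neg_cancel, Real.rpow_zero]
      _ ≤ (c + (P : ℝ) ^ γ) * (p : ℝ) ^ (-γ) := by
          gcongr
          exact le_add_of_nonneg_of_le hc.le (by gcongr)

theorem stmt6 (m d : ℕ) (hm : 1 ≤ m) (hd : 2 ≤ d) (ε : ℝ) (hε : 0 < ε) :
    ∃ γ c : ℝ, 0 < γ ∧ 0 < c ∧
      ∀ (s : ℕ → ℕ → ℕ) (p : ℕ), p.Prime →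
        ∀ F : Fin (m + 1) → MvPolynomial (Fin (m + 1)) (ZMod p),
          IsFSystem m s F →
          (Finset.univ.sup fun i => (F i).totalDegree) = d →
          (∏ i ∈ Finset.range m, s i (i + 1)) ≠ 0 →
          ∀ (u : ℕ → Fin (m + 1) → ZMod p) (τ : ℕ),
            (∀ n i, u (n + 1) i = MvPolynomial.eval (u n) (F i)) →
            0 < τ → (∀ n, u (n + τ) = u n) →
            (∀ t, 0 < t → (∀ n, u (n + t) = u n) → τ ≤ t) →
            ∀ N : ℕ, 0 < N → N ≤ τ → (p : ℝ) ^ ((m : ℝ) + ε) ≤ (N : ℝ) →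
              discrepancy (m + 1) N (fun n j => ((u n j).val : ℝ) / (p : ℝ)) ≤
                c * (p : ℝ) ^ (-γ) := by
  obtain ⟨γ, c, hγ, hc, hbound⟩ := stmt6_general (Nat.one_le_iff_ne_zero.1 hm) d hε
  refine ⟨γ, c, hγ, hc, fun s p hp F hF hdeg hs u τ hu hτ hper hmin N _ hNτ hN ↦ ?_⟩
  have := Fact.mk hp
  have hinj : Set.InjOn u (Finset.range N) :=
    (injOn_range_of_minimal_period (f := fun w i ↦ eval w (F i)) (fun n ↦ funext (hu n))
      hτ hper hmin).mono (Finset.coe_subset.2 (Finset.range_mono hNτ))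
  exact hbound p hF (fun i hi ↦ Finset.prod_ne_zero_iff.1 hs i (Finset.mem_range.2 hi))
    (fun j ↦ hdeg ▸ Finset.le_sup (f := fun i ↦ (F i).totalDegree) (Finset.mem_univ j))
    hu hinj hN
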